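/- Let F be a totally real number field with [F:ℚ] ≥ 2 and ring of integers 𝓞_F, and let Γ be a finite-index subgroup of SL₂(𝓞_F). Then the abelianization of Γ is finite; in particular every group homomorphism from Γ to ℚ is trivial (equivalently, the first group cohomology H¹(Γ, ℚ) with trivial Γ-action vanishes). -/

import Mathlib

open NumberField Matrix

/-!
Dirichlet's unit theorem provides a unit `u` of infinite order, since `F` is totally real of degree
at least `2`. It suffices that `SL₂(𝓞 F)` is finitely generated (`Hilb.sl2_fg`) and that the
abelianization of `Γ` is a torsion group (`Hilb.isMulTorsion_abelianization`): `Γ` is then finitely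
generated as well, a finitely generated commutative torsion group is finite, and a homomorphism to
`ℚ` kills torsion.

*Torsion.* A unipotent matrix whose entries are divisible enough lies in `Γ`, and so do its
conjugates. Conjugation by a power of (a conjugate of) `diag (u, u⁻¹)` lying in `Γ` multiplies the
entry by some `u ^ (2 m) ≠ 1`, so all these elements have finite order in the abelianization
(`Hilb.conj_uni_mem`). Every element of `SL₂(𝓞 F)` has a power in the group `Gs q` of matrices
with off-diagonal entries in `(q)` and diagonal entries in `1 + (q ^ 2)`. It remains to prove that
the quotient of `Gs q` by the normal closure of its elementary matrices is torsion
(`Hilb.exists_pow_mem`). This is a weak form of the solution of the congruence subgroup problem for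
`SL₂` over rings with infinitely many units, and the proof is in the spirit of Mennicke, Vaserstein
and Serre. Let `ρ` be a homomorphism on `Gs q` that kills the elementary matrices. Its value depends
only on the first row `(a, b)`; this value is the symbol `sym ρ a b`. It does not change when a
multiple of `q a` is added to `b`, or a multiple of `q b` to `a`, or when `a` is multiplied by the
square of a unit that is `1` modulo `q ^ 2`.

* An element `t` is *good* when `𝓞 F ⧸ (t)` is a cyclic ring `ℤ ⧸ n` (with an extra coprimality
  condition). Every invertible residue class contains good elements (`Hilb.exists_good`), and modulo
  powers of a good element the squares of units are as dense as possible (`Hilb.unit_density`).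
* Combining this with Dirichlet's theorem on primes in progressions, one finds an exponent `E`,
  depending on `t` but not on the row, such that `sym ρ a (t ^ E * b) = sym ρ a b` whenever
  `a ≡ 1 + t` modulo `t ^ 2` (`Hilb.core`).
* Therefore conjugation by an element with good upper left entry `t`, decomposed into elementary
  conjugations with denominators powers of `t`, preserves `ρ` (`Hilb.chain`), and the image of `ρ`
  is commutative (`Hilb.rho_comm`).
* If in addition the target is torsion-free, then `sym ρ a (t ^ 2 * b) = sym ρ a b`
  (`Hilb.sym_sq`). Moving the first entry to a rational prime `l ≡ 1` modulo `4`, so that `-1`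
  is a square modulo `l`, and computing the square of the matrix, one finds that `ρ` is trivial
  (`Hilb.rho_eq_one`). Applied to the quotient modulo torsion, this gives the claim.

*Finite generation.* Up to multiplying the dividend by one of finitely many integers, `𝓞 F` has a
Euclidean division with respect to the norm. It follows that any two vectors in a suitable set
meeting every line of `F ^ 2` are joined by a chain of vectors with bounded consecutive determinants
(`Hilb.exists_closer`). This set consists of vectors in finitely many orbits, the relevant
elements of `SL₂(𝓞 F)` lie in finitely many double cosets, and the stabilizer of a line is finitely
generated, being an extension of a group of units by a subgroup of `𝓞 F` (`Hilb.stab_fg`).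
-/

set_option linter.unusedSectionVars false

namespace Hilb

/-! ### Good elements -/

/-- `t` is *good of level `n`* when `R ⧸ (t)` is the cyclic ring `ℤ ⧸ n` and `n = t * t'` with
`t'` prime to `t`. -/
structure Good {R : Type*} [CommRing R] (t : R) (n : ℕ) : Prop where
  pos : 0 < n
  cof : ∃ t', (n : R) = t * t' ∧ IsCoprime t t'
  dvd : ∀ k : ℤ, t ∣ (k : R) → (n : ℤ) ∣ k
  surj : ∀ z : R, ∃ k : ℤ, t ∣ z - k

section GoodBasics

variable {R : Type*} [CommRing R] {t : R} {n : ℕ}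

theorem Good.dvd_n (h : Good t n) : t ∣ (n : R) := by
  obtain ⟨t', h1, _⟩ := h.cof
  exact ⟨t', h1⟩

theorem isCoprime_of_dvd_sub {a a' b : R} (h : IsCoprime a b) (hd : b ∣ a' - a) :
    IsCoprime a' b := by
  obtain ⟨w, hw⟩ := hd
  have : a' = a + b * w := by rw [← hw]; ring
  rw [this]
  exact IsCoprime.add_mul_left_left h w

theorem exists_crt {a b : R} (h : IsCoprime a b) (x y : R) :
    ∃ z, a ∣ z - x ∧ b ∣ z - y := by
  obtain ⟨u, v, huv⟩ := h
  refine ⟨x * (v * b) + y * (u * a), ⟨u * (y - x), ?_⟩, ⟨v * (x - y), ?_⟩⟩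
  · linear_combination (x) * huv
  · linear_combination (y) * huv

/-- The integers surject onto `R ⧸ (t ^ i)` as well. -/
theorem Good.surj_pow (h : Good t n) (i : ℕ) (z : R) : ∃ k : ℤ, t ^ i ∣ z - k := by
  obtain ⟨t', hn, u, v, huv⟩ := h.cof
  induction i with
  | zero => exact ⟨0, by simp⟩
  | succ i ih =>
    obtain ⟨k, w, hw⟩ := ih
    obtain ⟨l, m, hm⟩ := h.surj (v ^ i * w)
    have h1 : t ∣ (v * t') ^ i - 1 ^ i :=
      (Dvd.intro_left (-u) (by linear_combination -huv)).trans (sub_dvd_pow_sub_pow _ _ _)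
    obtain ⟨s, hs⟩ := h1
    refine ⟨k + (n : ℤ) ^ i * l, t' ^ i * m - s * w, ?_⟩
    push_cast
    rw [hn]
    have e1 : (v * t') ^ i = 1 + t * s := by rw [← hs]; ring
    rw [mul_pow] at e1
    have e2 : (l : R) = v ^ i * w - t * m := by rw [← hm]; ring
    have e3 : (k : R) = z - t ^ i * w := by rw [← hw]; ring
    rw [e2, e3]
    linear_combination (-t ^ i * w) * e1

theorem Good.surj_nat (h : Good t n) (z : R) : ∃ k : ℕ, t ∣ z - k := by
  obtain ⟨k, hk⟩ := h.surj z
  have hn : (n : ℤ) ≠ 0 := by exact_mod_cast h.pos.ne'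
  refine ⟨(k % n).toNat, ?_⟩
  have h1 : (((k % n).toNat : ℤ) : R) = ((k % n : ℤ) : R) := by
    rw [Int.toNat_of_nonneg (Int.emod_nonneg _ hn)]
  have h2 : (((k % n).toNat : ℕ) : R) = ((k % n : ℤ) : R) := by
    rw [← h1, Int.cast_natCast]
  rw [h2, Int.emod_def]
  push_cast
  have := (h.dvd_n.mul_right ((k / n : ℤ) : R)).add hk
  convert this using 1
  ring

/-- An integer prime to `t` in `R` is prime to the level. -/
theorem Good.coprime (h : Good t n) {j : ℤ} (hj : IsCoprime (j : R) t) : IsCoprime j (n : ℤ) := by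
  rw [Int.isCoprime_iff_gcd_eq_one]
  by_contra hg
  obtain ⟨p, hp, hpd⟩ := Nat.exists_prime_and_dvd hg
  have h1 : (p : ℤ) ∣ j := (Int.natCast_dvd_natCast.2 hpd).trans (Int.gcd_dvd_left _ _)
  have h2 : (p : ℤ) ∣ n := (Int.natCast_dvd_natCast.2 hpd).trans (Int.gcd_dvd_right _ _)
  obtain ⟨m, hm⟩ := h2
  obtain ⟨j', hj'⟩ := h1
  have h3 : IsCoprime t (p : R) := by
    rw [hj'] at hj
    push_cast at hj
    exact (IsCoprime.of_mul_left_left hj).symm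
  have h4 : t ∣ (p : R) * (m : R) := by
    have := h.dvd_n
    have e : ((n : ℤ) : R) = ((p * m : ℤ) : R) := by rw [hm]
    push_cast at e
    rwa [← e]
  have h5 := h.dvd m (h3.dvd_of_dvd_mul_left h4)
  have hn : (0 : ℤ) < n := by exact_mod_cast h.pos
  have hp2 : (2 : ℤ) ≤ p := by exact_mod_cast hp.two_le
  have hm0 : 0 < m := by
    by_contra hneg
    nlinarith
  have := Int.le_of_dvd hm0 h5
  nlinarith

theorem Good.isCoprime_cast (h : Good t n) {j : ℤ} (hj : IsCoprime j (n : ℤ)) :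
    IsCoprime (j : R) t := by
  have h1 : IsCoprime (j : R) (n : R) := by
    have := hj.map (Int.castRingHom R)
    simpa using this
  exact IsCoprime.of_isCoprime_of_dvd_right h1 h.dvd_n

end GoodBasics

/-! ### Density of squares of units -/

section UnitDensity

variable {R : Type*} [CommRing R]

theorem one_add_pow_exp (x : R) (k : ℕ) : ∃ r, (1 + x) ^ k = 1 + k * x + x ^ 2 * r := by
  induction k with
  | zero => exact ⟨0, by simp⟩
  | succ k ih =>
    obtain ⟨r, hr⟩ := ih
    refine ⟨r + k + x * r, ?_⟩
    rw [pow_succ, hr]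
    push_cast
    ring

theorem one_add_pow_level {n : ℕ} {d d' : R} (hd : d = n ^ 2 * d') (j l : ℕ) :
    ∃ y, (1 + d) ^ (n ^ j * l) = 1 + n ^ j * d * (l + n * y) := by
  induction j with
  | zero =>
    obtain ⟨r, hr⟩ := one_add_pow_exp d l
    refine ⟨n * d' * r, ?_⟩
    rw [pow_zero, one_mul, hr]
    linear_combination (d * r) * hd
  | succ j ih =>
    obtain ⟨y, hy⟩ := ih
    obtain ⟨r, hr⟩ := one_add_pow_exp ((n : R) ^ j * d * (l + n * y)) n
    refine ⟨y + n ^ j * d' * (l + n * y) ^ 2 * r, ?_⟩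
    rw [pow_succ, show n ^ j * n * l = (n ^ j * l) * n by ring, pow_mul, hy, hr]
    linear_combination ((n : R) ^ j * d * ((n : R) ^ j * (l + n * y) ^ 2 * r)) * hd

/-- Powers of a unit `1 + d` with `n ^ 2 ∣ d` approximate every element of `1 + (d)` modulo every
power of a good element of level `n`. -/
theorem approx_unit_pow {t : R} {n : ℕ} (h : Good t n) {d d' : R} (hd : d = n ^ 2 * d')
    {z : R} (hz : d ∣ z - 1) (j : ℕ) : ∃ k : ℕ, d * t ^ j ∣ z - (1 + d) ^ k := by
  obtain ⟨t', hn, u, v, huv⟩ := h.cof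
  induction j with
  | zero => exact ⟨0, by simpa using hz⟩
  | succ j ih =>
    obtain ⟨k, w, hw⟩ := ih
    obtain ⟨l, m, hm⟩ := h.surj_nat (v ^ j * w)
    obtain ⟨y, hy⟩ := one_add_pow_level hd j l
    have h1 : t ∣ (v * t') ^ j - 1 ^ j :=
      (Dvd.intro_left (-u) (by linear_combination -huv)).trans (sub_dvd_pow_sub_pow _ _ _)
    obtain ⟨s, hs⟩ := h1
    have h2 : t ∣ (1 + d) ^ k - 1 ^ k := by
      refine Dvd.dvd.trans ?_ (sub_dvd_pow_sub_pow _ _ _)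
      rw [hd, hn]
      exact ⟨t * t' ^ 2 * d', by ring⟩
    obtain ⟨s', hs'⟩ := h2
    refine ⟨k + n ^ j * l, ?_⟩
    have e1 : (v * t') ^ j = 1 + t * s := by rw [← hs]; ring
    rw [mul_pow] at e1
    have e2 : (l : R) = v ^ j * w - t * m := by rw [← hm]; ring
    have e3 : z = (1 + d) ^ k + d * t ^ j * w := by rw [← hw]; ring
    have e4 : (1 + d) ^ k = 1 + t * s' := by rw [← one_pow (M := R) k, ← hs']; simp
    rw [pow_add (1 + d), hy, e3, e2, hn, mul_pow]
    -- everything except `w - t' ^ j * l` is visibly divisible by `t`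
    have : (1 + d) ^ k + d * t ^ j * w -
        (1 + d) ^ k * (1 + t ^ j * t' ^ j * d * (v ^ j * w - t * m + t * t' * y)) =
        d * t ^ j * (w - (1 + t * s') * (w * (1 + t * s) + t' ^ j * (t * (t' * y - m)))) := by
      rw [e4]
      linear_combination (-(1 + t * s') * d * t ^ j * w) * e1
    rw [this, pow_succ, ← mul_assoc]
    apply mul_dvd_mul_left
    refine ⟨-(s' * w) - (1 + t * s') * (w * s + t' ^ j * (t' * y - m)), ?_⟩
    ring

/-- Squares of units congruent to `1` modulo `Q` realise, modulo every power of a good element `t`,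
all ratios that are congruent to `1` modulo one fixed power of `t`. -/
theorem unit_density [IsDomain R] [CharZero R] (hfin : ∀ d : R, d ≠ 0 → Finite (R ⧸ Ideal.span {d}))
    (u : Rˣ) (hu : ∀ k : ℕ, 0 < k → u ^ k ≠ 1) {t : R} {n : ℕ} (h : Good t n) {Q : R}
    (hQ : Q ≠ 0) :
    ∃ e : ℕ, ∀ (i : ℕ) (a a' : R), IsCoprime a t → t ^ e ∣ a' - a →
      ∃ v : Rˣ, Q ∣ (v : R) - 1 ∧ t ^ i ∣ (v : R) ^ 2 * a - a' := by
  have hn0 : (n : R) ≠ 0 := by exact_mod_cast Nat.pos_iff_ne_zero.mp h.pos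
  -- a power of `u` that is `1` modulo `Q * n ^ 2`
  obtain ⟨v₀, hv₀, K, hK, hvK⟩ : ∃ v₀ : Rˣ, Q * (n : R) ^ 2 ∣ (v₀ : R) - 1 ∧
      ∃ K : ℕ, 0 < K ∧ v₀ = u ^ K := by
    have := hfin (Q * (n : R) ^ 2) (mul_ne_zero hQ (pow_ne_zero _ hn0))
    let φ := Units.map (Ideal.Quotient.mk (Ideal.span {Q * (n : R) ^ 2})).toMonoidHom
    refine ⟨u ^ (Nat.card (R ⧸ Ideal.span {Q * (n : R) ^ 2})ˣ), ?_, _, Nat.card_pos, rfl⟩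
    have h1 : φ (u ^ (Nat.card (R ⧸ Ideal.span {Q * (n : R) ^ 2})ˣ)) = 1 := by
      rw [map_pow, pow_card_eq_one']
    have h2 := congrArg Units.val h1
    simp only [φ, Units.coe_map] at h2
    rw [← Ideal.mem_span_singleton, ← Ideal.Quotient.eq]
    simpa using h2
  obtain ⟨w₀, hw₀⟩ := hv₀
  obtain ⟨d, hdef⟩ : ∃ d : R, d = (v₀ : R) ^ 2 - 1 := ⟨_, rfl⟩
  have hd : d = (n : R) ^ 2 * (Q * w₀ * (v₀ + 1)) := by
    rw [hdef]; linear_combination ((v₀ : R) + 1) * hw₀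
  have hd0 : d ≠ 0 := by
    intro h0
    have : v₀ ^ 2 = 1 := by
      ext
      push_cast
      linear_combination h0 - hdef
    rw [hvK, ← pow_mul] at this
    exact hu _ (by positivity) this
  have hud : (v₀ : R) ^ 2 = 1 + d := by rw [hdef]; ring
  -- the sequence of powers of `t` is eventually periodic modulo `d`
  obtain ⟨e, y', hy'⟩ : ∃ (e : ℕ) (y' : R), d ∣ t ^ e * (1 - t * y') := by
    have := hfin d hd0
    obtain ⟨i, j, hij, heq⟩ := Finite.exists_ne_map_eq_of_infinite
      (fun i : ℕ => Ideal.Quotient.mk (Ideal.span {d}) (t ^ i))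
    wlog hlt : i < j generalizing i j
    · exact this j i hij.symm heq.symm (by omega)
    rw [Ideal.Quotient.eq, Ideal.mem_span_singleton] at heq
    refine ⟨i, t ^ (j - i - 1), ?_⟩
    obtain ⟨m, rfl⟩ : ∃ m, j = i + m + 1 := ⟨j - i - 1, by omega⟩
    convert heq using 1
    rw [show i + m + 1 - i - 1 = m by omega]
    ring
  obtain ⟨g, hg⟩ := hy'
  refine ⟨e, fun i a a' ha haa => ?_⟩
  obtain ⟨c, c', hc⟩ := ha.pow_right (n := i + e)
  obtain ⟨m, m', hm⟩ : IsCoprime (1 - t * y') (t ^ i) := by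
    apply IsCoprime.pow_right
    exact ⟨1, y', by ring⟩
  obtain ⟨s, hs⟩ : t ^ e ∣ a' * c - 1 := by
    obtain ⟨s, hs⟩ := haa
    refine ⟨s * c - c' * t ^ i, ?_⟩
    rw [pow_add] at hc
    linear_combination c * hs + hc
  obtain ⟨k, r, hr⟩ := approx_unit_pow h hd (z := 1 + d * (g * m * s)) ⟨g * m * s, by ring⟩ i
  refine ⟨v₀ ^ k, ?_, ?_⟩
  · have h1 : (v₀ : R) - 1 ∣ (v₀ : R) ^ k - 1 ^ k := sub_dvd_pow_sub_pow _ _ _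
    rw [one_pow] at h1
    push_cast
    exact (Dvd.intro _ (by rw [hw₀]; ring : Q * ((n : R) ^ 2 * w₀) = (v₀ : R) - 1)).trans h1
  · have h1 : ((v₀ ^ k : Rˣ) : R) ^ 2 = 1 + d * (g * m * s) - d * t ^ i * r := by
      push_cast
      rw [← pow_mul, mul_comm k 2, pow_mul, hud, ← hr]
      ring
    rw [h1]
    refine ⟨-a' * c' * t ^ e - m' * t ^ e * s * a - d * r * a, ?_⟩
    rw [pow_add] at hc
    linear_combination (-m * s * a) * hg + (t ^ e * s * a) * hm + a' * hc - a * hs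

end UnitDensity

/-! ### Existence of good elements in rings of integers -/

section Existence

open Polynomial

/-- A monic integer polynomial whose constant term is prime to `N`, where `N` is divisible by all
primes up to the degree, takes at some multiple of `N` a value divisible by none of the primes in a
given finite set. -/
theorem exists_eval_not_dvd (g : ℤ[X]) (hg : g.Monic) (N : ℤ)
    (h0 : ∀ p : ℕ, p.Prime → (p : ℤ) ∣ N → ¬ (p : ℤ) ∣ g.eval 0)
    (hN : ∀ p : ℕ, p.Prime → p ≤ g.natDegree → (p : ℤ) ∣ N) (S : Finset ℕ)
    (hS : ∀ p ∈ S, p.Prime) :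
    ∃ k : ℤ, ∀ p ∈ S, ¬ (p : ℤ) ∣ g.eval (N * k) := by
  induction S using Finset.induction_on with
  | empty => exact ⟨0, by simp⟩
  | insert p S hp ih =>
    obtain ⟨k, hk⟩ := ih (fun r hr => hS r (Finset.mem_insert_of_mem hr))
    have hpp := hS p (Finset.mem_insert_self _ _)
    have : Fact p.Prime := ⟨hpp⟩
    obtain ⟨c, hc⟩ : ∃ c : ℤ, ¬ (p : ℤ) ∣ g.eval (N * c) := by
      by_cases hpN : (p : ℤ) ∣ N
      · exact ⟨0, by simpa using h0 p hpp hpN⟩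
      · have hdeg : g.natDegree < p := by
          by_contra hcon
          exact hpN (hN p hpp (by omega))
        have hN0 : (N : ZMod p) ≠ 0 := by
          rwa [Ne, ZMod.intCast_zmod_eq_zero_iff_dvd]
        have hgm : (g.map (Int.castRingHom (ZMod p))) ≠ 0 := (hg.map _).ne_zero
        obtain ⟨x, hx⟩ : ∃ x : ZMod p, (g.map (Int.castRingHom (ZMod p))).eval x ≠ 0 := by
          by_contra! hcon
          have h1 : (Finset.univ : Finset (ZMod p)) ⊆
              (g.map (Int.castRingHom (ZMod p))).roots.toFinset := by
            intro x _
            rw [Multiset.mem_toFinset, mem_roots hgm]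
            exact hcon x
          have h2 := Finset.card_le_card h1
          have h3 := (Multiset.toFinset_card_le _).trans
            (card_roots' (g.map (Int.castRingHom (ZMod p))))
          have h4 : (g.map (Int.castRingHom (ZMod p))).natDegree ≤ g.natDegree :=
            natDegree_map_le
          rw [Finset.card_univ, ZMod.card] at h2
          omega
        refine ⟨((x / (N : ZMod p)).val : ℤ), fun hdvd => hx ?_⟩
        rw [← ZMod.intCast_zmod_eq_zero_iff_dvd] at hdvd
        have h5 : ((g.eval (N * ((x / (N : ZMod p)).val : ℤ)) : ℤ) : ZMod p) =
            (g.map (Int.castRingHom (ZMod p))).eval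
              ((N * ((x / (N : ZMod p)).val : ℤ) : ℤ) : ZMod p) := by
          rw [eval_intCast_map, eq_intCast]
          simp
        rw [h5] at hdvd
        push_cast at hdvd
        rw [ZMod.natCast_val, ZMod.cast_id, mul_div_cancel₀ _ hN0] at hdvd
        exact hdvd
    have hcop : IsCoprime (∏ r ∈ S, (r : ℤ)) (p : ℤ) := by
      apply IsCoprime.prod_left
      intro r hr
      rw [Nat.isCoprime_iff_coprime]
      exact (Nat.coprime_primes (hS r (Finset.mem_insert_of_mem hr)) hpp).2
        (fun h => hp (h ▸ hr))
    obtain ⟨z, hz1, hz2⟩ := exists_crt hcop k c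
    have key : ∀ (r : ℕ) (y : ℤ), (r : ℤ) ∣ z - y → ¬ (r : ℤ) ∣ g.eval (N * y) →
        ¬ (r : ℤ) ∣ g.eval (N * z) := by
      intro r y hzy hy hcon
      apply hy
      have h1 : (r : ℤ) ∣ g.eval (N * z) - g.eval (N * y) := by
        refine Dvd.dvd.trans ?_ (sub_dvd_eval_sub _ _ _)
        rw [← mul_sub]
        exact hzy.mul_left _
      have h2 := hcon.sub h1
      rwa [sub_sub_cancel] at h2
    refine ⟨z, fun r hr => ?_⟩
    rcases Finset.mem_insert.1 hr with rfl | hr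
    · exact key _ c hz2 hc
    · exact key _ k ((Finset.dvd_prod_of_mem (fun r : ℕ => (r : ℤ)) hr).trans hz1) (hk r hr)

variable {F : Type*} [Field F] [NumberField F]

theorem dvd_norm (x : 𝓞 F) : x ∣ ((Algebra.norm ℤ x : ℤ) : 𝓞 F) := by
  have h1 := Ideal.absNorm_mem (Ideal.span {x})
  rw [Ideal.mem_span_singleton, Ideal.absNorm_span_singleton] at h1
  have h2 : (((Algebra.norm ℤ x).natAbs : ℤ) : 𝓞 F) ∣ ((Algebra.norm ℤ x : ℤ) : 𝓞 F) :=
    map_dvd (Int.castRingHom (𝓞 F)) (Int.natAbs_dvd.2 dvd_rfl)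
  rw [Int.cast_natCast] at h2
  exact h1.trans h2

/-- Regular representation of `𝓞 F` modulo `p`. -/
noncomputable def modRep (F : Type*) [Field F] [NumberField F] (p : ℕ) :
    𝓞 F →+* Matrix (Module.Free.ChooseBasisIndex ℤ (𝓞 F))
      (Module.Free.ChooseBasisIndex ℤ (𝓞 F)) (ZMod p) :=
  ((Int.castRingHom (ZMod p)).mapMatrix).comp
    (Algebra.leftMulMatrix (RingOfIntegers.basis F)).toRingHom

theorem modRep_eq_zero {p : ℕ} {x : 𝓞 F} (h : modRep F p x = 0) : (p : 𝓞 F) ∣ x := by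
  classical
  set b := RingOfIntegers.basis F
  have h1 : ∀ i j, (p : ℤ) ∣ Algebra.leftMulMatrix b x i j := by
    intro i j
    rw [← ZMod.intCast_zmod_eq_zero_iff_dvd]
    have := congrFun (congrFun h i) j
    simpa [modRep] using this
  have h2 : ∀ i, (p : ℤ) ∣ b.repr x i := by
    intro i
    have h3 := Algebra.leftMulMatrix_mulVec_repr b x 1
    rw [mul_one] at h3
    rw [← congrFun h3 i, mulVec, dotProduct]
    exact Finset.dvd_sum fun j _ => (h1 i j).mul_right _
  choose c hc using h2
  refine ⟨∑ i, c i • b i, ?_⟩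
  rw [← b.sum_repr x, Finset.mul_sum]
  refine Finset.sum_congr rfl fun i _ => ?_
  rw [hc i]
  simp [mul_assoc]

theorem norm_cast_modRep (p : ℕ) (x : 𝓞 F) :
    ((Algebra.norm ℤ x : ℤ) : ZMod p) = (modRep F p x).det := by
  rw [Algebra.norm_eq_matrix_det (RingOfIntegers.basis F) x, ← eq_intCast (Int.castRingHom _),
    RingHom.map_det]
  rfl

theorem not_dvd_norm {p : ℕ} (hp : p.Prime) {x : 𝓞 F} (hx : IsCoprime x (p : 𝓞 F)) :
    ¬ (p : ℤ) ∣ Algebra.norm ℤ x := by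
  have : Fact p.Prime := ⟨hp⟩
  rw [← ZMod.intCast_zmod_eq_zero_iff_dvd, norm_cast_modRep]
  obtain ⟨u, v, huv⟩ := hx
  have h1 := congrArg (modRep F p) huv
  have h2 : modRep F p (p : 𝓞 F) = 0 := by
    rw [map_natCast]
    ext i j
    rw [Matrix.natCast_apply]
    split_ifs <;> simp
  rw [map_add, map_mul, map_mul, h2, mul_zero, add_zero, map_one] at h1
  intro h0
  have h3 := congrArg Matrix.det h1
  rw [Matrix.det_mul, h0] at h3
  simp at h3

/-- Every residue class contains a generator of the field. -/
theorem exists_primitive_congr (r : 𝓞 F) {N : ℕ} (hN : 0 < N) :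
    ∃ r' : 𝓞 F, (N : 𝓞 F) ∣ r' - r ∧ IntermediateField.adjoin ℚ {(r' : F)} = ⊤ := by
  obtain ⟨α, hα⟩ := Field.exists_primitive_element ℚ F
  have := Field.finite_intermediateField_of_exists_primitive_element ℚ F ⟨α, hα⟩
  obtain ⟨y, hy0, hyα⟩ := IsAlgebraic.exists_integral_multiple (R := ℤ)
    ((IsFractionRing.isAlgebraic_iff ℤ ℚ F).2 (Algebra.IsAlgebraic.isAlgebraic α))
  obtain ⟨θ, hθ⟩ : ∃ θ : 𝓞 F, (θ : F) = y • α := ⟨⟨y • α, hyα⟩, rfl⟩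
  obtain ⟨c, c', hne, heq⟩ := Finite.exists_ne_map_eq_of_infinite
    (fun c : ℕ => IntermediateField.adjoin ℚ {((r + N * c * θ : 𝓞 F) : F)})
  refine ⟨r + N * c * θ, ⟨c * θ, by ring⟩, ?_⟩
  set E := IntermediateField.adjoin ℚ {((r + N * c * θ : 𝓞 F) : F)} with hE
  have h1 : ((r + N * c * θ : 𝓞 F) : F) ∈ E := IntermediateField.mem_adjoin_simple_self ℚ _
  have h2 : ((r + N * c' * θ : 𝓞 F) : F) ∈ E := by
    rw [show E = _ from heq]
    exact IntermediateField.mem_adjoin_simple_self ℚ _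
  have h3 := E.sub_mem h1 h2
  have h4 : ((r + N * c * θ : 𝓞 F) : F) - ((r + N * c' * θ : 𝓞 F) : F) =
      ((N : ℚ) * ((c : ℚ) - c') * y) • α := by
    rw [Algebra.smul_def]
    simp only [map_add, map_mul, map_natCast, hθ, zsmul_eq_mul, map_sub, map_intCast]
    ring
  rw [h4] at h3
  have hne0 : ((N : ℚ) * ((c : ℚ) - c') * y) ≠ 0 := by
    refine mul_ne_zero (mul_ne_zero (by exact_mod_cast hN.ne') ?_) (by exact_mod_cast hy0)
    rw [sub_ne_zero]
    exact_mod_cast hne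
  have h5 : α ∈ E := by
    have := E.smul_mem h3 (x := ((N : ℚ) * ((c : ℚ) - c') * y)⁻¹)
    rwa [smul_smul, inv_mul_cancel₀ hne0, one_smul] at this
  rw [eq_top_iff, ← hα]
  exact IntermediateField.adjoin_simple_le_iff.2 h5

/-- For a generator `r` of the field, some nonzero integer multiplies `𝓞 F` into `ℤ[r]`. -/
theorem exists_index_adjoin {r : 𝓞 F} (hr : IntermediateField.adjoin ℚ {(r : F)} = ⊤) :
    ∃ D : ℤ, D ≠ 0 ∧ ∀ z : 𝓞 F, ∃ f : ℤ[X], (D : 𝓞 F) * z = aeval r f := by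
  have hrint : IsIntegral ℤ (r : F) := r.isIntegral_coe
  let B : PowerBasis ℚ F := PowerBasis.ofAdjoinEqTop
    (x := (r : F)) (hrint.tower_top) (by
      have := congrArg IntermediateField.toSubalgebra hr
      rwa [IntermediateField.adjoin_simple_toSubalgebra_of_isAlgebraic
        (Algebra.IsAlgebraic.isAlgebraic _)] at this)
  have hB : B.gen = (r : F) := PowerBasis.ofAdjoinEqTop_gen _ _
  have hd : Algebra.discr ℚ B.basis ≠ 0 := Algebra.discr_not_zero_of_basis ℚ B.basis
  have hdi : IsIntegral ℤ (Algebra.discr ℚ B.basis) := by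
    apply Algebra.discr_isIntegral
    intro i
    rw [PowerBasis.basis_eq_pow, hB]
    exact hrint.pow _
  obtain ⟨D, hD⟩ := IsIntegrallyClosed.isIntegral_iff.1 hdi
  refine ⟨D, fun h0 => hd (by rw [← hD, h0, map_zero]), fun z => ?_⟩
  have h1 := Algebra.discr_mul_isIntegral_mem_adjoin ℚ (R := ℤ) (B := B) (by rwa [hB])
    (z := (z : F)) z.isIntegral_coe
  rw [hB, Algebra.adjoin_singleton_eq_range_aeval] at h1
  obtain ⟨f, hf⟩ := h1
  refine ⟨f, RingOfIntegers.coe_injective ?_⟩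
  have h2 : aeval (r : F) f = algebraMap (𝓞 F) F (aeval r f) := aeval_algebraMap_apply F r f
  rw [← h2]
  refine Eq.trans ?_ hf.symm
  rw [← hD, Algebra.smul_def]
  simp

theorem aeval_charpoly_leftMulMatrix (r : 𝓞 F) :
    aeval r (Algebra.leftMulMatrix (RingOfIntegers.basis F) r).charpoly = 0 := by
  apply Algebra.leftMulMatrix_injective (RingOfIntegers.basis F)
  rw [map_zero, ← aeval_algHom_apply, Matrix.aeval_self_charpoly]

theorem eval_charpoly_leftMulMatrix (r : 𝓞 F) (c : ℤ) :
    (Algebra.leftMulMatrix (RingOfIntegers.basis F) r).charpoly.eval c =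
      Algebra.norm ℤ ((c : 𝓞 F) - r) := by
  rw [Matrix.eval_charpoly, Algebra.norm_eq_matrix_det (RingOfIntegers.basis F), map_sub]
  congr 2
  have := (Algebra.leftMulMatrix (RingOfIntegers.basis F)).commutes c
  rw [algebraMap_int_eq, eq_intCast] at this
  rw [this]
  rfl

theorem derivative_charpoly_ne_zero {r : 𝓞 F}
    (hr : IntermediateField.adjoin ℚ {(r : F)} = ⊤) :
    aeval r (Algebra.leftMulMatrix (RingOfIntegers.basis F) r).charpoly.derivative ≠ 0 := by
  set g := (Algebra.leftMulMatrix (RingOfIntegers.basis F) r).charpoly with hg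
  have hmonic : g.Monic := Matrix.charpoly_monic _
  have hroot : aeval (r : F) g = 0 := by
    rw [aeval_algebraMap_apply F r g, aeval_charpoly_leftMulMatrix, map_zero]
  have hrint : IsIntegral ℚ (r : F) := r.isIntegral_coe.tower_top
  have hdvd : minpoly ℚ (r : F) ∣ g.map (algebraMap ℤ ℚ) := by
    apply minpoly.dvd
    rw [aeval_map_algebraMap]
    exact hroot
  have hdeg := (Field.primitive_element_iff_minpoly_natDegree_eq ℚ (r : F)).1 hr
  have heq : g.map (algebraMap ℤ ℚ) = minpoly ℚ (r : F) := by
    refine eq_of_monic_of_dvd_of_natDegree_le (minpoly.monic hrint) (hmonic.map _) hdvd ?_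
    rw [hmonic.natDegree_map, hdeg, hg, Matrix.charpoly_natDegree_eq_dim,
      ← Module.finrank_eq_card_basis (RingOfIntegers.basis F), RingOfIntegers.rank]
  have hsep : (g.map (algebraMap ℤ ℚ)).Separable := by
    rw [heq]
    exact (minpoly.irreducible hrint).separable
  have h1 := hsep.aeval_derivative_ne_zero (x := (r : F)) (by rwa [aeval_map_algebraMap])
  rw [derivative_map, aeval_map_algebraMap, aeval_algebraMap_apply] at h1
  intro h0
  rw [h0, map_zero] at h1
  exact h1 rfl

/-- Good elements exist in every invertible residue class, with level prime to any given `L`. -/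
theorem exists_good_natCast (r : 𝓞 F) {N : ℕ} (hN : 0 < N)
    (hNp : ∀ p : ℕ, p.Prime → p ≤ Module.finrank ℚ F → p ∣ N) (hr : IsCoprime r (N : 𝓞 F))
    {L : ℕ} (hL : 0 < L) :
    ∃ (t : 𝓞 F) (n : ℕ), Good t n ∧ (N : 𝓞 F) ∣ t - r ∧ n.Coprime L := by
  obtain ⟨r', hr', hprim⟩ := exists_primitive_congr r hN
  obtain ⟨D, hD0, hD⟩ := exists_index_adjoin hprim
  have hcop := isCoprime_of_dvd_sub hr hr'
  have hder := derivative_charpoly_ne_zero hprim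
  have hroot := aeval_charpoly_leftMulMatrix r'
  have heval := eval_charpoly_leftMulMatrix r'
  have hmonic := Matrix.charpoly_monic (Algebra.leftMulMatrix (RingOfIntegers.basis F) r')
  have hdeg := Matrix.charpoly_natDegree_eq_dim
    (Algebra.leftMulMatrix (RingOfIntegers.basis F) r')
  rw [← Module.finrank_eq_card_basis (RingOfIntegers.basis F), RingOfIntegers.rank] at hdeg
  set g := (Algebra.leftMulMatrix (RingOfIntegers.basis F) r').charpoly
  set D₁ := Algebra.norm ℤ (aeval r' g.derivative) with hD₁
  have hD₁0 : D₁ ≠ 0 := by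
    rw [hD₁, Ne, Algebra.norm_eq_zero_iff]
    exact hder
  have hL0 : (L : ℤ) ≠ 0 := by exact_mod_cast hL.ne'
  obtain ⟨k, hk⟩ := exists_eval_not_dvd g hmonic N (by
      intro p hp hpN h0
      have h1 := heval 0
      rw [h1, Int.cast_zero, zero_sub] at h0
      refine not_dvd_norm hp ?_ h0
      refine IsCoprime.neg_left (IsCoprime.of_isCoprime_of_dvd_right hcop ?_)
      have := map_dvd (Int.castRingHom (𝓞 F)) hpN
      simpa using this)
    (by
      intro p hp hpd
      rw [hdeg] at hpd
      exact_mod_cast hNp p hp hpd) ((D * D₁ * (2 * L)).natAbs.primeFactors)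
    (fun p hp => Nat.prime_of_mem_primeFactors hp)
  obtain ⟨c, hc⟩ : ∃ c : ℤ, c = N * k := ⟨_, rfl⟩
  obtain ⟨m, hm⟩ : ∃ m : ℤ, m = g.eval c := ⟨_, rfl⟩
  rw [← hc, ← hm] at hk
  have hmcop : IsCoprime m (D * D₁ * (2 * L)) := by
    rw [Int.isCoprime_iff_gcd_eq_one]
    by_contra hg
    obtain ⟨p, hp, hpd⟩ := Nat.exists_prime_and_dvd hg
    have h1 := (Int.natCast_dvd_natCast.2 hpd).trans (Int.gcd_dvd_left _ _)
    have h2 := (Int.natCast_dvd_natCast.2 hpd).trans (Int.gcd_dvd_right _ _)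
    refine hk p ?_ h1
    rw [Nat.mem_primeFactors]
    refine ⟨hp, Int.natCast_dvd.1 h2, ?_⟩
    rw [Int.natAbs_ne_zero]
    exact mul_ne_zero (mul_ne_zero hD0 hD₁0) (mul_ne_zero two_ne_zero hL0)
  have hm0 : m ≠ 0 := by
    rintro rfl
    rw [isCoprime_zero_left] at hmcop
    have h2 := isUnit_of_mul_isUnit_left (isUnit_of_mul_isUnit_right hmcop)
    rw [Int.isUnit_iff] at h2
    omega
  have hmD : IsCoprime m D := hmcop.of_mul_right_left.of_mul_right_left
  have hmD₁ : IsCoprime m D₁ := hmcop.of_mul_right_left.of_mul_right_right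
  have hmL : IsCoprime m L := hmcop.of_mul_right_right.of_mul_right_right
  obtain ⟨t, ht⟩ : ∃ t : 𝓞 F, t = r' - c := ⟨_, rfl⟩
  obtain ⟨t'', htm, htt⟩ : ∃ t'' : 𝓞 F, (m : 𝓞 F) = t * t'' ∧
      ∃ w, t'' = w * t - aeval r' g.derivative := by
    obtain ⟨w, hw⟩ := (g.map (algebraMap ℤ (𝓞 F))).binomExpansion r' (-t)
    refine ⟨w * t - aeval r' g.derivative, ?_, w, rfl⟩
    have e1 : r' + -t = (c : 𝓞 F) := by rw [ht]; ring
    rw [e1, derivative_map, eval_intCast_map, eval_map_algebraMap, eval_map_algebraMap, hroot,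
      algebraMap_int_eq, eq_intCast, Int.cast_id] at hw
    rw [hm]
    linear_combination hw
  have hcopt : IsCoprime t t'' := by
    obtain ⟨w, rfl⟩ := htt
    have h1 : IsCoprime (m : 𝓞 F) (D₁ : 𝓞 F) := by
      simpa using hmD₁.map (Int.castRingHom (𝓞 F))
    have h2 : IsCoprime t (aeval r' g.derivative) :=
      (h1.of_isCoprime_of_dvd_left ⟨_, htm⟩).of_isCoprime_of_dvd_right (dvd_norm _)
    have h3 := (h2.neg_right).add_mul_right_right w
    rwa [neg_add_eq_sub] at h3
  have ht0 : t ≠ 0 := by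
    rintro rfl
    rw [zero_mul] at htm
    exact hm0 (by exact_mod_cast htm)
  -- the level is the positive generator of the kernel of `ℤ → 𝓞 F ⧸ (t)`
  obtain ⟨n, hn⟩ : ∃ n : ℕ, ∀ j : ℤ, t ∣ (j : 𝓞 F) ↔ (n : ℤ) ∣ j := by
    let I : Ideal ℤ := Ideal.comap (Int.castRingHom (𝓞 F)) (Ideal.span {t})
    refine ⟨(Submodule.IsPrincipal.generator I).natAbs, fun j => ?_⟩
    rw [Int.natAbs_dvd, ← Submodule.IsPrincipal.mem_iff_generator_dvd I]
    simp [I, Ideal.mem_comap, Ideal.mem_span_singleton]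
  have hnm : (n : ℤ) ∣ m := (hn m).1 ⟨_, htm⟩
  refine ⟨t, n, ⟨?_, ?_, fun j hj => (hn j).1 hj, fun z => ?_⟩, ?_, ?_⟩
  · rcases Nat.eq_zero_or_pos n with rfl | h
    · exact absurd (by simpa using hnm) hm0
    · exact h
  · obtain ⟨s, hs⟩ := (hn n).2 dvd_rfl
    rw [Int.cast_natCast] at hs
    refine ⟨s, hs, ?_⟩
    obtain ⟨j, hj⟩ := hnm
    have e : t * t'' = t * (s * j) := by
      rw [← htm, hj]
      push_cast
      rw [hs]
      ring
    rw [mul_left_cancel₀ ht0 e] at hcopt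
    exact hcopt.of_mul_right_left
  · obtain ⟨f, hf⟩ := hD z
    obtain ⟨x, y, hxy⟩ := hmD
    refine ⟨y * f.eval c, ?_⟩
    have h1 : t ∣ aeval r' f - ((f.eval c : ℤ) : 𝓞 F) := by
      have h2 := sub_dvd_eval_sub r' (c : 𝓞 F) (f.map (algebraMap ℤ (𝓞 F)))
      rw [eval_map_algebraMap, eval_intCast_map, algebraMap_int_eq, eq_intCast, Int.cast_id] at h2
      rw [ht]
      exact h2
    have h3 : (x : 𝓞 F) * m + y * D = 1 := by exact_mod_cast congrArg (Int.cast : ℤ → 𝓞 F) hxy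
    have h4 : z - ((y * f.eval c : ℤ) : 𝓞 F) =
        t * (x * t'' * z) + y * (aeval r' f - ((f.eval c : ℤ) : 𝓞 F)) := by
      rw [← hf]
      push_cast
      linear_combination (-z) * h3 + x * z * htm
    rw [h4]
    exact (Dvd.intro _ rfl).add (h1.mul_left _)
  · have : t - r = (r' - r) + (N : 𝓞 F) * (-k) := by
      rw [ht, hc]
      push_cast
      ring
    rw [this]
    exact hr'.add (Dvd.intro _ rfl)
  · rw [← Nat.isCoprime_iff_coprime]
    exact hmL.of_isCoprime_of_dvd_left hnm

theorem finite_quot {d : 𝓞 F} (hd : d ≠ 0) : Finite (𝓞 F ⧸ Ideal.span {d}) := by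
  apply Ideal.finiteQuotientOfFreeOfNeBot
  rwa [Ne, Ideal.span_singleton_eq_bot]

/-- Finite rings have stable range one. -/
theorem exists_coprime_add {b a : 𝓞 F} (h : IsCoprime a b) {N : 𝓞 F} (hN : N ≠ 0) :
    ∃ y, IsCoprime (b + y * a) N := by
  have := finite_quot hN
  obtain ⟨i, j, hij, heq⟩ := Finite.exists_ne_map_eq_of_infinite
    (fun i : ℕ => Ideal.Quotient.mk (Ideal.span {N}) (b ^ i))
  wlog hlt : i < j generalizing i j
  · exact this j i hij.symm heq.symm (by omega)
  rw [Ideal.Quotient.eq, Ideal.mem_span_singleton] at heq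
  obtain ⟨m, rfl⟩ : ∃ m, j = i + (m + 1) := ⟨j - i - 1, by omega⟩
  refine ⟨1 - b ^ (m + 1), ?_⟩
  rw [← Ideal.isCoprime_span_singleton_iff, Ideal.isCoprime_iff_sup_eq]
  by_contra hne
  obtain ⟨P, hP, hle⟩ := Ideal.exists_le_maximal _ hne
  have hr : b + (1 - b ^ (m + 1)) * a ∈ P :=
    hle (Ideal.mem_sup_left (Ideal.mem_span_singleton_self _))
  have hNP : N ∈ P := hle (Ideal.mem_sup_right (Ideal.mem_span_singleton_self _))
  have h1 : b ^ i * (1 - b ^ (m + 1)) ∈ P := by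
    have := P.mem_of_dvd heq hNP
    convert this using 1
    ring
  by_cases hb : b ∈ P
  · have h2 : a ∈ P := by
      have h3 : b ^ (m + 1) * a ∈ P := P.mul_mem_right _ (P.pow_mem_of_mem hb _ (by omega))
      have := P.sub_mem (P.add_mem hr h3) hb
      convert this using 1
      ring
    obtain ⟨u, v, huv⟩ := h
    apply hP.ne_top
    rw [Ideal.eq_top_iff_one, ← huv]
    exact P.add_mem (P.mul_mem_left _ h2) (P.mul_mem_left _ hb)
  · rcases hP.isPrime.mem_or_mem h1 with h2 | h2
    · exact hb (hP.isPrime.mem_of_pow_mem _ h2)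
    · apply hb
      have := P.sub_mem hr (P.mul_mem_right a h2)
      convert this using 1
      ring

/-- Good elements in an invertible residue class modulo an arbitrary `a ≠ 0`. -/
theorem exists_good {b a : 𝓞 F} (h : IsCoprime a b) (ha : a ≠ 0) {L : ℕ} (hL : 0 < L) :
    ∃ (t : 𝓞 F) (n : ℕ), Good t n ∧ a ∣ t - b ∧ n.Coprime L := by
  obtain ⟨N, hN0, haN, hNp⟩ : ∃ N : ℕ, 0 < N ∧ a ∣ (N : 𝓞 F) ∧
      ∀ p : ℕ, p.Prime → p ≤ Module.finrank ℚ F → p ∣ N := by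
    refine ⟨(Algebra.norm ℤ a).natAbs * (Module.finrank ℚ F).factorial, ?_, ?_, ?_⟩
    · apply Nat.mul_pos _ (Nat.factorial_pos _)
      rw [Int.natAbs_pos, Ne, Algebra.norm_eq_zero_iff]
      exact ha
    · rw [Nat.cast_mul]
      apply Dvd.dvd.mul_right
      have h1 : (((Algebra.norm ℤ a : ℤ)) : 𝓞 F) ∣ (((Algebra.norm ℤ a).natAbs : ℤ) : 𝓞 F) :=
        map_dvd (Int.castRingHom (𝓞 F)) (Int.dvd_natAbs.2 dvd_rfl)
      rw [Int.cast_natCast] at h1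
      exact (dvd_norm a).trans h1
    · intro p hp hle
      exact (hp.dvd_factorial.2 hle).mul_left _
  obtain ⟨y, hy⟩ := exists_coprime_add h (N := (N : 𝓞 F)) (by exact_mod_cast hN0.ne')
  obtain ⟨t, n, ht, htr, hn⟩ := exists_good_natCast _ hN0 hNp hy hL
  refine ⟨t, n, ht, ?_, hn⟩
  have : t - b = (t - (b + y * a)) + a * y := by ring
  rw [this]
  exact (haN.trans htr).add (Dvd.intro _ rfl)

end Existence

/-! ### The group `Gs q` and its symbols -/

section Symbol

variable {R : Type*} [CommRing R]

/-- The matrix with rows `(a, b)` and `(c, d)` as an element of `SL₂`. -/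
def mk2 (a b c d : R) (h : a * d - b * c = 1) : SpecialLinearGroup (Fin 2) R :=
  ⟨!![a, b; c, d], by rw [det_fin_two_of, h]⟩

@[simp] theorem mk2_00 (a b c d : R) (h) : (mk2 a b c d h).1 0 0 = a := rfl
@[simp] theorem mk2_01 (a b c d : R) (h) : (mk2 a b c d h).1 0 1 = b := rfl
@[simp] theorem mk2_10 (a b c d : R) (h) : (mk2 a b c d h).1 1 0 = c := rfl
@[simp] theorem mk2_11 (a b c d : R) (h) : (mk2 a b c d h).1 1 1 = d := rfl

theorem det_eq (x : SpecialLinearGroup (Fin 2) R) :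
    x.1 0 0 * x.1 1 1 - x.1 0 1 * x.1 1 0 = 1 := by
  have := x.2
  rwa [det_fin_two] at this

theorem mul_apply2 (x y : SpecialLinearGroup (Fin 2) R) (i j : Fin 2) :
    (x * y).1 i j = x.1 i 0 * y.1 0 j + x.1 i 1 * y.1 1 j := by
  have : (x * y).1 = x.1 * y.1 := rfl
  rw [this, Matrix.mul_apply, Fin.sum_univ_two]

theorem inv_00 (x : SpecialLinearGroup (Fin 2) R) : (x⁻¹).1 0 0 = x.1 1 1 := by
  have : (x⁻¹).1 = adjugate x.1 := rfl
  rw [this, adjugate_fin_two]; rfl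
theorem inv_01 (x : SpecialLinearGroup (Fin 2) R) : (x⁻¹).1 0 1 = - x.1 0 1 := by
  have : (x⁻¹).1 = adjugate x.1 := rfl
  rw [this, adjugate_fin_two]; rfl
theorem inv_10 (x : SpecialLinearGroup (Fin 2) R) : (x⁻¹).1 1 0 = - x.1 1 0 := by
  have : (x⁻¹).1 = adjugate x.1 := rfl
  rw [this, adjugate_fin_two]; rfl
theorem inv_11 (x : SpecialLinearGroup (Fin 2) R) : (x⁻¹).1 1 1 = x.1 0 0 := by
  have : (x⁻¹).1 = adjugate x.1 := rfl
  rw [this, adjugate_fin_two]; rfl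

theorem one_apply2 : (1 : SpecialLinearGroup (Fin 2) R).1 = 1 := rfl

theorem ext2 {x y : SpecialLinearGroup (Fin 2) R} (h00 : x.1 0 0 = y.1 0 0)
    (h01 : x.1 0 1 = y.1 0 1) (h10 : x.1 1 0 = y.1 1 0) (h11 : x.1 1 1 = y.1 1 1) : x = y := by
  apply Subtype.ext
  ext i j
  fin_cases i <;> fin_cases j <;> assumption

/-- The matrices in `SL₂(R)` with off-diagonal entries in `(q)` and diagonal entries in
`1 + (q ^ 2)`. -/
def Gs (q : R) : Subgroup (SpecialLinearGroup (Fin 2) R) where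
  carrier := {x | q ∣ x.1 0 1 ∧ q ∣ x.1 1 0 ∧ q ^ 2 ∣ x.1 0 0 - 1 ∧ q ^ 2 ∣ x.1 1 1 - 1}
  one_mem' := by simp
  mul_mem' := by
    rintro x y ⟨⟨a, ha⟩, ⟨b, hb⟩, ⟨c, hc⟩, ⟨d, hd⟩⟩ ⟨⟨a', ha'⟩, ⟨b', hb'⟩, ⟨c', hc'⟩, ⟨d', hd'⟩⟩
    simp only [Set.mem_ofPred_eq, mul_apply2]
    rw [sub_eq_iff_eq_add] at hc hd hc' hd'
    rw [ha, hb, hc, hd, ha', hb', hc', hd']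
    refine ⟨?_, ?_, ?_, ?_⟩
    · exact ⟨(q ^ 2 * c + 1) * a' + a * (q ^ 2 * d' + 1), by ring⟩
    · exact ⟨b * (q ^ 2 * c' + 1) + (q ^ 2 * d + 1) * b', by ring⟩
    · exact ⟨q ^ 2 * c * c' + c + c' + a * b', by ring⟩
    · exact ⟨q ^ 2 * d * d' + d + d' + b * a', by ring⟩
  inv_mem' := by
    rintro x ⟨h1, h2, h3, h4⟩
    simp only [Set.mem_ofPred_eq, inv_00, inv_01, inv_10, inv_11, dvd_neg]
    exact ⟨h1, h2, h4, h3⟩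

theorem mem_Gs {q : R} {x : SpecialLinearGroup (Fin 2) R} :
    x ∈ Gs q ↔ q ∣ x.1 0 1 ∧ q ∣ x.1 1 0 ∧ q ^ 2 ∣ x.1 0 0 - 1 ∧ q ^ 2 ∣ x.1 1 1 - 1 := Iff.rfl

/-- In `Gs q` the condition on the last entry is automatic. -/
theorem mem_Gs_of {q : R} {x : SpecialLinearGroup (Fin 2) R} (h01 : q ∣ x.1 0 1)
    (h10 : q ∣ x.1 1 0) (h00 : q ^ 2 ∣ x.1 0 0 - 1) : x ∈ Gs q := by
  refine ⟨h01, h10, h00, ?_⟩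
  obtain ⟨a, ha⟩ := h01
  obtain ⟨b, hb⟩ := h10
  obtain ⟨c, hc⟩ := h00
  have := det_eq x
  refine ⟨a * b - c * x.1 1 1, ?_⟩
  rw [ha, hb] at this
  linear_combination this - x.1 1 1 * hc

/-- First rows of elements of `Gs q`. -/
structure Adm (q a b : R) : Prop where
  a1 : q ^ 2 ∣ a - 1
  b0 : q ∣ b
  cop : IsCoprime a b

theorem isCoprime_of_sub_one {q a : R} (h : q ^ 2 ∣ a - 1) : IsCoprime a q := by
  obtain ⟨w, hw⟩ := h
  exact ⟨1, -q * w, by linear_combination hw⟩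

/-- A row can be completed with lower left entry divisible by any `T` prime to `a`. -/
theorem Adm.exists_lower {q a b T : R} (h : Adm q a b) (hT : IsCoprime a T) :
    ∃ x : Gs q, x.1.1 0 0 = a ∧ x.1.1 0 1 = b ∧ T ∣ x.1.1 1 0 := by
  obtain ⟨u, w, huw⟩ := h.cop
  obtain ⟨m, m', hm⟩ : IsCoprime a (q * T) := (isCoprime_of_sub_one h.a1).mul_right hT
  have e : a * (u + b * (m * w)) - b * (-w + a * (m * w)) = 1 := by linear_combination huw
  have hc : -w + a * (m * w) = q * T * (-m' * w) := by linear_combination w * hm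
  refine ⟨⟨mk2 _ _ _ _ e, mem_Gs_of h.b0 ?_ h.a1⟩, rfl, rfl, ?_⟩
  · exact ⟨T * (-m' * w), by rw [mk2_10, hc]; ring⟩
  · exact ⟨q * (-m' * w), by rw [mk2_10, hc]; ring⟩

theorem Adm.exists_mat {q a b : R} (h : Adm q a b) :
    ∃ x : Gs q, x.1.1 0 0 = a ∧ x.1.1 0 1 = b := by
  obtain ⟨x, h1, h2, _⟩ := h.exists_lower (T := 1) isCoprime_one_right
  exact ⟨x, h1, h2⟩

theorem adm_row {q : R} (x : Gs q) : Adm q (x.1.1 0 0) (x.1.1 0 1) :=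
  ⟨x.2.2.2.1, x.2.1, x.1.1 1 1, -x.1.1 1 0, by linear_combination det_eq x.1⟩

theorem Adm.right {q a b b' : R} (h : Adm q a b) (hb : q * a ∣ b' - b) : Adm q a b' := by
  refine ⟨h.a1, ?_, ?_⟩
  · have := ((Dvd.intro _ rfl).trans hb).add h.b0
    rwa [sub_add_cancel] at this
  · exact (isCoprime_of_dvd_sub h.cop.symm ((Dvd.intro_left _ rfl).trans hb)).symm

theorem Adm.left {q a a' b : R} (h : Adm q a b) (ha : q * b ∣ a' - a) : Adm q a' b := by
  refine ⟨?_, h.b0, isCoprime_of_dvd_sub h.cop ((Dvd.intro_left _ rfl).trans ha)⟩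
  have h1 : q ^ 2 ∣ a' - a := by
    rw [pow_two]
    exact (mul_dvd_mul_left q h.b0).trans ha
  have := h1.add h.a1
  rwa [sub_add_sub_cancel] at this

theorem Adm.unit_sq {q a b : R} (h : Adm q a b) {v : Rˣ} (hv : q ^ 2 ∣ (v : R) - 1) :
    Adm q ((v : R) ^ 2 * a) b := by
  refine ⟨?_, h.b0, ?_⟩
  · have : (v : R) ^ 2 * a - 1 = (v - 1) * ((v + 1) * a) + (a - 1) := by ring
    rw [this]
    exact (hv.mul_right _).add h.a1
  · exact (isCoprime_mul_unit_left_left ((v.isUnit).pow 2) _ _).2 h.cop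

variable {q : R} {C : Type*} [Group C] {ρ : Gs q →* C}

/-- `ρ` is trivial on the elementary matrices of `Gs q`. -/
structure Kills (ρ : Gs q →* C) : Prop where
  upper : ∀ x : Gs q, x.1.1 0 0 = 1 → x.1.1 1 0 = 0 → ρ x = 1
  lower : ∀ x : Gs q, x.1.1 0 0 = 1 → x.1.1 0 1 = 0 → ρ x = 1

open Classical in
/-- The value of `ρ` on any element of `Gs q` with first row `(a, b)`; the junk value is `1` when
there is no such element. -/
noncomputable def sym (ρ : Gs q →* C) (a b : R) : C :=
  if h : ∃ x : Gs q, x.1.1 0 0 = a ∧ x.1.1 0 1 = b then ρ h.choose else 1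

theorem rho_eq_of_row (hk : Kills ρ) {x y : Gs q} (h0 : x.1.1 0 0 = y.1.1 0 0)
    (h1 : x.1.1 0 1 = y.1.1 0 1) : ρ x = ρ y := by
  rw [← mul_inv_eq_one, ← map_inv, ← map_mul]
  apply hk.lower
  · rw [Subgroup.coe_mul, Subgroup.coe_inv, mul_apply2, inv_00, inv_10, h0, h1]
    linear_combination det_eq y.1
  · rw [Subgroup.coe_mul, Subgroup.coe_inv, mul_apply2, inv_01, inv_11, h0, h1]
    ring

theorem rho_eq_sym (hk : Kills ρ) (x : Gs q) : ρ x = sym ρ (x.1.1 0 0) (x.1.1 0 1) := by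
  have h : ∃ y : Gs q, y.1.1 0 0 = x.1.1 0 0 ∧ y.1.1 0 1 = x.1.1 0 1 := ⟨x, rfl, rfl⟩
  rw [sym, dif_pos h]
  exact rho_eq_of_row hk h.choose_spec.1.symm h.choose_spec.2.symm

theorem sym_eq_rho (hk : Kills ρ) {x : Gs q} {a b : R} (ha : x.1.1 0 0 = a)
    (hb : x.1.1 0 1 = b) : sym ρ a b = ρ x := by
  rw [rho_eq_sym hk, ha, hb]

/-- Upper elementary matrix in `Gs q`. -/
def eU (q z : R) : Gs q :=
  ⟨mk2 1 (q * z) 0 1 (by ring), mem_Gs_of ⟨z, rfl⟩ (dvd_zero _) (by simp)⟩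

/-- Lower elementary matrix in `Gs q`. -/
def eL (q z : R) : Gs q :=
  ⟨mk2 1 0 (q * z) 1 (by ring), mem_Gs_of (dvd_zero _) ⟨z, rfl⟩ (by simp)⟩

theorem rho_eU (hk : Kills ρ) (z : R) : ρ (eU q z) = 1 := hk.upper _ rfl rfl
theorem rho_eL (hk : Kills ρ) (z : R) : ρ (eL q z) = 1 := hk.lower _ rfl rfl

theorem sym_right (hk : Kills ρ) {a b b' : R} (h : Adm q a b) (hb : q * a ∣ b' - b) :
    sym ρ a b' = sym ρ a b := by
  obtain ⟨x, hx0, hx1⟩ := h.exists_mat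
  obtain ⟨w, hw⟩ := hb
  rw [sym_eq_rho hk hx0 hx1, sym_eq_rho hk (x := x * eU q w), map_mul, rho_eU hk, mul_one]
  · rw [Subgroup.coe_mul, mul_apply2, hx0, hx1]
    simp [eU]
  · rw [Subgroup.coe_mul, mul_apply2, hx0, hx1]
    simp only [eU, mk2_01, mk2_11]
    linear_combination -hw

theorem sym_left (hk : Kills ρ) {a a' b : R} (h : Adm q a b) (ha : q * b ∣ a' - a) :
    sym ρ a' b = sym ρ a b := by
  obtain ⟨x, hx0, hx1⟩ := h.exists_mat
  obtain ⟨w, hw⟩ := ha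
  rw [sym_eq_rho hk hx0 hx1, sym_eq_rho hk (x := x * eL q w), map_mul, rho_eL hk, mul_one]
  · rw [Subgroup.coe_mul, mul_apply2, hx0, hx1]
    simp only [eL, mk2_00, mk2_10]
    linear_combination -hw
  · rw [Subgroup.coe_mul, mul_apply2, hx0, hx1]
    simp [eL]

theorem sym_one (hk : Kills ρ) {b : R} (hb : q ∣ b) : sym ρ 1 b = 1 := by
  obtain ⟨z, rfl⟩ := hb
  exact (sym_eq_rho hk (x := eU q z) rfl rfl).trans (rho_eU hk z)

theorem sym_unit (hk : Kills ρ) {a b : R} (h : Adm q a b) {v : Rˣ} (hv : q ^ 2 ∣ (v : R) - 1) :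
    sym ρ ((v : R) ^ 2 * a) b = sym ρ a b := by
  obtain ⟨x, hx0, hx1⟩ := h.exists_mat
  obtain ⟨w, hw⟩ := hv
  obtain ⟨hh, hmem, h00, h01, h10, h11⟩ : ∃ hh : Gs q, ρ hh = 1 ∧ hh.1.1 0 0 = v ∧
      hh.1.1 0 1 = 0 ∧ hh.1.1 1 0 = 0 ∧ hh.1.1 1 1 = ((v⁻¹ : Rˣ) : R) := by
    -- Whitehead factorisation of a diagonal matrix
    have hvv : (v : R) * ((v⁻¹ : Rˣ) : R) = 1 := v.mul_inv
    refine ⟨eL q (-w * ((v⁻¹ : Rˣ) : R)) * eU q 1 * eL q w * eU q (-((v⁻¹ : Rˣ) : R)), ?_, ?_⟩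
    · simp [rho_eU hk, rho_eL hk]
    · set v' := ((v⁻¹ : Rˣ) : R)
      simp only [Subgroup.coe_mul, mul_apply2, eU, eL, mk2_00, mk2_01, mk2_10, mk2_11]
      refine ⟨?_, ?_, ?_, ?_⟩
      · linear_combination -hw
      · linear_combination (q * v') * hw - q * hvv
      · linear_combination (q * v' * w) * hw - (q * w) * hvv
      · linear_combination (-(q ^ 2 * w * v' ^ 2) + v') * hw + (q ^ 2 * w * v' - 1) * hvv
  rw [sym_eq_rho hk hx0 hx1, sym_eq_rho hk (x := hh * x * hh), map_mul, map_mul, hmem, one_mul,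
    mul_one]
  · simp only [Subgroup.coe_mul, mul_apply2, hx0, hx1, h00, h01, h10]
    ring
  · simp only [Subgroup.coe_mul, mul_apply2, hx0, hx1, h00, h01, h11]
    linear_combination b * v.mul_inv

end Symbol

/-! ### Arithmetic behind the periods -/

section Periods

theorem period_mul {C : Type*} {f : ℕ → C} {P : ℕ} (h : ∀ i, f (i + P) = f i) (k i : ℕ) :
    f (i + k * P) = f i := by
  induction k with
  | zero => simp
  | succ k ih => rw [show i + (k + 1) * P = (i + k * P) + P by ring, h, ih]

/-- A number `E` is a period of `f` as soon as, prime by prime, some period has no larger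
valuation than `E`. -/
theorem period_of_primes {C : Type*} (f : ℕ → C) {E : ℕ} (hE : 0 < E)
    (h : ∀ r : ℕ, r.Prime → ∃ P, 0 < P ∧ (∀ i, f (i + P) = f i) ∧ ∀ k, r ^ k ∣ P → r ^ k ∣ E) :
    ∀ i, f (i + E) = f i := by
  classical
  have hex : ∃ P, 0 < P ∧ ∀ i, f (i + P) = f i := by
    obtain ⟨P, h1, h2, _⟩ := h 2 Nat.prime_two
    exact ⟨P, h1, h2⟩
  obtain ⟨hp0, hp⟩ := Nat.find_spec hex
  set p := Nat.find hex with hpdef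
  have hmin : ∀ P, (∀ i, f (i + P) = f i) → p ∣ P := by
    intro P hP
    rw [Nat.dvd_iff_mod_eq_zero]
    by_contra hne
    refine Nat.find_min hex (Nat.mod_lt P hp0) ⟨Nat.pos_of_ne_zero hne, fun i => ?_⟩
    have h1 := period_mul hp (P / p) (i + P % p)
    have h2 := Nat.mod_add_div P p
    rw [show i + P % p + P / p * p = i + P by rw [mul_comm (P / p)]; omega, hP] at h1
    exact h1.symm
  have hdvd : p ∣ E := by
    rw [Nat.dvd_iff_prime_pow_dvd_dvd]
    intro r k hr hrk
    obtain ⟨P, _, h2, h3⟩ := h r hr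
    exact h3 k (hrk.trans (hmin P h2))
  obtain ⟨c, rfl⟩ := hdvd
  intro i
  rw [mul_comm]
  exact period_mul hp c i

theorem prime_pow_dvd_pow {r X Y m : ℕ} (hr : r.Prime) (hX : X ≠ 0) (hY : Y ≠ 0)
    (h : ∀ j, r ^ j ∣ X → r ^ j ∣ Y) {k : ℕ} (hk : r ^ k ∣ X ^ m) : r ^ k ∣ Y ^ m := by
  have h1 : X.factorization r ≤ Y.factorization r :=
    (hr.pow_dvd_iff_le_factorization hY).1 (h _ (Nat.ordProj_dvd X r))
  rw [hr.pow_dvd_iff_le_factorization (pow_ne_zero _ hX), Nat.factorization_pow] at hk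
  rw [hr.pow_dvd_iff_le_factorization (pow_ne_zero _ hY), Nat.factorization_pow]
  simp only [Finsupp.smul_apply, smul_eq_mul] at hk ⊢
  exact hk.trans (Nat.mul_le_mul_left _ h1)

theorem exists_prime_congr {k : ℤ} {m : ℕ} (hm : 0 < m) (h : IsCoprime k (m : ℤ)) (B : ℕ) :
    ∃ l : ℕ, l.Prime ∧ B < l ∧ (m : ℤ) ∣ l - k := by
  have : NeZero m := ⟨hm.ne'⟩
  have hu : IsUnit (k : ZMod m) := by
    obtain ⟨a, b, hab⟩ := h
    have := congrArg (Int.cast : ℤ → ZMod m) hab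
    push_cast at this
    rw [ZMod.natCast_self, mul_zero, add_zero] at this
    exact IsUnit.of_mul_eq_one_right _ this
  obtain ⟨l, hl, hp, he⟩ := Nat.forall_exists_prime_gt_and_eq_mod hu B
  refine ⟨l, hp, hl, ?_⟩
  rw [← ZMod.intCast_zmod_eq_zero_iff_dvd]
  push_cast
  rw [he, sub_self]

theorem crt_int {m₁ m₂ : ℤ} (h : IsCoprime m₁ m₂) {k₁ k₂ : ℤ} (h₁ : IsCoprime k₁ m₁)
    (h₂ : IsCoprime k₂ m₂) : ∃ k, m₁ ∣ k - k₁ ∧ m₂ ∣ k - k₂ ∧ IsCoprime k (m₁ * m₂) := by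
  obtain ⟨z, hz1, hz2⟩ := exists_crt h k₁ k₂
  exact ⟨z, hz1, hz2, (isCoprime_of_dvd_sub h₁ hz1).mul_right (isCoprime_of_dvd_sub h₂ hz2)⟩

theorem exists_pow_ne_one {r M : ℕ} (hr : r.Prime) (hM : 0 < M) (h : M + 1 < r) :
    ∃ g : ℤ, IsCoprime g (r : ℤ) ∧ ¬ (r : ℤ) ∣ g ^ M - 1 := by
  have : Fact r.Prime := ⟨hr⟩
  obtain ⟨y, hy⟩ : ∃ y : (ZMod r)ˣ, y ^ M ≠ 1 := by
    by_contra! hcon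
    have h1 : (Finset.univ : Finset (ZMod r)ˣ).card ≤ M := by
      have h2 := IsCyclic.card_pow_eq_one_le (α := (ZMod r)ˣ) hM
      rwa [Finset.filter_true_of_mem (fun y _ => hcon y)] at h2
    rw [Finset.card_univ, ZMod.card_units_eq_totient, Nat.totient_prime hr] at h1
    omega
  refine ⟨((y : ZMod r).val : ℤ), ?_, fun hd => hy ?_⟩
  · rw [Nat.isCoprime_iff_coprime]
    exact ZMod.val_coe_unit_coprime y
  · rw [← ZMod.intCast_zmod_eq_zero_iff_dvd] at hd
    push_cast at hd
    rw [ZMod.natCast_val, ZMod.cast_id, sub_eq_zero] at hd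
    exact Units.ext (by push_cast; exact hd)

/-- `l ^ M - 1 = (l - 1) * S` with `S ≡ M` modulo `l - 1`. -/
theorem pow_sub_one_factor (l M : ℕ) :
    ∃ y : ℤ, (l : ℤ) ^ M - 1 = (l - 1) * (M + (l - 1) * y) := by
  obtain ⟨r, hr⟩ := one_add_pow_exp ((l : ℤ) - 1) M
  refine ⟨r, ?_⟩
  rw [add_sub_cancel] at hr
  rw [hr]
  ring

/-- The regular representation bounds the order of `t` modulo a rational prime `l`. -/
theorem prime_dvd_pow_sub_one {F : Type*} [Field F] [NumberField F] {l : ℕ} (hl : l.Prime)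
    {t : 𝓞 F} (ht : IsCoprime t (l : 𝓞 F)) :
    (l : 𝓞 F) ∣ t ^ ((l ^ Module.finrank ℚ F *
      (l ^ (Module.finrank ℚ F).factorial - 1)) ^ Module.finrank ℚ F) - 1 := by
  classical
  have : Fact l.Prime := ⟨hl⟩
  set n := Module.finrank ℚ F with hn
  have hcard : Fintype.card (Module.Free.ChooseBasisIndex ℤ (𝓞 F)) = n := by
    rw [← Module.finrank_eq_card_basis (RingOfIntegers.basis F), RingOfIntegers.rank]
  let e := Fintype.equivFinOfCardEq hcard
  let φ := (Matrix.reindexAlgEquiv (ZMod l) (ZMod l) e).toRingEquiv.toRingHom.comp (modRep F l)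
  obtain ⟨a, b, hab⟩ := ht
  have hl0 : φ (l : 𝓞 F) = 0 := by
    rw [map_natCast]
    ext i j
    rw [Matrix.natCast_apply]
    split_ifs <;> simp
  have h1 : φ a * φ t = 1 := by
    have := congrArg φ hab
    rwa [map_add, map_mul, map_mul, hl0, mul_zero, add_zero, map_one] at this
  have h2 : φ t * φ a = 1 := by rw [← map_mul, mul_comm, map_mul, h1]
  let g : GL (Fin n) (ZMod l) := ⟨φ t, φ a, h2, h1⟩
  have h3 : Nat.card (GL (Fin n) (ZMod l)) ∣ (l ^ n * (l ^ n.factorial - 1)) ^ n := by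
    rw [Matrix.card_GL_field, ZMod.card]
    have : ((l ^ n * (l ^ n.factorial - 1)) ^ n) =
        ∏ _i : Fin n, (l ^ n * (l ^ n.factorial - 1)) := by simp
    rw [this]
    apply Finset.prod_dvd_prod_of_dvd
    intro i _
    have hi : l ^ n - l ^ (i : ℕ) = l ^ (i : ℕ) * (l ^ (n - i) - 1) := by
      rw [Nat.mul_sub, ← pow_add, mul_one, Nat.add_sub_cancel' i.2.le]
    rw [hi]
    refine Nat.mul_dvd_mul (pow_dvd_pow _ i.2.le) ?_
    apply Nat.pow_sub_one_dvd_pow_sub_one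
    exact Nat.dvd_factorial (by omega) (by omega)
  have h4 : g ^ ((l ^ n * (l ^ n.factorial - 1)) ^ n) = 1 := by
    obtain ⟨c, hc⟩ := h3
    rw [hc, pow_mul, pow_card_eq_one', one_pow]
  apply modRep_eq_zero
  have h5 : φ (t ^ ((l ^ n * (l ^ n.factorial - 1)) ^ n) - 1) = 0 := by
    have := congrArg Units.val h4
    rw [map_sub, map_pow, map_one, sub_eq_zero]
    simpa [g] using this
  have hinj : Function.Injective (Matrix.reindexAlgEquiv (ZMod l) (ZMod l) e) :=
    (Matrix.reindexAlgEquiv (ZMod l) (ZMod l) e).injective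
  apply hinj
  rw [map_zero]
  exact h5

/-- Bound for the `r`-part of `l ^ M - 1`. -/
theorem val_bound {r q n M l : ℕ} (hr : r.Prime) (hMq : M ∣ q)
    {w j' : ℤ} (hw : (l : ℤ) - 1 = q ^ 2 * (1 + q * w)) (hj : (l : ℤ) - 1 = n * j')
    (hjn : IsCoprime j' n) (hnot : ¬ r ∣ q * n → ¬ (r : ℤ) ∣ (l : ℤ) ^ M - 1) {k : ℕ}
    (hk : (r : ℤ) ^ k ∣ (l : ℤ) ^ M - 1) : (r : ℤ) ^ k ∣ (q : ℤ) ^ 2 * n * M := by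
  have hrp : Prime (r : ℤ) := Nat.prime_iff_prime_int.1 hr
  obtain ⟨y, hy⟩ := pow_sub_one_factor l M
  obtain ⟨q', hq'⟩ := hMq
  have hq'' : (q : ℤ) = M * q' := by exact_mod_cast hq'
  by_cases hrq : r ∣ q
  · obtain ⟨s, hs⟩ := hrq
    have hs' : (q : ℤ) = r * s := by exact_mod_cast hs
    have h1 : ∀ z : ℤ, IsCoprime ((r : ℤ) ^ k) (1 + q * z) := fun z =>
      IsCoprime.pow_left ⟨-s * z, 1, by rw [hs']; ring⟩
    have h2 : (l : ℤ) ^ M - 1 =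
        (q : ℤ) ^ 2 * M * ((1 + q * w) * (1 + q * (q' * (1 + q * w) * y))) := by
      rw [hy, hw, hq'']
      ring
    rw [h2] at hk
    have h3 := ((h1 w).mul_right (h1 _)).dvd_of_dvd_mul_right hk
    exact h3.trans ⟨n, by ring⟩
  · by_cases hrn : r ∣ n
    · have hrn' : (r : ℤ) ∣ n := by exact_mod_cast hrn
      have h1 : IsCoprime (r : ℤ) j' := (hjn.of_isCoprime_of_dvd_right hrn').symm
      have h2 : IsCoprime (r : ℤ) M := by
        rw [hrp.coprime_iff_not_dvd]
        intro hd
        apply hrq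
        have : (r : ℤ) ∣ q := by
          rw [hq'']
          exact hd.mul_right _
        exact_mod_cast this
      have h3 : IsCoprime (r : ℤ) (M + (l - 1) * y) := by
        obtain ⟨s, hs⟩ := hrn'
        rw [hj, hs, mul_assoc, mul_assoc]
        exact h2.add_mul_left_right _
      rw [hy, hj, mul_assoc] at hk
      have h4 : IsCoprime ((r : ℤ) ^ k) (j' * (M + n * j' * y)) := by
        rw [hj] at h3
        exact (h1.mul_right h3).pow_left
      exact (h4.dvd_of_dvd_mul_right hk).trans ⟨q ^ 2 * M, by ring⟩
    · have hnd : ¬ r ∣ q * n := fun hd => (hr.dvd_mul.1 hd).elim hrq hrn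
      rcases Nat.eq_zero_or_pos k with rfl | hk0
      · simp
      · exact absurd ((dvd_pow_self _ hk0.ne').trans hk) (hnot hnd)

end Periods

/-! ### Invariance of the symbol under powers of a good element -/

section Core

variable {F : Type*} [Field F] [NumberField F]

/-- Divisibility conditions imposed on the level `q`. -/
structure Lvl (F : Type*) [Field F] [NumberField F] (q : ℕ) : Prop where
  pos : 0 < q
  fact : ((Module.finrank ℚ F).factorial + 1).factorial ∣ q
  four : 4 ∣ q

theorem Lvl.prime_dvd {q : ℕ} (h : Lvl F q) {r : ℕ} (hr : r.Prime)
    (hle : r ≤ (Module.finrank ℚ F).factorial + 1) : r ∣ q :=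
  (hr.dvd_factorial.2 hle).trans h.fact

theorem Lvl.factorial_dvd {q : ℕ} (h : Lvl F q) : (Module.finrank ℚ F).factorial ∣ q :=
  (Nat.dvd_factorial (Nat.factorial_pos _) (Nat.le_succ _)).trans h.fact

theorem Lvl.cast_ne_zero {q : ℕ} (h : Lvl F q) : (q : 𝓞 F) ≠ 0 := by
  exact_mod_cast h.pos.ne'

theorem natCast_dvd_one {q : ℕ} (h : (q : 𝓞 F) ∣ 1) : q = 1 := by
  have h1 := map_dvd (Algebra.norm ℤ) h
  have h2 : Algebra.norm ℤ ((q : ℕ) : 𝓞 F) = (q : ℤ) ^ Module.finrank ℤ (𝓞 F) := by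
    have := Algebra.norm_algebraMap (S := 𝓞 F) (q : ℤ)
    simpa using this
  rw [h2, map_one] at h1
  have h3 : (q : ℤ) ∣ 1 := by
    refine (dvd_pow_self _ ?_).trans h1
    rw [RingOfIntegers.rank]
    exact (Module.finrank_pos (R := ℚ) (M := F)).ne'
  have : q ∣ 1 := by exact_mod_cast h3
  exact Nat.dvd_one.1 this

theorem Lvl.ne_zero_of_sub_one {q : ℕ} (h : Lvl F q) {a : 𝓞 F} (ha : (q : 𝓞 F) ^ 2 ∣ a - 1) :
    a ≠ 0 := by
  rintro rfl
  rw [zero_sub, dvd_neg] at ha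
  have h1 := natCast_dvd_one ((dvd_pow_self (q : 𝓞 F) two_ne_zero).trans ha)
  have := h.four
  omega

/-- The exponent `E` for which `t ^ E` acts trivially on symbols, `t` being good of level `n`. -/
noncomputable def expo (F : Type*) [Field F] [NumberField F] (q n : ℕ) : ℕ :=
  (q ^ 2 * n * (Module.finrank ℚ F).factorial) ^ Module.finrank ℚ F

theorem Good.ne_zero {t : 𝓞 F} {n : ℕ} (h : Good t n) : t ≠ 0 := by
  rintro rfl
  obtain ⟨t', h1, _⟩ := h.cof
  rw [zero_mul] at h1
  have := h.pos
  have h2 : n = 0 := by exact_mod_cast h1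
  omega

theorem coprime_of_congr {t a : 𝓞 F} (ha : t ^ 2 ∣ a - (1 + t)) : IsCoprime a t := by
  obtain ⟨s, hs⟩ := ha
  exact ⟨1, -1 - t * s, by linear_combination hs⟩

theorem intCast_dvd_cast {m k : ℤ} (h : m ∣ k) : (m : 𝓞 F) ∣ (k : 𝓞 F) :=
  map_dvd (Int.castRingHom (𝓞 F)) h

/-- For every prime `r`, the sequence `i ↦ sym ρ a (t ^ i * b)` has a period whose `r`-part divides
the exponent `expo F q n`.

Replacing `b` by `q * β` with `β` good, Dirichlet's theorem yields a rational prime `l` congruent to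
`a` modulo `β` and modulo a high power of `t`. By `unit_density`, `a` can be replaced by `l` in all
the symbols of the sequence simultaneously, so the order of `t` modulo `l` is a period. The
congruences imposed on `l` modulo `q ^ 3` and `r`, together with `a ≡ 1 + t` modulo `t ^ 2`, control
the `r`-part of `l ^ M - 1`, where `M` is the factorial of the degree. -/
theorem core_period {q : ℕ} (hq : Lvl F q) (u : (𝓞 F)ˣ) (hu : ∀ k : ℕ, 0 < k → u ^ k ≠ 1)
    {C : Type*} [Group C] {ρ : Gs (q : 𝓞 F) →* C} (hk : Kills ρ) {t : 𝓞 F} {n : ℕ} (ht : Good t n)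
    (ht1 : (q : 𝓞 F) ^ 2 ∣ t - 1) {a b : 𝓞 F} (h : Adm (q : 𝓞 F) a b) (ha : t ^ 2 ∣ a - (1 + t))
    {r : ℕ} (hr : r.Prime) :
    ∃ P, 0 < P ∧ (∀ i, sym ρ a (t ^ (i + P) * b) = sym ρ a (t ^ i * b)) ∧
      ∀ k, r ^ k ∣ P → r ^ k ∣ expo F q n := by
  obtain ⟨b₀, hb₀⟩ := h.b0
  have hcop : IsCoprime a b₀ := by
    have := h.cop
    rw [hb₀] at this
    exact this.of_mul_right_right
  have hat := coprime_of_congr ha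
  have hadm : ∀ i, Adm (q : 𝓞 F) a (t ^ i * b) := fun i =>
    ⟨h.a1, h.b0.mul_left _, hat.pow_right.mul_right h.cop⟩
  obtain ⟨β, m, hβ, hβb, hm⟩ := exists_good hcop (hq.ne_zero_of_sub_one h.a1)
    (L := r * (q * n)) (Nat.mul_pos hr.pos (Nat.mul_pos hq.pos ht.pos))
  have hsymb : ∀ i, sym ρ a (t ^ i * (q * β)) = sym ρ a (t ^ i * b) := fun i => by
    refine sym_right hk (hadm i) ?_
    obtain ⟨s, hs⟩ := hβb
    exact ⟨t ^ i * s, by rw [hb₀]; linear_combination (t ^ i * q) * hs⟩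
  have hadmβ : ∀ i, Adm (q : 𝓞 F) a (t ^ i * (q * β)) := fun i => by
    refine (hadm i).right ?_
    obtain ⟨s, hs⟩ := hβb
    exact ⟨t ^ i * s, by rw [hb₀]; linear_combination (t ^ i * q) * hs⟩
  have haβ : IsCoprime a β := by
    have := (hadmβ 0).cop
    rw [pow_zero, one_mul] at this
    exact this.of_mul_right_right
  -- coprimality in `ℤ`
  have hmr : IsCoprime (m : ℤ) (r : ℤ) :=
    Nat.isCoprime_iff_coprime.2 (Nat.Coprime.coprime_mul_right_right hm)
  have hmq : IsCoprime (m : ℤ) (q : ℤ) :=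
    Nat.isCoprime_iff_coprime.2
      (Nat.Coprime.coprime_mul_right_right (Nat.Coprime.coprime_mul_left_right hm))
  have hmn : IsCoprime (m : ℤ) (n : ℤ) :=
    Nat.isCoprime_iff_coprime.2
      (Nat.Coprime.coprime_mul_left_right (Nat.Coprime.coprime_mul_left_right hm))
  have htq : IsCoprime t (q : 𝓞 F) := isCoprime_of_sub_one ht1
  have hqn : IsCoprime (q : ℤ) (n : ℤ) := ht.coprime (by simpa using htq.symm)
  have hqβ : IsCoprime (q : 𝓞 F) β := by
    simpa using hβ.isCoprime_cast hmq.symm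
  have htβ : IsCoprime t β := by
    have h1 : IsCoprime (n : 𝓞 F) β := by simpa using hβ.isCoprime_cast hmn.symm
    exact h1.of_isCoprime_of_dvd_left ht.dvd_n
  obtain ⟨e, he⟩ := unit_density (fun d hd => finite_quot hd) u hu ht
    (Q := (q : 𝓞 F) ^ 2 * β) (mul_ne_zero (pow_ne_zero _ hq.cast_ne_zero) hβ.ne_zero)
  obtain ⟨k₁, hk₁⟩ := hβ.surj a
  obtain ⟨k₂, hk₂⟩ := ht.surj_pow (e + 2) a
  have hk₁c : IsCoprime k₁ (m : ℤ) := by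
    apply hβ.coprime
    exact isCoprime_of_dvd_sub haβ (by rwa [dvd_sub_comm])
  have hk₂c : IsCoprime k₂ ((n : ℤ) ^ (e + 2)) := by
    apply IsCoprime.pow_right
    apply ht.coprime
    exact isCoprime_of_dvd_sub hat
      ((dvd_pow_self t (Nat.succ_ne_zero (e + 1)) : t ∣ t ^ (e + 2)).trans (by rwa [dvd_sub_comm]))
  have hk₃c : IsCoprime (1 + (q : ℤ) ^ 2) ((q : ℤ) ^ 3) :=
    IsCoprime.pow_right ⟨1, -q, by ring⟩
  obtain ⟨r', g, hr'0, hgc, hr'm, hr'n, hr'q, hg⟩ : ∃ (r' : ℕ) (g : ℤ), 0 < r' ∧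
      IsCoprime g (r' : ℤ) ∧ IsCoprime (m : ℤ) r' ∧ IsCoprime (n : ℤ) r' ∧
      IsCoprime (q : ℤ) r' ∧
      (¬ r ∣ q * n → r' = r ∧ ¬ (r : ℤ) ∣ g ^ (Module.finrank ℚ F).factorial - 1) := by
    by_cases hrd : r ∣ q * n
    · refine ⟨1, 1, one_pos, ?_, ?_, ?_, ?_, fun hn => absurd hrd hn⟩ <;>
        simp [isCoprime_one_right]
    · have hrq : ¬ r ∣ q := fun hd => hrd (hd.mul_right _)
      have hrn : ¬ r ∣ n := fun hd => hrd (hd.mul_left _)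
      obtain ⟨g, hg1, hg2⟩ := exists_pow_ne_one hr (Nat.factorial_pos (Module.finrank ℚ F))
        (by
          by_contra hcon
          exact hrq (hq.prime_dvd hr (by omega)))
      refine ⟨r, g, hr.pos, hg1, hmr, ?_, ?_, fun _ => ⟨rfl, hg2⟩⟩
      · exact (Nat.isCoprime_iff_coprime.2 ((Nat.Prime.coprime_iff_not_dvd hr).2 hrn)).symm
      · exact (Nat.isCoprime_iff_coprime.2 ((Nat.Prime.coprime_iff_not_dvd hr).2 hrq)).symm
  obtain ⟨x₁, hx₁, hx₁', hx₁c⟩ := crt_int (hmn.pow_right (n := e + 2)) hk₁c hk₂c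
  obtain ⟨x₂, hx₂, hx₂', hx₂c⟩ := crt_int
    (IsCoprime.mul_left (hmq.pow_right (n := 3)) (hqn.symm.pow (m := e + 2) (n := 3))) hx₁c hk₃c
  obtain ⟨x₃, hx₃, hx₃', hx₃c⟩ := crt_int
    (IsCoprime.mul_left (IsCoprime.mul_left hr'm (hr'n.pow_left (m := e + 2)))
      (hr'q.pow_left (m := 3))) hx₂c hgc
  obtain ⟨l, hl, hrl, hlx⟩ := exists_prime_congr
    (m := m * n ^ (e + 2) * q ^ 3 * r') (k := x₃)
    (by
      have h1 := hβ.pos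
      have h2 := ht.pos
      have h3 := hq.pos
      positivity) (by push_cast; exact hx₃c) r
  push_cast at hlx
  have hl₄ : (r' : ℤ) ∣ l - g := by
    have := ((Dvd.intro_left _ rfl).trans hlx).add hx₃'
    rwa [sub_add_sub_cancel] at this
  have hl₃' : (m : ℤ) * n ^ (e + 2) * q ^ 3 ∣ l - x₂ := by
    have := ((Dvd.intro _ rfl).trans hlx).add hx₃
    rwa [sub_add_sub_cancel] at this
  have hl₃ : (q : ℤ) ^ 3 ∣ l - (1 + (q : ℤ) ^ 2) := by
    have := ((Dvd.intro_left _ rfl).trans hl₃').add hx₂'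
    rwa [sub_add_sub_cancel] at this
  have hl₂' : (m : ℤ) * n ^ (e + 2) ∣ l - x₁ := by
    have := ((Dvd.intro _ rfl).trans hl₃').add hx₂
    rwa [sub_add_sub_cancel] at this
  have hl₂ : (n : ℤ) ^ (e + 2) ∣ l - k₂ := by
    have := ((Dvd.intro_left _ rfl).trans hl₂').add hx₁'
    rwa [sub_add_sub_cancel] at this
  have hl₁ : (m : ℤ) ∣ l - k₁ := by
    have := ((Dvd.intro _ rfl).trans hl₂').add hx₁
    rwa [sub_add_sub_cancel] at this
  -- consequences in `𝓞 F`
  have hlβ : β ∣ (l : 𝓞 F) - a := by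
    have h1 := intCast_dvd_cast (F := F) hl₁
    push_cast at h1
    have h2 := (hβ.dvd_n.trans h1).sub hk₁
    have h3 : (l : 𝓞 F) - k₁ - (a - k₁) = l - a := by ring
    rwa [h3] at h2
  have hlt : t ^ (e + 2) ∣ (l : 𝓞 F) - a := by
    have h1 := intCast_dvd_cast (F := F) hl₂
    push_cast at h1
    have h2 := ((pow_dvd_pow_of_dvd ht.dvd_n (e + 2)).trans h1).sub hk₂
    have h3 : (l : 𝓞 F) - k₂ - (a - k₂) = l - a := by ring
    rwa [h3] at h2
  obtain ⟨w, hw⟩ := hl₃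
  have hlw : (l : ℤ) - 1 = q ^ 2 * (1 + q * w) := by linear_combination hw
  have hlq : (q : 𝓞 F) ^ 2 ∣ (l : 𝓞 F) - 1 := by
    have h1 := intCast_dvd_cast (F := F) (Dvd.intro _ hlw.symm)
    push_cast at h1
    exact h1
  have hpass : ∀ i, Adm (q : 𝓞 F) l (t ^ i * (q * β)) ∧
      sym ρ l (t ^ i * (q * β)) = sym ρ a (t ^ i * (q * β)) := fun i => by
    obtain ⟨v, hv1, hv2⟩ := he i a l hat ((pow_dvd_pow t (by omega)).trans hlt)
    have hvq : (q : 𝓞 F) ^ 2 ∣ (v : 𝓞 F) - 1 := (Dvd.intro _ rfl).trans hv1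
    have hA := (hadmβ i).unit_sq hvq
    have h1 : (q : 𝓞 F) ^ 2 ∣ l - (v : 𝓞 F) ^ 2 * a := by
      have := hlq.sub hA.a1
      rwa [sub_sub_sub_cancel_right] at this
    have h2 : β ∣ l - (v : 𝓞 F) ^ 2 * a := by
      have h3 : (l : 𝓞 F) - (v : 𝓞 F) ^ 2 * a = (l - a) - (v - 1) * ((v + 1) * a) := by ring
      rw [h3]
      exact hlβ.sub (((Dvd.intro_left _ rfl).trans hv1).mul_right _)
    have h3 : t ^ i ∣ l - (v : 𝓞 F) ^ 2 * a := by rwa [dvd_sub_comm]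
    have h4 : (q : 𝓞 F) * (t ^ i * (q * β)) ∣ l - (v : 𝓞 F) ^ 2 * a := by
      have h5 := IsCoprime.mul_dvd (IsCoprime.mul_left (hqβ.pow_left (m := 2))
        (htβ.pow_left (m := i))) (IsCoprime.mul_dvd (htq.symm.pow (m := 2) (n := i)) h1 h3) h2
      convert h5 using 1
      ring
    exact ⟨hA.left h4, (sym_left hk hA h4).trans (sym_unit hk (hadmβ i) hvq)⟩
  have htl : IsCoprime t (l : 𝓞 F) := by
    have := (hpass 1).1.cop
    rw [pow_one] at this
    exact this.of_mul_right_left.symm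
  have hl2 := hl.two_le
  have hlM : 1 < l ^ (Module.finrank ℚ F).factorial :=
    Nat.one_lt_pow (Nat.factorial_pos _).ne' hl2
  refine ⟨(l ^ Module.finrank ℚ F * (l ^ (Module.finrank ℚ F).factorial - 1)) ^
      Module.finrank ℚ F, ?_, fun i => ?_, ?_⟩
  · have : 0 < l ^ (Module.finrank ℚ F).factorial - 1 := by omega
    have := hl.pos
    positivity
  · rw [← hsymb, ← hsymb, ← (hpass _).2, ← (hpass _).2]
    refine sym_right hk (hpass i).1 ?_
    obtain ⟨s, hs⟩ := prime_dvd_pow_sub_one hl htl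
    rw [pow_add]
    exact ⟨t ^ i * β * s, by linear_combination (t ^ i * (q * β)) * hs⟩
  · intro k hkd
    refine prime_pow_dvd_pow hr ?_ ?_ ?_ hkd
    · exact mul_ne_zero (pow_ne_zero _ hl.ne_zero) (by omega)
    · exact mul_ne_zero (mul_ne_zero (pow_ne_zero _ hq.pos.ne') ht.pos.ne')
        (Nat.factorial_pos _).ne'
    · intro j hj
      have hcop : Nat.Coprime (r ^ j) (l ^ Module.finrank ℚ F) :=
        Nat.Coprime.pow _ _ ((Nat.coprime_primes hr hl).2 hrl.ne)
      have h1 : r ^ j ∣ l ^ (Module.finrank ℚ F).factorial - 1 := hcop.dvd_of_dvd_mul_left hj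
      have h2 : (r : ℤ) ^ j ∣ (l : ℤ) ^ (Module.finrank ℚ F).factorial - 1 := by
        have := Int.natCast_dvd_natCast.2 h1
        rw [Nat.cast_sub hlM.le] at this
        exact_mod_cast this
      -- `l - 1` is `n` times an integer prime to `n`, because `l ≡ 1 + t` modulo `t ^ 2`
      obtain ⟨j', hj', hjn⟩ : ∃ j' : ℤ, (l : ℤ) - 1 = n * j' ∧ IsCoprime j' n := by
        obtain ⟨s, hs⟩ := ((pow_dvd_pow t (by omega : 2 ≤ e + 2)).trans hlt).add ha
        have h3 : t ∣ (((l : ℤ) - 1 : ℤ) : 𝓞 F) := by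
          push_cast
          exact ⟨1 + t * s, by linear_combination hs⟩
        obtain ⟨j', hj'⟩ := ht.dvd _ h3
        refine ⟨j', hj', ht.coprime ?_⟩
        obtain ⟨t', hn, _⟩ := ht.cof
        have h4 : t * (t' * j') = t * (1 + t * s) := by
          have := congrArg (Int.cast : ℤ → 𝓞 F) hj'
          push_cast at this
          rw [hn] at this
          linear_combination hs - this
        have h5 := mul_left_cancel₀ ht.ne_zero h4
        exact ⟨t', -s, by linear_combination h5⟩
      have h6 := val_bound hr hq.factorial_dvd hlw hj' hjn (fun hnd => by
        obtain ⟨hrr, hg'⟩ := hg hnd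
        intro hd
        apply hg'
        rw [hrr] at hl₄
        have h7 := hl₄.trans (sub_dvd_pow_sub_pow (l : ℤ) g (Module.finrank ℚ F).factorial)
        have h8 := hd.sub h7
        have h9 : (l : ℤ) ^ (Module.finrank ℚ F).factorial - 1 -
          (l ^ (Module.finrank ℚ F).factorial - g ^ (Module.finrank ℚ F).factorial) =
            g ^ (Module.finrank ℚ F).factorial - 1 := by ring
        rwa [h9] at h8) h2
      exact_mod_cast h6

/-- Multiplying the second entry by `t ^ E` does not change the symbol of a row whose first entry
is `1 + t` modulo `t ^ 2`. -/
theorem core {q : ℕ} (hq : Lvl F q) (u : (𝓞 F)ˣ) (hu : ∀ k : ℕ, 0 < k → u ^ k ≠ 1)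
    {C : Type*} [Group C] {ρ : Gs (q : 𝓞 F) →* C} (hk : Kills ρ) {t : 𝓞 F} {n : ℕ} (ht : Good t n)
    (ht1 : (q : 𝓞 F) ^ 2 ∣ t - 1) {a b : 𝓞 F} (h : Adm (q : 𝓞 F) a b)
    (ha : t ^ 2 ∣ a - (1 + t)) : sym ρ a (t ^ expo F q n * b) = sym ρ a b := by
  have hE : 0 < expo F q n := by
    have h1 := hq.pos
    have h2 := ht.pos
    have h3 := Nat.factorial_pos (Module.finrank ℚ F)
    rw [expo]
    positivity
  have := period_of_primes (fun i => sym ρ a (t ^ i * b)) hE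
    (fun r hr => core_period hq u hu hk ht ht1 h ha hr) 0
  simpa using this

end Core

/-! ### Conjugation by matrices with a good corner -/

section Chain

variable {R : Type*} [CommRing R]

theorem cancel_det [IsDomain R] {M M' N : Matrix (Fin 2) (Fin 2) R} (hN : N.det ≠ 0)
    (h : M * N = M' * N) : M = M' := by
  have := congrArg (· * adjugate N) h
  simp only [Matrix.mul_assoc, mul_adjugate, Matrix.mul_smul, Matrix.mul_one] at this
  ext i j
  exact mul_left_cancel₀ hN (congrFun₂ this i j)

theorem mat_eq (x : SpecialLinearGroup (Fin 2) R) :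
    x.1 = !![x.1 0 0, x.1 0 1; x.1 1 0, x.1 1 1] := Matrix.eta_fin_two _

variable {q : R} {C : Type*} [Group C] {ρ : Gs q →* C}

/-- First half of the chain: `x ↦ E₁₂(z / t) x E₁₂(-z / t)` preserves `ρ` when the lower left entry
of `x` is highly divisible by `t`. -/
theorem chain_upper (hk : Kills ρ) {t : R} {e : ℕ} (ht1 : q ^ 2 ∣ t - 1)
    (hcore : ∀ {a b : R}, Adm q a b → t ^ 2 ∣ a - (1 + t) →
      sym ρ a (t ^ (e + 3) * b) = sym ρ a b) {z : R} (hz : q ∣ z) (x : Gs q)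
    (hc : t ^ (e + 3) ∣ x.1.1 1 0) (ha : t ^ 2 ∣ x.1.1 0 0 - (1 + t)) :
    ∃ x₁ : Gs q, ρ x₁ = ρ x ∧ !![t, z; 0, t] * x.1.1 = x₁.1.1 * !![t, z; 0, t] := by
  obtain ⟨z₀, rfl⟩ := hz
  have hdet := det_eq x.1
  obtain ⟨hb0, hc0, ha1, hd1⟩ := x.2
  set a := x.1.1 0 0 with hadef
  set b := x.1.1 0 1 with hbdef
  set c := x.1.1 1 0 with hcdef
  set d := x.1.1 1 1 with hddef
  obtain ⟨c', hc'⟩ := hc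
  obtain ⟨m, hm⟩ := ha
  have htq : IsCoprime t q := isCoprime_of_sub_one ht1
  have hqc' : q ∣ c' := by
    rw [hc'] at hc0
    exact (htq.symm.pow_right).dvd_of_dvd_mul_left hc0
  obtain ⟨δ, hδ⟩ : ∃ δ, d - a = t * δ :=
    ⟨b * t ^ (e + 2) * c' - (1 + t * m) * (d + 1), by
      rw [hc'] at hdet
      linear_combination hdet + (-d - 1) * hm⟩
  have e₁ : (a + q * z₀ * t ^ (e + 2) * c') * (d - q * z₀ * t ^ (e + 2) * c') -
      (b + q * z₀ * δ - (q * z₀) ^ 2 * t ^ (e + 1) * c') * c = 1 := by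
    rw [hc'] at hdet ⊢
    linear_combination hdet + q * z₀ * t ^ (e + 2) * c' * hδ
  have hx₁ : mk2 _ _ _ _ e₁ ∈ Gs q := by
    apply mem_Gs_of
    · rw [mk2_01]
      obtain ⟨b', hb'⟩ := hb0
      exact ⟨b' + z₀ * δ - q * z₀ ^ 2 * t ^ (e + 1) * c', by rw [hb']; ring⟩
    · exact hc0
    · rw [mk2_00]
      obtain ⟨a', ha'⟩ := ha1
      obtain ⟨c'', hc''⟩ := hqc'
      exact ⟨a' + z₀ * t ^ (e + 2) * c'', by rw [hc'']; linear_combination ha'⟩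
  refine ⟨⟨_, hx₁⟩, ?_, ?_⟩
  · have e₂ : a * d - t ^ (e + 3) * b * c' = 1 := by
      rw [hc'] at hdet
      linear_combination hdet
    have hX : mk2 _ _ _ _ e₂ ∈ Gs q := mem_Gs_of (hb0.mul_left _) hqc' ha1
    have h1 : t ^ 2 ∣ (a + q * z₀ * t ^ (e + 2) * c') - (1 + t) :=
      ⟨m + q * z₀ * t ^ e * c', by linear_combination hm⟩
    rw [rho_eq_sym hk]
    change sym ρ (a + q * z₀ * t ^ (e + 2) * c')
      (b + q * z₀ * δ - (q * z₀) ^ 2 * t ^ (e + 1) * c') = _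
    have hA : Adm q (a + q * z₀ * t ^ (e + 2) * c')
        (b + q * z₀ * δ - (q * z₀) ^ 2 * t ^ (e + 1) * c') := adm_row ⟨_, hx₁⟩
    rw [← hcore hA h1, rho_eq_sym hk x, ← hcore (adm_row x) (Dvd.intro _ hm.symm)]
    change _ = sym ρ a (t ^ (e + 3) * b)
    have hXs : sym ρ a (t ^ (e + 3) * b) = ρ ⟨_, hX⟩ := sym_eq_rho hk rfl rfl
    rw [hXs, sym_eq_rho hk (x := eU q (z₀ * t ^ (e + 2)) * ⟨_, hX⟩ * eU q (-(z₀ * t ^ (e + 2))))]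
    · simp [rho_eU hk]
    · simp only [Subgroup.coe_mul, mul_apply2, eU, mk2_00, mk2_01, mk2_10, mk2_11]
      ring
    · simp only [Subgroup.coe_mul, mul_apply2, eU, mk2_00, mk2_01, mk2_10, mk2_11]
      linear_combination (q * z₀ * t ^ (e + 2)) * hδ
  · rw [mat_eq x.1]
    change _ = !![_, _; _, _] * _
    simp only [← hadef, ← hbdef, ← hcdef, ← hddef]
    ext i j
    fin_cases i <;> fin_cases j <;>
      simp [Matrix.mul_apply, Fin.sum_univ_two]
    · rw [hc']; ring
    · linear_combination q * z₀ * hδ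
    · ring
    · rw [hc']; ring

/-- Conjugation by `(t ^ 2, t B; t C, B C + 1)`, a matrix of determinant `t ^ 2`, preserves `ρ` on
the elements that are suitably upper triangular modulo a high power of `t` and have a lower
triangular conjugate. -/
theorem chain [IsDomain R] (hk : Kills ρ) {t : R} {e : ℕ} (ht0 : t ≠ 0) (ht1 : q ^ 2 ∣ t - 1)
    (hcore : ∀ {a b : R}, Adm q a b → t ^ 2 ∣ a - (1 + t) →
      sym ρ a (t ^ (e + 3) * b) = sym ρ a b) {B D : R} (hB : q ∣ B) (hD : q ∣ D) (x x₃ : Gs q)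
    (hc : t ^ (e + 3) ∣ x.1.1 1 0) (ha : t ^ 2 ∣ x.1.1 0 0 - (1 + t))
    (hb₃ : t ^ (e + 3) ∣ x₃.1.1 0 1) (ha₃ : t ^ 2 ∣ x₃.1.1 0 0 - (1 + t))
    (h : !![t ^ 2, t * B; t * D, B * D + 1] * x.1.1 =
      x₃.1.1 * !![t ^ 2, t * B; t * D, B * D + 1]) : ρ x₃ = ρ x := by
  obtain ⟨s₀, hs₀⟩ := ht1
  obtain ⟨x₁, hρ₁, hx₁⟩ := chain_upper hk (Dvd.intro _ hs₀.symm) hcore (hB.sub (dvd_refl q)) x hc ha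
  -- `P = E₁₂(q) E₂₁(q s₀)` has rows `(t, q)` and `(q s₀, 1)`
  set P : Gs q := eU q 1 * eL q s₀ with hP
  have hPm : P.1.1 = !![t, q; q * s₀, 1] := by
    rw [mat_eq P.1, hP]
    simp only [Subgroup.coe_mul, mul_apply2, eU, eL, mk2_00, mk2_01, mk2_10, mk2_11]
    congr 1
    ext i j
    fin_cases i <;> fin_cases j <;> simp
    linear_combination -hs₀
  set x₂ : Gs q := P * x₁ * P⁻¹ with hx₂
  have hρ₂ : ρ x₂ = ρ x := by
    rw [hx₂, map_mul, map_mul, map_inv, hP, map_mul, rho_eU hk, rho_eL hk, hρ₁]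
    simp
  have hPx : P.1.1 * x₁.1.1 = x₂.1.1 * P.1.1 := by
    have : P * x₁ = x₂ * P := by rw [hx₂]; group
    exact congrArg (fun y : Gs q => y.1.1) this
  set K : Matrix (Fin 2) (Fin 2) R := !![t, B - q; 0, t] with hK
  set L : Matrix (Fin 2) (Fin 2) R := !![t, 0; D - q * s₀, t] with hL
  have hg : t • !![t ^ 2, t * B; t * D, B * D + 1] = L * (P.1.1 * K) := by
    rw [hPm, hK, hL]
    ext i j
    fin_cases i <;> fin_cases j <;>
      simp [Matrix.mul_apply, Fin.sum_univ_two, -mul_eq_mul_left_iff]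
    · ring
    · ring
    · ring
    · linear_combination (-t) * hs₀
  have h1 : L * x₂.1.1 = x₃.1.1 * L := by
    apply cancel_det (N := P.1.1 * K)
    · rw [det_mul, P.1.2, hK, det_fin_two_of]
      simpa using ht0
    · have h2 : L * (P.1.1 * K) * x.1.1 = x₃.1.1 * (L * (P.1.1 * K)) := by
        rw [← hg, Matrix.smul_mul, Matrix.mul_smul, h]
      calc L * x₂.1.1 * (P.1.1 * K) = L * (x₂.1.1 * P.1.1) * K := by
            simp only [Matrix.mul_assoc]
        _ = L * P.1.1 * (x₁.1.1 * K) := by rw [← hPx]; simp only [Matrix.mul_assoc]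
        _ = L * (P.1.1 * K) * x.1.1 := by rw [← hx₁]; simp only [Matrix.mul_assoc]
        _ = x₃.1.1 * L * (P.1.1 * K) := by rw [h2]; simp only [Matrix.mul_assoc]
  have h01 : x₂.1.1 0 1 = x₃.1.1 0 1 := by
    have := congrFun₂ h1 0 1
    rw [hL] at this
    simp [Matrix.mul_apply, Fin.sum_univ_two] at this
    rw [mul_comm] at this
    exact mul_right_cancel₀ ht0 this
  have h00 : t * x₂.1.1 0 0 = x₃.1.1 0 0 * t + x₃.1.1 0 1 * (D - q * s₀) := by
    have := congrFun₂ h1 0 0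
    rw [hL] at this
    simpa [Matrix.mul_apply, Fin.sum_univ_two] using this
  obtain ⟨b', hb'⟩ := hb₃
  obtain ⟨D₀, rfl⟩ := hD
  have h00' : x₂.1.1 0 0 = x₃.1.1 0 0 + q * (D₀ - s₀) * t ^ (e + 2) * b' := by
    apply mul_left_cancel₀ ht0
    rw [h00, hb']
    ring
  have htq : IsCoprime t q := isCoprime_of_sub_one (Dvd.intro _ hs₀.symm)
  have hA₃ : Adm q (x₃.1.1 0 0) b' := by
    have := adm_row x₃
    rw [hb'] at this
    exact ⟨this.a1, (htq.symm.pow_right).dvd_of_dvd_mul_left this.b0, this.cop.of_mul_right_right⟩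
  have hdv : q * b' ∣ x₂.1.1 0 0 - x₃.1.1 0 0 :=
    ⟨(D₀ - s₀) * t ^ (e + 2), by rw [h00']; ring⟩
  have hA₂ : Adm q (x₂.1.1 0 0) b' := hA₃.left hdv
  have ha₂ : t ^ 2 ∣ x₂.1.1 0 0 - (1 + t) := by
    obtain ⟨m, hm⟩ := ha₃
    exact ⟨m + q * (D₀ - s₀) * t ^ e * b', by rw [h00']; linear_combination hm⟩
  rw [← hρ₂, rho_eq_sym hk x₂, rho_eq_sym hk x₃, h01, hb', hcore hA₂ ha₂, hcore hA₃ ha₃,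
    sym_left hk hA₃ hdv]

end Chain

/-! ### The image of `ρ` is commutative -/

section Comm

variable {F : Type*} [Field F] [NumberField F]

theorem Lvl.three_le_expo {q : ℕ} (hq : Lvl F q) {n : ℕ} (hn : 0 < n) : ∃ e, expo F q n = e + 3 := by
  have h1 : 3 ≤ expo F q n := by
    have h4 : 4 ≤ q := Nat.le_of_dvd hq.pos hq.four
    have h5 : 4 ≤ q ^ 2 * n * (Module.finrank ℚ F).factorial := by
      have := Nat.factorial_pos (Module.finrank ℚ F)
      calc 4 ≤ q ^ 2 := by nlinarith
        _ ≤ q ^ 2 * n := Nat.le_mul_of_pos_right _ hn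
        _ ≤ _ := Nat.le_mul_of_pos_right _ this
    rw [expo]
    have h6 := Nat.le_self_pow (Module.finrank_pos (R := ℚ) (M := F)).ne'
      (q ^ 2 * n * (Module.finrank ℚ F).factorial)
    omega
  exact ⟨expo F q n - 3, by omega⟩

/-- Elementary operations bring any element into a prescribed upper triangular shape modulo `T`. -/
theorem adjust {q : 𝓞 F} {C : Type*} [Group C] {ρ : Gs q →* C} (hk : Kills ρ) {T α β : 𝓞 F}
    (hT0 : T ≠ 0) (hTq : IsCoprime T q) (hα : IsCoprime α T) (x₀ : Gs q) :
    ∃ x : Gs q, ρ x = ρ x₀ ∧ T ∣ x.1.1 0 0 - α ∧ T ∣ x.1.1 0 1 - β ∧ T ∣ x.1.1 1 0 := by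
  have h₀ := adm_row x₀
  set a := x₀.1.1 0 0 with ha
  obtain ⟨b', hb'⟩ := h₀.b0
  have hcop : IsCoprime a b' := by
    have := h₀.cop
    rw [hb'] at this
    exact this.of_mul_right_right
  obtain ⟨y, hy⟩ := exists_coprime_add hcop hT0
  have hd₁ : q * a ∣ q * (b' + y * a) - x₀.1.1 0 1 := ⟨y, by rw [hb']; ring⟩
  have h₁ := h₀.right hd₁
  have hbT : IsCoprime (q * (q * (b' + y * a))) T :=
    IsCoprime.mul_left hTq.symm (IsCoprime.mul_left hTq.symm hy)
  obtain ⟨a₁, ha₁, ha₁'⟩ := exists_crt hbT a α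
  have h₂ := h₁.left ha₁
  have ha₁T : IsCoprime a₁ T := isCoprime_of_dvd_sub hα ha₁'
  obtain ⟨b₂, hb₂, hb₂'⟩ := exists_crt (IsCoprime.mul_left hTq.symm ha₁T)
    (q * (b' + y * a)) β
  have h₃ := h₂.right hb₂
  obtain ⟨x, hx0, hx1, hx2⟩ := h₃.exists_lower ha₁T
  refine ⟨x, ?_, by rwa [hx0], by rwa [hx1], hx2⟩
  rw [← sym_eq_rho hk hx0 hx1, sym_right hk h₂ hb₂, sym_left hk h₁ ha₁, sym_right hk h₀ hd₁,
    ← rho_eq_sym hk]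

/-- After `adjust`, conjugation of `x₀` by `y` is an instance of `chain`, since `t • y` is the matrix
considered there, `t` being the upper left entry of `y`. -/
theorem rho_comm_good {q : ℕ} (hq : Lvl F q) (u : (𝓞 F)ˣ) (hu : ∀ k : ℕ, 0 < k → u ^ k ≠ 1)
    {C : Type*} [Group C] {ρ : Gs (q : 𝓞 F) →* C} (hk : Kills ρ) {n : ℕ} (y x₀ : Gs (q : 𝓞 F))
    (ht : Good (y.1.1 0 0) n) : ρ y * ρ x₀ * (ρ y)⁻¹ = ρ x₀ := by
  obtain ⟨e, he⟩ := hq.three_le_expo ht.pos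
  obtain ⟨hb0, hc0, ht1, -⟩ := y.2
  have hdet := det_eq y.1
  have ht0 := ht.ne_zero
  set t := y.1.1 0 0 with htdef
  have hcore : ∀ {a b : 𝓞 F}, Adm (q : 𝓞 F) a b → t ^ 2 ∣ a - (1 + t) →
      sym ρ a (t ^ (e + 3) * b) = sym ρ a b := fun h ha => by
    rw [← he]
    exact core hq u hu hk ht ht1 h ha
  obtain ⟨α', κ, hα⟩ : IsCoprime (1 + t) (t ^ (e + 3)) :=
    IsCoprime.pow_right ⟨1, -1, by ring⟩
  obtain ⟨x, hρx, ⟨xa, hxa⟩, ⟨xb, hxb⟩, ⟨xc, hxc⟩⟩ := adjust hk (T := t ^ (e + 3)) (α := 1 + t)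
    (β := y.1.1 0 1 * (t ^ (e + 2) * κ + α' + 1)) (pow_ne_zero _ ht0)
    (isCoprime_of_sub_one ht1).pow_left ⟨α', κ, hα⟩ x₀
  have hdx := det_eq x.1
  rw [← hρx, ← map_inv, ← map_mul, ← map_mul]
  have hyx : y * x = (y * x * y⁻¹) * y := by group
  have hyx' := congrArg (fun w : Gs (q : 𝓞 F) => w.1.1) hyx
  set x₃ := y * x * y⁻¹ with hx₃
  obtain ⟨xd, hxd⟩ : t ^ (e + 3) ∣ x.1.1 1 1 - α' := by
    refine ⟨κ * x.1.1 1 1 - α' * xa * x.1.1 1 1 + α' * x.1.1 0 1 * xc, ?_⟩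
    linear_combination α' * hdx - x.1.1 1 1 * hα + α' * x.1.1 0 1 * hxc
      - α' * x.1.1 1 1 * hxa
  refine chain hk ht0 ht1 hcore hb0 hc0 x x₃ (Dvd.intro _ hxc.symm) ?_ ?_ ?_ ?_
  · exact ⟨t ^ (e + 1) * xa, by linear_combination hxa⟩
  · rw [hx₃]
    simp only [Subgroup.coe_mul, Subgroup.coe_inv, mul_apply2, inv_01, inv_11, ← htdef]
    refine ⟨t * (t * xb + y.1.1 0 1 * (xd - xa)) - y.1.1 0 1 ^ 2 * xc, ?_⟩
    linear_combination t ^ 2 * hxb + t * y.1.1 0 1 * hxd - t * y.1.1 0 1 * hxa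
      - y.1.1 0 1 ^ 2 * hxc + t * y.1.1 0 1 * hα
  · rw [hx₃]
    simp only [Subgroup.coe_mul, Subgroup.coe_inv, mul_apply2, inv_00, inv_10, ← htdef]
    refine ⟨t ^ (e + 1) * (t * y.1.1 1 1 * xa + y.1.1 0 1 * y.1.1 1 1 * xc
      - y.1.1 1 0 * (t * xb + y.1.1 0 1 * xd)), ?_⟩
    linear_combination t * y.1.1 1 1 * hxa + y.1.1 0 1 * y.1.1 1 1 * hxc
      - y.1.1 1 0 * t * hxb - y.1.1 1 0 * y.1.1 0 1 * hxd + (1 + t) * hdet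
      - y.1.1 1 0 * y.1.1 0 1 * hα
  · have hg : !![t ^ 2, t * y.1.1 0 1; t * y.1.1 1 0, y.1.1 0 1 * y.1.1 1 0 + 1] = t • y.1.1 := by
      rw [mat_eq y.1, ← htdef]
      refine Matrix.ext fun i j => ?_
      fin_cases i <;> fin_cases j <;> simp [-mul_eq_mul_left_iff]
      · ring
      · linear_combination -hdet
    rw [hg, Matrix.smul_mul, Matrix.mul_smul]
    congr 1

/-- The image of `ρ` is commutative: right multiplication by an elementary matrix makes the upper
left entry good. -/
theorem rho_comm {q : ℕ} (hq : Lvl F q) (u : (𝓞 F)ˣ) (hu : ∀ k : ℕ, 0 < k → u ^ k ≠ 1)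
    {C : Type*} [Group C] {ρ : Gs (q : 𝓞 F) →* C} (hk : Kills ρ) (y x : Gs (q : 𝓞 F)) :
    ρ y * ρ x = ρ x * ρ y := by
  suffices H : ∃ (y' : Gs (q : 𝓞 F)) (n : ℕ), ρ y' = ρ y ∧ Good (y'.1.1 0 0) n by
    obtain ⟨y', n, h1, h2⟩ := H
    have := rho_comm_good hq u hu hk y' x h2
    rw [h1] at this
    exact mul_inv_eq_iff_eq_mul.1 this
  have key : ∀ y : Gs (q : 𝓞 F), y.1.1 0 1 ≠ 0 →
      ∃ (y' : Gs (q : 𝓞 F)) (n : ℕ), ρ y' = ρ y ∧ Good (y'.1.1 0 0) n := fun y hy => by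
    have hA := adm_row y
    obtain ⟨t, n, ht, ⟨w, hw⟩, -⟩ := exists_good
      (IsCoprime.mul_left (isCoprime_of_sub_one hA.a1).symm hA.cop.symm)
      (mul_ne_zero hq.cast_ne_zero hy) one_pos
    refine ⟨y * eL _ w, n, by rw [map_mul, rho_eL hk, mul_one], ?_⟩
    have : (y * eL (q : 𝓞 F) w).1.1 0 0 = t := by
      simp only [Subgroup.coe_mul, mul_apply2, eL, mk2_00, mk2_10]
      linear_combination -hw
    rwa [this]
  by_cases hy : y.1.1 0 1 = 0
  · obtain ⟨y', n, h1, h2⟩ := key (y * eU _ 1) (by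
      simp only [Subgroup.coe_mul, mul_apply2, eU, mk2_01, mk2_11, hy]
      simpa using ⟨hq.ne_zero_of_sub_one y.2.2.2.1, hq.pos.ne'⟩)
    exact ⟨y', n, by rw [h1, map_mul, rho_eU hk, mul_one], h2⟩
  · exact key y hy

end Comm

/-! ### Torsion-free commutative quotients are trivial -/

section TorsionFree

variable {F : Type*} [Field F] [NumberField F]

theorem exists_pow_congr_one {a d : 𝓞 F} (hd : d ≠ 0) (h : IsCoprime a d) :
    ∃ k : ℕ, 0 < k ∧ d ∣ a ^ k - 1 := by
  have := finite_quot hd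
  obtain ⟨v, hv⟩ : IsUnit (Ideal.Quotient.mk (Ideal.span {d}) a) := by
    obtain ⟨r, s, hrs⟩ := h
    refine IsUnit.of_mul_eq_one (Ideal.Quotient.mk _ r) ?_
    rw [← map_mul, ← map_one (Ideal.Quotient.mk (Ideal.span {d})), Ideal.Quotient.eq,
      Ideal.mem_span_singleton]
    exact ⟨-s, by linear_combination hrs⟩
  refine ⟨orderOf v, orderOf_pos v, ?_⟩
  rw [← Ideal.mem_span_singleton, ← Ideal.Quotient.eq, map_pow, ← hv, map_one, ← Units.val_pow_eq_pow_val,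
    pow_orderOf_eq_one, Units.val_one]

variable {q : ℕ} {A : Type*} [CommGroup A] {ρ : Gs (q : 𝓞 F) →* A}

/-- Powers of a matrix that is diagonal modulo `T`. -/
theorem pow_diag {T : 𝓞 F} (x : Gs (q : 𝓞 F)) (hb : T ∣ x.1.1 0 1) (hc : T ∣ x.1.1 1 0) (k : ℕ) :
    T ∣ (x ^ k).1.1 0 1 ∧ T ∣ (x ^ k).1.1 1 0 ∧ T ∣ (x ^ k).1.1 0 0 - x.1.1 0 0 ^ k := by
  induction k with
  | zero => simp
  | succ k ih =>
    obtain ⟨⟨r, hr⟩, ⟨s, hs⟩, ⟨w, hw⟩⟩ := ih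
    obtain ⟨b, hb⟩ := hb
    obtain ⟨c, hc⟩ := hc
    rw [pow_succ]
    simp only [Subgroup.coe_mul, mul_apply2] at *
    refine ⟨⟨(x ^ k).1.1 0 0 * b + r * x.1.1 1 1, ?_⟩,
      ⟨s * x.1.1 0 0 + (x ^ k).1.1 1 1 * c, ?_⟩, ⟨w * x.1.1 0 0 + r * x.1.1 1 0, ?_⟩⟩
    · rw [hb, hr]; ring
    · rw [hc, hs]; ring
    · rw [hr]; linear_combination x.1.1 0 0 * hw

/-- For a torsion-free commutative target, the symbol does not see squares of good elements in its
second entry: these squares come from conjugation by `diag (t, t⁻¹)`, which is compared with the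
conjugations handled by `chain`. -/
theorem sym_sq (hq : Lvl F q) (u : (𝓞 F)ˣ) (hu : ∀ k : ℕ, 0 < k → u ^ k ≠ 1)
    (htf : ∀ (c : A) (k : ℕ), 0 < k → c ^ k = 1 → c = 1) (hk : Kills ρ) {t : 𝓞 F} {n : ℕ}
    (ht : Good t n) (ht1 : (q : 𝓞 F) ^ 2 ∣ t - 1) {a b : 𝓞 F} (h : Adm (q : 𝓞 F) a b)
    (hat : IsCoprime a t) : sym ρ a (t ^ 2 * b) = sym ρ a b := by
  obtain ⟨e, he⟩ := hq.three_le_expo ht.pos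
  have ht0 := ht.ne_zero
  have hcore : ∀ {a b : 𝓞 F}, Adm (q : 𝓞 F) a b → t ^ 2 ∣ a - (1 + t) →
      sym ρ a (t ^ (e + 3) * b) = sym ρ a b := fun h ha => by
    rw [← he]
    exact core hq u hu hk ht ht1 h ha
  have htq : IsCoprime t (q : 𝓞 F) := isCoprime_of_sub_one ht1
  set g : Matrix (Fin 2) (Fin 2) (𝓞 F) := !![t ^ 2, t * 0; t * 0, 0 * 0 + 1] with hg
  -- conjugates by `diag (t, t⁻¹)`
  have hconj : ∀ x : Gs (q : 𝓞 F), t ^ (e + 3) ∣ x.1.1 1 0 → ∃ x' : Gs (q : 𝓞 F),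
      x'.1.1 0 0 = x.1.1 0 0 ∧ x'.1.1 0 1 = t ^ 2 * x.1.1 0 1 ∧ g * x.1.1 = x'.1.1 * g := by
    rintro x ⟨c, hc⟩
    have hdet := det_eq x.1
    have hqc : (q : 𝓞 F) ∣ c := by
      have := x.2.2.1
      rw [hc] at this
      exact (htq.symm.pow_right).dvd_of_dvd_mul_left this
    have e₁ : x.1.1 0 0 * x.1.1 1 1 - (t ^ 2 * x.1.1 0 1) * (t ^ (e + 1) * c) = 1 := by
      rw [hc] at hdet
      linear_combination hdet
    refine ⟨⟨mk2 _ _ _ _ e₁, mem_Gs_of (x.2.1.mul_left _) (hqc.mul_left _) x.2.2.2.1⟩, rfl, rfl, ?_⟩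
    rw [hg]
    change _ = !![_, _; _, _] * _
    refine Matrix.ext fun i j => ?_
    fin_cases i <;> fin_cases j <;>
      simp [Matrix.mul_apply, Fin.sum_univ_two, -mul_eq_mul_left_iff]
    · ring
    · rw [hc]; ring
  have hspec : ∀ x x' : Gs (q : 𝓞 F), t ^ (e + 3) ∣ x.1.1 0 1 → t ^ (e + 3) ∣ x.1.1 1 0 →
      t ^ 2 ∣ x.1.1 0 0 - (1 + t) → g * x.1.1 = x'.1.1 * g → ρ x' = ρ x := by
    intro x x' hb hc ha hx
    obtain ⟨y, hy0, hy1, hy⟩ := hconj x hc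
    have hyx : y = x' := by
      apply Subtype.ext
      apply Subtype.ext
      apply cancel_det (N := g)
      · rw [hg, det_fin_two_of]
        simpa using ht0
      · rw [← hy, ← hx]
    subst hyx
    refine chain hk ht0 ht1 hcore (dvd_zero _) (dvd_zero _) x y hc ha ?_ ?_ hx
    · rw [hy1]
      exact hb.mul_left _
    · rwa [hy0]
  -- reduction to a matrix that is diagonal modulo `t ^ (e + 3)`
  have haT : IsCoprime a (t ^ (e + 3)) := hat.pow_right
  obtain ⟨b', hb', hb'T⟩ := exists_crt (IsCoprime.mul_left (htq.symm.pow_right) haT) b 0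
  rw [sub_zero] at hb'T
  have h' := h.right hb'
  have ht2b : Adm (q : 𝓞 F) a (t ^ 2 * b) :=
    ⟨h.a1, h.b0.mul_left _, hat.pow_right.mul_right h.cop⟩
  have h1 : sym ρ a (t ^ 2 * b') = sym ρ a (t ^ 2 * b) := by
    apply sym_right hk ht2b
    rw [← mul_sub]
    exact hb'.mul_left _
  rw [← h1, ← sym_right hk h hb']
  obtain ⟨x, hx0, hx1, hx2⟩ := h'.exists_lower haT
  obtain ⟨x', hy0, hy1, hx'⟩ := hconj x hx2
  rw [hx0] at hy0
  rw [hx1] at hy1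
  rw [sym_eq_rho hk hx0 hx1, sym_eq_rho hk hy0 hy1]
  -- an auxiliary matrix with upper left entry `1 + t` modulo `t ^ 2`
  obtain ⟨a₀, ha₀, ha₀t⟩ := exists_crt (htq.symm.pow (m := 2) (n := 2)) 1 (1 + t)
  have ha₀T : IsCoprime a₀ (t ^ (e + 3)) := (coprime_of_congr ha₀t).pow_right
  have hA₀ : Adm (q : 𝓞 F) a₀ (q * t ^ (e + 3)) :=
    ⟨ha₀, Dvd.intro _ rfl, (isCoprime_of_sub_one ha₀).mul_right ha₀T⟩
  obtain ⟨w, hw0, hw1, hw2⟩ := hA₀.exists_lower ha₀T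
  have hw1T : t ^ (e + 3) ∣ w.1.1 0 1 := by rw [hw1]; exact Dvd.intro_left _ rfl
  obtain ⟨w', hw'0, hw'1, hw'⟩ := hconj w hw2
  obtain ⟨k, hk0, ⟨ka, hka⟩⟩ := exists_pow_congr_one (pow_ne_zero 2 ht0) (hat.pow_right (n := 2))
  have hpow : ∀ k : ℕ, g * (x ^ k).1.1 = (x' ^ k).1.1 * g := by
    intro k
    induction k with
    | zero => simp
    | succ k ih =>
      have e1 : (x ^ (k + 1)).1.1 = (x ^ k).1.1 * x.1.1 := by rw [pow_succ]; rfl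
      have e2 : (x' ^ (k + 1)).1.1 = (x' ^ k).1.1 * x'.1.1 := by rw [pow_succ]; rfl
      rw [e1, e2, ← Matrix.mul_assoc, ih, Matrix.mul_assoc, hx', Matrix.mul_assoc]
  have hxb : t ^ (e + 3) ∣ x.1.1 0 1 := by rwa [hx1]
  obtain ⟨⟨xb, hxb⟩, ⟨xc, hxc⟩, ⟨xa, hxa⟩⟩ := pow_diag x hxb hx2 k
  have hρw : ρ w' = ρ w := hspec w w' hw1T hw2 (by rwa [hw0]) hw'
  have hρ : ρ (x' ^ k * w') = ρ (x ^ k * w) := by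
    obtain ⟨w₁, hw₁⟩ := hw1T
    obtain ⟨w₂, hw₂⟩ := hw2
    obtain ⟨w₃, hw₃⟩ := ha₀t
    apply hspec
    · simp only [Subgroup.coe_mul, mul_apply2]
      exact ⟨(x ^ k).1.1 0 0 * w₁ + xb * w.1.1 1 1, by rw [hw₁, hxb]; ring⟩
    · simp only [Subgroup.coe_mul, mul_apply2]
      exact ⟨xc * w.1.1 0 0 + (x ^ k).1.1 1 1 * w₂, by rw [hw₂, hxc]; ring⟩
    · rw [Subgroup.coe_mul, mul_apply2, hw0, hxb]
      rw [hx0] at hxa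
      refine ⟨t ^ (e + 1) * xa * a₀ + ka * a₀ + w₃ + t ^ (e + 1) * xb * w.1.1 1 0, ?_⟩
      linear_combination a₀ * hxa + a₀ * hka + hw₃
    · have e1 : (x ^ k * w).1.1 = (x ^ k).1.1 * w.1.1 := rfl
      have e2 : (x' ^ k * w').1.1 = (x' ^ k).1.1 * w'.1.1 := rfl
      rw [e1, e2, ← Matrix.mul_assoc, hpow, Matrix.mul_assoc, hw', Matrix.mul_assoc]
  rw [map_mul, map_mul, hρw, mul_left_inj, map_pow, map_pow] at hρ
  have := htf (ρ x' / ρ x) k hk0 (by rw [div_pow, hρ, div_self'])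
  exact div_eq_one.1 this

theorem Lvl.mul_ne_zero_of (hq : Lvl F q) {a : 𝓞 F} (ha : (q : 𝓞 F) ^ 2 ∣ a - 1) :
    (q : 𝓞 F) ^ 2 * a ≠ 0 :=
  mul_ne_zero (pow_ne_zero 2 hq.cast_ne_zero) (hq.ne_zero_of_sub_one ha)

/-- Good elements that are `1` modulo `q ^ 2` represent all invertible classes modulo `a`. -/
theorem exists_good_congr (hq : Lvl F q) {a s : 𝓞 F} (ha : (q : 𝓞 F) ^ 2 ∣ a - 1)
    (hs : IsCoprime s a) : ∃ (t : 𝓞 F) (n : ℕ), Good t n ∧ (q : 𝓞 F) ^ 2 ∣ t - 1 ∧ a ∣ t - s := by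
  obtain ⟨z, hz1, hz2⟩ := exists_crt ((isCoprime_of_sub_one ha).symm.pow_left (m := 2)) 1 s
  have hzc : IsCoprime ((q : 𝓞 F) ^ 2 * a) z :=
    IsCoprime.mul_left (isCoprime_of_sub_one hz1).symm.pow_left (isCoprime_of_dvd_sub hs hz2).symm
  obtain ⟨t, n, ht, htz, -⟩ := exists_good hzc (hq.mul_ne_zero_of ha) one_pos
  refine ⟨t, n, ht, ?_, ?_⟩
  · have := ((Dvd.intro _ rfl).trans htz).add hz1
    rwa [sub_add_sub_cancel] at this
  · have := ((Dvd.intro_left _ rfl).trans htz).add hz2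
    rwa [sub_add_sub_cancel] at this

/-- If `-1` is a square modulo the upper left entry of `x`, then `ρ x ^ 2 = 1`. -/
theorem rho_sq_of_neg_one (hq : Lvl F q) (u : (𝓞 F)ˣ) (hu : ∀ k : ℕ, 0 < k → u ^ k ≠ 1)
    (htf : ∀ (c : A) (k : ℕ), 0 < k → c ^ k = 1 → c = 1) (hk : Kills ρ) (x : Gs (q : 𝓞 F))
    {i : 𝓞 F} (hi : x.1.1 0 0 ∣ i ^ 2 + 1) : ρ x ^ 2 = 1 := by
  have hdet := det_eq x.1
  obtain ⟨hb0, hc0, ha1, hd1⟩ := x.2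
  set a := x.1.1 0 0 with hadef
  set b := x.1.1 0 1 with hbdef
  set c := x.1.1 1 0 with hcdef
  set d := x.1.1 1 1 with hddef
  have h2 := adm_row (x ^ 2)
  have h00 : (x ^ 2).1.1 0 0 = a ^ 2 + b * c := by
    rw [pow_two, Subgroup.coe_mul, mul_apply2]
    ring
  have h01 : (x ^ 2).1.1 0 1 = (a + d) * b := by
    rw [pow_two, Subgroup.coe_mul, mul_apply2]
    ring
  rw [h00, h01] at h2
  rw [← map_pow, ← sym_eq_rho hk h00 h01]
  obtain ⟨t, n, ht, ht1, ⟨w, hw⟩⟩ := exists_good_congr hq h2.a1 (s := a)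
    ⟨a + d, -1, by linear_combination hdet⟩
  have hAt : IsCoprime (a ^ 2 + b * c) t := by
    refine (isCoprime_of_dvd_sub ?_ (Dvd.intro _ hw.symm)).symm
    exact ⟨a + d, -1, by linear_combination hdet⟩
  rw [← sym_sq hq u hu htf hk ht ht1 h2 hAt]
  have h3 : Adm (q : 𝓞 F) (a ^ 2 + b * c) (t ^ 2 * ((a + d) * b)) :=
    ⟨h2.a1, h2.b0.mul_left _, hAt.pow_right.mul_right h2.cop⟩
  have hd₃ : (q : 𝓞 F) * (a ^ 2 + b * c) ∣ a * b - t ^ 2 * ((a + d) * b) := by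
    obtain ⟨b', hb'⟩ := hb0
    refine ⟨b' * (-a - (t + a) * (a + d) * w), ?_⟩
    rw [hb'] at hdet hw ⊢
    linear_combination (-(q * b' * (t + a) * (a + d))) * hw - (a * q * b') * hdet
  have h4 := h3.right hd₃
  rw [← sym_right hk h3 hd₃]
  -- `y` is a square root of `a ^ 2 + b c` modulo `q a b`
  have hab : IsCoprime a b := (adm_row x).cop
  have haqb : IsCoprime ((q : 𝓞 F) * b) a :=
    IsCoprime.mul_left (isCoprime_of_sub_one ha1).symm hab.symm
  obtain ⟨y, ⟨y₁, hy₁⟩, ⟨y₂, hy₂⟩⟩ := exists_crt haqb a i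
  have hd₅ : (q : 𝓞 F) * (a * b) ∣ y ^ 2 - q * (a * b) - (a ^ 2 + b * c) := by
    have e1 : (q : 𝓞 F) * b ∣ y ^ 2 - (a ^ 2 + b * c) := by
      obtain ⟨c', hc'⟩ := hc0
      exact ⟨y₁ * (y + a) - c', by rw [hc']; linear_combination (y + a) * hy₁⟩
    have e2 : a ∣ y ^ 2 - (a ^ 2 + b * c) := by
      obtain ⟨i', hi'⟩ := hi
      exact ⟨y₂ * (y + i) + i' - a - d, by linear_combination (y + i) * hy₂ + hi' + hdet⟩
    have e3 := haqb.mul_dvd e1 e2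
    have e4 : y ^ 2 - q * (a * b) - (a ^ 2 + b * c) =
      y ^ 2 - (a ^ 2 + b * c) - q * (a * b) := by ring
    rw [e4]
    refine Dvd.dvd.sub ?_ (dvd_refl _)
    convert e3 using 1
    ring
  have h5 := h4.left hd₅
  rw [← sym_left hk h4 hd₅]
  set A' := y ^ 2 - q * (a * b) with hA'
  have hqA : IsCoprime (q : 𝓞 F) A' := (isCoprime_of_sub_one h5.a1).symm
  have hyA : IsCoprime y A' := by
    have hyq : IsCoprime y (q * b) := isCoprime_of_dvd_sub haqb.symm (Dvd.intro _ hy₁.symm)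
    have hya : IsCoprime y a := by
      refine isCoprime_of_dvd_sub ?_ (Dvd.intro _ hy₂.symm)
      obtain ⟨i', hi'⟩ := hi
      exact ⟨-i, i', by linear_combination -hi'⟩
    have := (hyq.mul_right hya).neg_right
    have e1 : A' = -(q * b * a) + y * y := by rw [hA']; ring
    rw [e1]
    exact this.add_mul_left_right y
  obtain ⟨r, r', hr⟩ := hqA
  have hsA : IsCoprime (r * y) A' := IsCoprime.mul_left ⟨q, r', by linear_combination hr⟩ hyA
  obtain ⟨t', n', ht', ht1', ⟨w', hw'⟩⟩ := exists_good_congr hq h5.a1 hsA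
  have hAt' : IsCoprime A' t' := (isCoprime_of_dvd_sub hsA (Dvd.intro _ hw'.symm)).symm
  have hd₆ : (q : 𝓞 F) * A' ∣ t' ^ 2 * q - a * b := by
    refine IsCoprime.mul_dvd ⟨r, r', hr⟩ ?_ ?_
    · exact (Dvd.intro_left _ rfl).sub (hb0.mul_left _)
    · -- multiplied by `q`, both sides are `y ^ 2` modulo `A'`
      have e1 : A' ∣ q * (t' ^ 2 * q - a * b) := by
        refine ⟨1 + q ^ 2 * w' * (t' + r * y) - r' * (q * r + 1) * y ^ 2, ?_⟩
        linear_combination (q ^ 2 * (t' + r * y)) * hw' + (q * r + 1) * y ^ 2 * hr - hA'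
      exact IsCoprime.dvd_of_dvd_mul_left (IsCoprime.symm ⟨r, r', hr⟩) e1
  rw [← sym_right hk h5 hd₆]
  have h6 : Adm (q : 𝓞 F) A' q := ⟨h5.a1, dvd_refl _, isCoprime_of_sub_one h5.a1⟩
  rw [sym_sq hq u hu htf hk ht' ht1' h6 hAt']
  have h7 : Adm (q : 𝓞 F) 1 q := ⟨by simp, dvd_refl _, isCoprime_one_left⟩
  rw [sym_left hk h7 (by rw [← pow_two]; exact h5.a1), sym_one hk (dvd_refl _)]

/-- Elementary operations replace the upper left entry by a rational prime `l ≡ 1` modulo `4`, to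
which `rho_sq_of_neg_one` applies. -/
theorem rho_eq_one (hq : Lvl F q) (u : (𝓞 F)ˣ) (hu : ∀ k : ℕ, 0 < k → u ^ k ≠ 1)
    (htf : ∀ (c : A) (k : ℕ), 0 < k → c ^ k = 1 → c = 1) (hk : Kills ρ) (x : Gs (q : 𝓞 F)) :
    ρ x = 1 := by
  have h₀ := adm_row x
  rw [rho_eq_sym hk]
  set a := x.1.1 0 0 with ha
  set b := x.1.1 0 1 with hb
  obtain ⟨b₀, hb₀⟩ := h₀.b0
  have hcop : IsCoprime a b₀ := by
    have := h₀.cop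
    rw [hb₀] at this
    exact this.of_mul_right_right
  obtain ⟨β, m, hβ, ⟨s, hs⟩, hm⟩ := exists_good hcop (hq.ne_zero_of_sub_one h₀.a1) hq.pos
  have hd₁ : (q : 𝓞 F) * a ∣ q * β - b := ⟨s, by rw [hb₀]; linear_combination (q : 𝓞 F) * hs⟩
  have h₁ := h₀.right hd₁
  rw [← sym_right hk h₀ hd₁]
  have haβ : IsCoprime a β := h₁.cop.of_mul_right_right
  have hmq : IsCoprime (m : ℤ) (q : ℤ) := Nat.isCoprime_iff_coprime.2 hm
  have hqβ : IsCoprime (q : 𝓞 F) β := by simpa using hβ.isCoprime_cast hmq.symm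
  obtain ⟨k, hk₁⟩ := hβ.surj a
  have hkc : IsCoprime k (m : ℤ) := by
    apply hβ.coprime
    exact isCoprime_of_dvd_sub haβ (by rwa [dvd_sub_comm])
  obtain ⟨z, hz1, hz2, hzc⟩ := crt_int (hmq.pow_right (n := 2)) hkc
    (isCoprime_one_left (x := (q : ℤ) ^ 2))
  obtain ⟨l, hl, -, hlz⟩ := exists_prime_congr (m := m * q ^ 2) (k := z)
    (Nat.mul_pos hβ.pos (pow_pos hq.pos 2)) (by push_cast; exact hzc) 0
  push_cast at hlz
  have hlm : (m : ℤ) ∣ l - k := by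
    have := ((Dvd.intro _ rfl).trans hlz).add hz1
    rwa [sub_add_sub_cancel] at this
  have hlq : (q : ℤ) ^ 2 ∣ l - 1 := by
    have := ((Dvd.intro_left _ rfl).trans hlz).add hz2
    rwa [sub_add_sub_cancel] at this
  have hlβ : β ∣ (l : 𝓞 F) - a := by
    have h1 := intCast_dvd_cast (F := F) hlm
    push_cast at h1
    have h2 := (hβ.dvd_n.trans h1).sub hk₁
    have h3 : (l : 𝓞 F) - k - (a - k) = l - a := by ring
    rwa [h3] at h2
  have hlq' : (q : 𝓞 F) ^ 2 ∣ (l : 𝓞 F) - a := by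
    have h1 := intCast_dvd_cast (F := F) hlq
    push_cast at h1
    have := h1.sub h₀.a1
    rwa [sub_sub_sub_cancel_right] at this
  have hd₂ : (q : 𝓞 F) * (q * β) ∣ (l : 𝓞 F) - a := by
    rw [← mul_assoc, ← pow_two]
    exact (hqβ.pow_left (m := 2)).mul_dvd hlq' hlβ
  have h₂ := h₁.left hd₂
  rw [← sym_left hk h₁ hd₂]
  obtain ⟨y, hy0, hy1⟩ := h₂.exists_mat
  rw [sym_eq_rho hk hy0 hy1]
  -- `-1` is a square modulo the prime `l`, which is `1` modulo `4`
  have hfact : Fact l.Prime := ⟨hl⟩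
  have h4 : l % 4 ≠ 3 := by
    have h5 : (4 : ℤ) ∣ l - 1 := by
      have : (4 : ℤ) ∣ q := by exact_mod_cast hq.four
      exact (this.trans (dvd_pow_self _ two_ne_zero)).trans hlq
    omega
  obtain ⟨r, hr⟩ := (ZMod.exists_sq_eq_neg_one_iff (p := l)).2 h4
  obtain ⟨i, rfl⟩ := ZMod.intCast_surjective r
  have hli : (l : ℤ) ∣ i ^ 2 + 1 := by
    rw [← ZMod.intCast_zmod_eq_zero_iff_dvd]
    push_cast
    linear_combination -hr
  refine htf _ 2 two_pos (rho_sq_of_neg_one hq u hu htf hk y (i := (i : 𝓞 F)) ?_)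
  rw [hy0]
  have h1 := intCast_dvd_cast (F := F) hli
  push_cast at h1
  exact h1

end TorsionFree

/-! ### Generalities on finitely generated groups -/

section FG

theorem fg_of_injective {A B : Type*} [Group A] [CommGroup B] [hB : Group.FG B] (f : A →* B)
    (hf : Function.Injective f) : Group.FG A := by
  have h1 : AddGroup.FG (Additive B) := inferInstance
  have h2 : Module.Finite ℤ (Additive B) := Module.Finite.iff_addGroup_fg.mpr h1
  have h3 : IsNoetherian ℤ (Additive B) := inferInstance
  have h4 : (AddSubgroup.toIntSubmodule (Subgroup.toAddSubgroup f.range)).FG :=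
    IsNoetherian.noetherian _
  rw [Submodule.fg_iff_addSubgroup_fg] at h4
  have h5 : f.range.FG := (Subgroup.fg_iff_add_fg _).mpr h4
  have h6 : Group.FG f.range := (Group.fg_iff_subgroup_fg _).mpr h5
  exact Group.fg_of_surjective (f := (MonoidHom.ofInjective hf).symm.toMonoidHom)
    (MonoidHom.ofInjective hf).symm.surjective

/-- An extension of finitely generated groups is finitely generated. -/
theorem fg_of_extension {A B : Type*} [Group A] [Group B] (f : A →* B)
    (hk : Group.FG f.ker) (hr : Group.FG f.range) : Group.FG A := by
  obtain ⟨S, hS⟩ := (Group.fg_iff_subgroup_fg _).mp hk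
  obtain ⟨T, hT⟩ := (Group.fg_iff_subgroup_fg _).mp hr
  have hTr : ∀ t ∈ T, ∃ a, f a = t := fun t ht => by
    have : t ∈ f.range := by rw [← hT]; exact Subgroup.subset_closure ht
    exact this
  choose! g hg using hTr
  have hfin : ((S : Set A) ∪ g '' (T : Set B)).Finite :=
    S.finite_toSet.union (T.finite_toSet.image g)
  refine Group.fg_iff.mpr ⟨_, ?_, hfin⟩
  set H := Subgroup.closure ((S : Set A) ∪ g '' (T : Set B)) with hH
  have hker : f.ker ≤ H := by
    rw [← hS]; exact Subgroup.closure_mono Set.subset_union_left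
  have hrange : f.range ≤ H.map f := by
    rw [← hT, Subgroup.closure_le]
    intro t ht
    exact ⟨g t, Subgroup.subset_closure (Or.inr ⟨t, ht, rfl⟩), hg t ht⟩
  rw [eq_top_iff]
  intro a _
  obtain ⟨b, hb, hba⟩ := hrange ⟨a, rfl⟩
  have : a * b⁻¹ ∈ H := hker (by rw [MonoidHom.mem_ker, map_mul, map_inv, hba, mul_inv_cancel])
  have := H.mul_mem this hb
  simpa using this

theorem exists_finite_section {α β : Type*} [Finite β] (f : α → β) (X : Set α) :
    ∃ Y : Set α, Y.Finite ∧ Y ⊆ X ∧ ∀ x ∈ X, ∃ y ∈ Y, f y = f x := by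
  obtain ⟨Y, hY, hb⟩ := Set.exists_subset_bijOn X f
  refine ⟨Y, hb.finite_iff_finite.mpr (Set.toFinite _), hY, fun x hx => ?_⟩
  obtain ⟨y, hy, h⟩ := hb.surjOn ⟨x, hx, rfl⟩
  exact ⟨y, hy, h⟩

end FG

/-! ### The action on vectors -/

section Act

variable {R : Type*} [CommRing R]

/-- The action of `SL₂(R)` on column vectors. -/
def act (σ : SpecialLinearGroup (Fin 2) R) (p : R × R) : R × R :=
  (σ.1 0 0 * p.1 + σ.1 0 1 * p.2, σ.1 1 0 * p.1 + σ.1 1 1 * p.2)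

/-- The determinant of the matrix with columns `p` and `v`. -/
def d2 (p v : R × R) : R := p.1 * v.2 - p.2 * v.1

theorem act_one (p : R × R) : act 1 p = p := by
  simp [act]

theorem act_mul (σ τ : SpecialLinearGroup (Fin 2) R) (p : R × R) :
    act (σ * τ) p = act σ (act τ p) := by
  simp only [act, mul_apply2]
  ext <;> ring

theorem d2_act (σ : SpecialLinearGroup (Fin 2) R) (p v : R × R) :
    d2 (act σ p) (act σ v) = d2 p v := by
  have := det_eq σ
  simp only [act, d2]
  linear_combination (p.1 * v.2 - p.2 * v.1) * this

theorem act_smul (σ : SpecialLinearGroup (Fin 2) R) (c : R) (p : R × R) :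
    act σ (c • p) = c • act σ p := by
  ext <;> simp only [act, Prod.smul_fst, Prod.smul_snd, smul_eq_mul] <;> ring

theorem d2_smul_right (c : R) (p v : R × R) : d2 p (c • v) = c * d2 p v := by
  simp only [d2, Prod.smul_fst, Prod.smul_snd, smul_eq_mul]; ring

theorem d2_comm (p v : R × R) : d2 p v = - d2 v p := by
  simp only [d2]; ring

theorem d2_self (p : R × R) : d2 p p = 0 := by
  simp only [d2]; ring

/-- Two pairs of vectors with the same determinant `κ` that are congruent modulo `κ` differ by an
element of `SL₂`. -/
theorem exists_act_eq (p x a b : R × R)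
    (h : d2 (p + d2 p x • a) (x + d2 p x • b) = d2 p x) (hreg : IsLeftRegular (d2 p x)) :
    ∃ σ, act σ p = p + d2 p x • a ∧ act σ x = x + d2 p x • b := by
  refine ⟨mk2 (1 + a.1 * x.2 - b.1 * p.2) (- a.1 * x.1 + b.1 * p.1)
    (a.2 * x.2 - b.2 * p.2) (1 - a.2 * x.1 + b.2 * p.1) ?_, ?_, ?_⟩
  · apply hreg
    simp only [d2, Prod.fst_add, Prod.snd_add, Prod.smul_fst, Prod.smul_snd, smul_eq_mul] at h ⊢
    linear_combination h
  all_goals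
    ext <;> simp only [act, d2, mk2_00, mk2_01, mk2_10, mk2_11, Prod.fst_add, Prod.snd_add,
      Prod.smul_fst, Prod.smul_snd, smul_eq_mul] <;> ring

/-- Two nondegenerate pairs of vectors congruent modulo `M ^ 2`, where `M` is a multiple of both
determinants, differ by an element of `SL₂` and a unit. -/
theorem exists_act_eq_of_congr [IsDomain R] (M : R) (p x p' x' : R × R)
    (h : d2 p x ≠ 0) (hM : d2 p x ∣ M) (hM' : d2 p' x' ∣ M)
    (h1 : M ^ 2 ∣ p'.1 - p.1) (h2 : M ^ 2 ∣ p'.2 - p.2) (h3 : M ^ 2 ∣ x'.1 - x.1)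
    (h4 : M ^ 2 ∣ x'.2 - x.2) :
    ∃ σ, ∃ ε : R, act σ p = p' ∧ act σ x = ε • x' := by
  obtain ⟨m, hm⟩ := hM
  obtain ⟨m', hm'⟩ := hM'
  obtain ⟨a1, ha1⟩ := h1
  obtain ⟨a2, ha2⟩ := h2
  obtain ⟨b1, hb1⟩ := h3
  obtain ⟨b2, hb2⟩ := h4
  set κ := d2 p x with hκ
  -- `d2 p' x' - d2 p x = M ^ 2 * t`, so that `d2 p x = (1 - m' * M * t) * d2 p' x'`
  set t := p.1 * b2 + a1 * x.2 + M ^ 2 * a1 * b2 - p.2 * b1 - a2 * x.1 - M ^ 2 * a2 * b1 with ht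
  have hp1 : p'.1 = p.1 + M ^ 2 * a1 := by linear_combination ha1
  have hp2 : p'.2 = p.2 + M ^ 2 * a2 := by linear_combination ha2
  have hx1 : x'.1 = x.1 + M ^ 2 * b1 := by linear_combination hb1
  have hx2 : x'.2 = x.2 + M ^ 2 * b2 := by linear_combination hb2
  have hdet : d2 p' x' = κ + M ^ 2 * t := by
    simp only [hκ, d2, hp1, hp2, hx1, hx2, ht]; ring
  have hε : κ = (1 - m' * M * t) * d2 p' x' := by
    linear_combination (- 1 : R) * hdet - M * t * hm'
  have hpp : p' = p + κ • (m * M * a1, m * M * a2) := by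
    ext
    · simp only [hp1, Prod.fst_add, Prod.smul_fst, smul_eq_mul]
      linear_combination M * a1 * hm
    · simp only [hp2, Prod.snd_add, Prod.smul_snd, smul_eq_mul]
      linear_combination M * a2 * hm
  have hxx : (1 - m' * M * t) • x' =
      x + κ • (m * (M * b1 - m' * t * x'.1), m * (M * b2 - m' * t * x'.2)) := by
    ext
    · simp only [Prod.fst_add, Prod.smul_fst, smul_eq_mul]
      linear_combination hx1 + (M * b1 - m' * t * x'.1) * hm
    · simp only [Prod.snd_add, Prod.smul_snd, smul_eq_mul]
      linear_combination hx2 + (M * b2 - m' * t * x'.2) * hm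
  obtain ⟨σ, hσ, hσ'⟩ := exists_act_eq p x (m * M * a1, m * M * a2)
    (m * (M * b1 - m' * t * x'.1), m * (M * b2 - m' * t * x'.2))
    (by rw [← hκ, ← hpp, ← hxx, d2_smul_right, ← hε])
    (fun _ _ h' => mul_left_cancel₀ h h')
  exact ⟨σ, 1 - m' * M * t, by rw [hσ, ← hκ, ← hpp], by rw [hσ', ← hκ, ← hxx]⟩

end Act

/-! ### Stabilizers of lines -/

section Stab

variable {F : Type*} [Field F] [NumberField F]

theorem exists_eigen {a y t : 𝓞 F} (ha : a ≠ 0) (h : y ^ 2 = a * (t * y - a)) :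
    ∃ l : (𝓞 F)ˣ, y = l * a := by
  have hx : IsIntegral (𝓞 F) ((y : F) / (a : F)) := by
    refine ⟨Polynomial.X ^ 2 - Polynomial.C t * Polynomial.X + 1, by monicity!, ?_⟩
    have ha' : (a : F) ≠ 0 := by simpa using ha
    have h' : (y : F) ^ 2 = a * (t * y - a) := by exact_mod_cast congrArg (algebraMap (𝓞 F) F) h
    simp only [Polynomial.eval₂_add, Polynomial.eval₂_sub, Polynomial.eval₂_pow,
      Polynomial.eval₂_mul, Polynomial.eval₂_X, Polynomial.eval₂_C, Polynomial.eval₂_one]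
    field_simp
    linear_combination h'
  obtain ⟨l, hl⟩ := IsIntegrallyClosed.algebraMap_eq_of_integral hx
  have hy : y = l * a := by
    apply NumberField.RingOfIntegers.ext
    have ha' : (a : F) ≠ 0 := by simpa using ha
    have hl' : (l : F) = y / a := hl
    push_cast
    exact ((eq_div_iff ha').mp hl').symm
  have hl2 : l * (t - l) = 1 := by
    apply mul_left_cancel₀ (pow_ne_zero 2 ha)
    rw [hy] at h
    linear_combination - h
  exact ⟨⟨l, t - l, hl2, by rw [mul_comm, hl2]⟩, hy⟩

theorem exists_unit_of_d2_eq_zero {γ : SpecialLinearGroup (Fin 2) (𝓞 F)} {p : 𝓞 F × 𝓞 F}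
    (hp : p ≠ 0) (h : d2 p (act γ p) = 0) : ∃ l : (𝓞 F)ˣ, act γ p = (l : 𝓞 F) • p := by
  have hdet := det_eq γ
  set y := act γ p with hy
  have hy1 : y.1 = γ.1 0 0 * p.1 + γ.1 0 1 * p.2 := rfl
  have hy2 : y.2 = γ.1 1 0 * p.1 + γ.1 1 1 * p.2 := rfl
  simp only [d2] at h
  by_cases h1 : p.1 = 0
  · have h2 : p.2 ≠ 0 := fun h2 => hp (Prod.ext h1 h2)
    -- the trace of `γ` enters through the Cayley–Hamilton relation for `γ`
    obtain ⟨l, hl⟩ := exists_eigen (a := p.2) (y := y.2) (t := γ.1 0 0 + γ.1 1 1) h2 (by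
      rw [h1] at h hy1 hy2
      have h3 : y.1 = 0 := by
        rcases mul_eq_zero.mp (show p.2 * y.1 = 0 by linear_combination - h) with h3 | h3
        exacts [absurd h3 h2, h3]
      have h4 : γ.1 0 1 = 0 := by
        rw [h3] at hy1
        rcases mul_eq_zero.mp (show γ.1 0 1 * p.2 = 0 by linear_combination - hy1) with h4 | h4
        exacts [h4, absurd h4 h2]
      rw [h4] at hdet
      rw [hy2]
      linear_combination (- p.2 ^ 2) * hdet)
    refine ⟨l, Prod.ext ?_ (by simpa using hl)⟩
    apply mul_left_cancel₀ h2
    rw [h1] at h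
    simp only [Prod.smul_fst, smul_eq_mul, h1]
    linear_combination - h
  · obtain ⟨l, hl⟩ := exists_eigen (a := p.1) (y := y.1) (t := γ.1 0 0 + γ.1 1 1) h1 (by
      linear_combination (y.1 - p.1 * γ.1 1 1) * hy1 - γ.1 0 1 * h + p.1 * γ.1 0 1 * hy2
        - p.1 ^ 2 * hdet)
    refine ⟨l, Prod.ext (by simpa using hl) ?_⟩
    apply mul_left_cancel₀ h1
    simp only [Prod.smul_snd, smul_eq_mul]
    rw [hl] at h
    linear_combination h

/-- The pairs `(γ, l)` with `γ p = l p`; the projection to the first factor is the stabilizer of the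
line through `p`. -/
def eigenPairs (p : 𝓞 F × 𝓞 F) : Subgroup (SpecialLinearGroup (Fin 2) (𝓞 F) × (𝓞 F)ˣ) where
  carrier := {x | act x.1 p = (x.2 : 𝓞 F) • p}
  one_mem' := by simp [act_one]
  mul_mem' := by
    intro x y hx hy
    simp only [Set.mem_ofPred_eq, Prod.fst_mul, Prod.snd_mul, Units.val_mul] at hx hy ⊢
    rw [act_mul, hy, act_smul, hx, smul_smul, mul_comm]
  inv_mem' := by
    intro x hx
    simp only [Set.mem_ofPred_eq, Prod.fst_inv, Prod.snd_inv] at hx ⊢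
    have h : act x.1⁻¹ (act x.1 p) = p := by rw [← act_mul, inv_mul_cancel, act_one]
    rw [hx, act_smul] at h
    conv_rhs => rw [← h]
    rw [smul_smul, Units.inv_mul, one_smul]

/-- A unipotent stabilizer `{γ | γ p = p}` embeds in the additive group of `𝓞 F` through
`γ ↦ d2 x (γ x)`, where `x` is any vector not proportional to `p`. -/
theorem fg_stab {p x : 𝓞 F × 𝓞 F} (hx : d2 p x ≠ 0)
    (K : Type*) [Group K] (g : K →* SpecialLinearGroup (Fin 2) (𝓞 F))
    (hg : Function.Injective g) (hK : ∀ k, act (g k) p = p) : Group.FG K := by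
  have cramer (k : K) : d2 p x • act (g k) x = d2 p x • x - d2 x (act (g k) x) • p := by
    have h1 : d2 p (act (g k) x) = d2 p x := by
      have := d2_act (g k) p x
      rwa [hK] at this
    simp only [d2] at h1 ⊢
    apply Prod.ext <;>
      simp only [Prod.smul_fst, Prod.smul_snd, Prod.fst_sub, Prod.snd_sub, smul_eq_mul]
    · linear_combination x.1 * h1
    · linear_combination x.2 * h1
  let ψ : K →* Multiplicative (𝓞 F) :=
    { toFun := fun k => Multiplicative.ofAdd (d2 x (act (g k) x))
      map_one' := by rw [map_one, act_one, d2_self]; rfl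
      map_mul' := by
        intro k l
        rw [← ofAdd_add]
        congr 1
        apply mul_left_cancel₀ hx
        rw [map_mul, act_mul]
        have h21 := congrArg Prod.fst (cramer l)
        have h22 := congrArg Prod.snd (cramer l)
        have h31 := congrArg Prod.fst (hK k)
        have h32 := congrArg Prod.snd (hK k)
        set y := act (g l) x
        simp only [d2, act, Prod.smul_fst, Prod.smul_snd, Prod.fst_sub, Prod.snd_sub,
          smul_eq_mul] at h21 h22 h31 h32 ⊢
        set γ := (g k).1
        linear_combination (x.1 * γ 1 0 - x.2 * γ 0 0) * h21 + (x.1 * γ 1 1 - x.2 * γ 0 1) * h22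
          - (x.1 * y.2 - x.2 * y.1) * (x.1 * h32 - x.2 * h31) }
  have hψ : Function.Injective ψ := by
    rw [injective_iff_map_eq_one]
    intro k hk
    have h0 : d2 x (act (g k) x) = 0 := hk
    have hc := cramer k
    rw [h0, zero_smul, sub_zero] at hc
    have hx' : act (g k) x = x := smul_right_injective _ hx hc
    have hp := hK k
    apply hg
    rw [map_one]
    have e1 := congrArg Prod.fst hp
    have e2 := congrArg Prod.snd hp
    have e3 := congrArg Prod.fst hx'
    have e4 := congrArg Prod.snd hx'
    simp only [act] at e1 e2 e3 e4
    simp only [d2] at hx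
    apply ext2 <;> apply mul_left_cancel₀ hx <;> simp only [one_apply2, Matrix.one_apply]
    · simp [-mul_eq_zero, -mul_eq_left₀]
      linear_combination x.2 * e1 - p.2 * e3
    · simp [-mul_eq_zero, -mul_eq_left₀]
      linear_combination - x.1 * e1 + p.1 * e3
    · simp [-mul_eq_zero, -mul_eq_left₀]
      linear_combination x.2 * e2 - p.2 * e4
    · simp [-mul_eq_zero, -mul_eq_left₀]
      linear_combination - x.1 * e2 + p.1 * e4
  have : AddGroup.FG (𝓞 F) := Module.Finite.iff_addGroup_fg.mp inferInstance
  have : Group.FG (Multiplicative (𝓞 F)) := inferInstance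
  exact fg_of_injective ψ hψ

theorem exists_d2_ne_zero {p : 𝓞 F × 𝓞 F} (hp : p ≠ 0) : ∃ x, d2 p x ≠ 0 := by
  by_cases h1 : p.1 = 0
  · have h2 : p.2 ≠ 0 := fun h2 => hp (Prod.ext h1 h2)
    exact ⟨(1, 0), by simpa [d2] using h2⟩
  · exact ⟨(0, 1), by simpa [d2] using h1⟩

/-- The stabilizer of the line through `p` is an extension of a group of units by a subgroup of
`𝓞 F`, hence finitely generated; only an upper bound for it is recorded. -/
theorem stab_fg {p : 𝓞 F × 𝓞 F} (hp : p ≠ 0) :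
    ∃ L : Subgroup (SpecialLinearGroup (Fin 2) (𝓞 F)), L.FG ∧
      ∀ γ, d2 p (act γ p) = 0 → γ ∈ L := by
  obtain ⟨x, hx⟩ := exists_d2_ne_zero hp
  have hfg : Group.FG (eigenPairs p) := by
    let f : eigenPairs p →* (𝓞 F)ˣ := (MonoidHom.snd _ _).comp (eigenPairs p).subtype
    have hu : Group.FG (𝓞 F)ˣ := Group.fg_iff_monoid_fg.mpr inferInstance
    refine fg_of_extension f ?_ (fg_of_injective f.range.subtype Subtype.val_injective)
    refine fg_stab hx f.ker
      (((MonoidHom.fst _ _).comp (eigenPairs p).subtype).comp f.ker.subtype) ?_ ?_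
    · rintro ⟨⟨⟨a, b⟩, h1⟩, h2⟩ ⟨⟨⟨c, d⟩, h3⟩, h4⟩ h
      have h2' : b = 1 := h2
      have h4' : d = 1 := h4
      have h' : a = c := h
      subst h2' h4' h'
      rfl
    · rintro ⟨⟨⟨a, b⟩, h1⟩, h2⟩
      have h2' : b = 1 := h2
      subst h2'
      have : act a p = ((1 : (𝓞 F)ˣ) : 𝓞 F) • p := h1
      simpa using this
  refine ⟨((MonoidHom.fst _ _).comp (eigenPairs p).subtype).range,
    (Group.fg_iff_subgroup_fg _).mp (Group.fg_range _), ?_⟩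
  intro γ hγ
  obtain ⟨l, hl⟩ := exists_unit_of_d2_eq_zero hp hγ
  exact ⟨⟨(γ, l), hl⟩, rfl⟩

end Stab

/-! ### Finite generation of `SL₂(𝓞 F)` -/

section Gen

variable {F : Type*} [Field F] [NumberField F]

/-- The absolute value of the norm of an integer of `F`. -/
noncomputable def nu (x : 𝓞 F) : ℕ := (Algebra.norm ℤ x).natAbs

theorem nu_mul (x y : 𝓞 F) : nu (x * y) = nu x * nu y := by
  simp [nu, Int.natAbs_mul]

theorem nu_neg (x : 𝓞 F) : nu (- x) = nu x := by
  have h : nu (-1 : 𝓞 F) * nu (-1 : 𝓞 F) = 1 := by rw [← nu_mul]; simp [nu]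
  rw [← neg_one_mul, nu_mul, Nat.eq_one_of_mul_eq_one_right h, one_mul]

theorem nu_eq_zero {x : 𝓞 F} : nu x = 0 ↔ x = 0 := by
  rw [nu, Int.natAbs_eq_zero, Algebra.norm_eq_zero_iff]

theorem nu_pos {x : 𝓞 F} (h : x ≠ 0) : 0 < nu x :=
  Nat.pos_of_ne_zero fun h' => h (nu_eq_zero.mp h')

theorem nu_le_of_dvd {x y : 𝓞 F} (h : x ∣ y) (hy : y ≠ 0) : nu x ≤ nu y := by
  obtain ⟨z, rfl⟩ := h
  rw [nu_mul]
  exact Nat.le_mul_of_pos_right _ (nu_pos (right_ne_zero_of_mul hy))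

theorem dvd_nu (x : 𝓞 F) : x ∣ (nu x : 𝓞 F) := by
  have h := dvd_norm x
  rcases Int.natAbs_eq (Algebra.norm ℤ x) with h' | h'
  · rw [h'] at h; simpa [nu] using h
  · rw [h'] at h; simpa [nu] using h

theorem nu_d2_comm (p v : 𝓞 F × 𝓞 F) : nu (d2 p v) = nu (d2 v p) := by
  rw [d2_comm, nu_neg]

/-- A nonzero integer `R` all of whose divisors may serve as multipliers in an approximate division
algorithm on `𝓞 F`. -/
def Approx (R : 𝓞 F) : Prop :=
  R ≠ 0 ∧ ∀ a b : 𝓞 F, b ≠ 0 → ∃ r s : 𝓞 F, r ∣ R ∧ nu (r * a - s * b) < nu b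

variable (F) in
/-- Provided by the argument that proves finiteness of the class group. -/
theorem exists_approx : ∃ R : 𝓞 F, Approx R := by
  classical
  let bS := RingOfIntegers.basis F
  let adm := AbsoluteValue.absIsAdmissible
  refine ⟨algebraMap ℤ (𝓞 F) (∏ m ∈ ClassGroup.finsetApprox bS adm, m),
    ClassGroup.prod_finsetApprox_ne_zero bS adm, fun a b hb => ?_⟩
  obtain ⟨s, r, hr, h⟩ := ClassGroup.exists_mem_finset_approx' bS adm a hb
  refine ⟨algebraMap ℤ (𝓞 F) r, s, map_dvd _ (Finset.dvd_prod_of_mem _ hr), ?_⟩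
  rw [Algebra.smul_def] at h
  simp only [nu]
  zify
  exact h

variable {R : 𝓞 F}

/-- The vectors `p` for which the ideal generated by the coordinates contains a nonzero element of
norm at most that of `R`. -/
def InS (R : 𝓞 F) (p : 𝓞 F × 𝓞 F) : Prop := ∃ x, d2 p x ≠ 0 ∧ nu (d2 p x) ≤ nu R

theorem InS.ne_zero {p : 𝓞 F × 𝓞 F} (h : InS R p) : p ≠ 0 := by
  rintro rfl
  obtain ⟨x, hx, _⟩ := h
  simp [d2] at hx

/-- Every line contains a vector in `InS R` that is minimal with respect to all the functions
`nu (d2 · y)` at once. -/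
theorem exists_inS (hR : Approx R) {w : 𝓞 F × 𝓞 F} (hw : w ≠ 0) :
    ∃ p, InS R p ∧ ∀ y, nu (d2 p y) ≤ nu (d2 w y) := by
  obtain ⟨y₀, hy₀⟩ := exists_d2_ne_zero hw
  let P : ℕ → Prop := fun n => ∃ p, d2 p w = 0 ∧ d2 p y₀ ≠ 0 ∧ nu (d2 p y₀) = n
  have hP : ∃ n, P n := ⟨_, w, d2_self w, hy₀, rfl⟩
  classical
  obtain ⟨p, hpw, hp0, hpn⟩ := Nat.find_spec hP
  have hmin : ∀ v, d2 v w = 0 → d2 v y₀ ≠ 0 → nu (d2 p y₀) ≤ nu (d2 v y₀) := fun v h1 h2 => by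
    rw [hpn]; exact Nat.find_min' hP ⟨v, h1, h2, rfl⟩
  refine ⟨p, ?_, fun y => ?_⟩
  · let Q : ℕ → Prop := fun n => ∃ x, d2 p x ≠ 0 ∧ nu (d2 p x) = n
    have hQ : ∃ n, Q n := ⟨_, y₀, hp0, rfl⟩
    obtain ⟨x, hx, hxn⟩ := Nat.find_spec hQ
    refine ⟨x, hx, ?_⟩
    have hxmin : ∀ z, nu (d2 p z) < nu (d2 p x) → d2 p z = 0 := fun z hz => by
      by_contra h
      rw [hxn] at hz
      exact Nat.find_min hQ hz ⟨z, h, rfl⟩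
    have hdiv : ∀ z, d2 p x ∣ R * d2 p z := fun z => by
      obtain ⟨r, s, ⟨r', hr'⟩, h⟩ := hR.2 (d2 p z) (d2 p x) hx
      have e : r * d2 p z - s * d2 p x = d2 p (r * z.1 - s * x.1, r * z.2 - s * x.2) := by
        simp only [d2]; ring
      have := hxmin _ (e ▸ h)
      rw [← e] at this
      exact ⟨r' * s, by rw [hr']; linear_combination r' * this⟩
    obtain ⟨v1, h1⟩ := hdiv (0, 1)
    obtain ⟨v2, h2⟩ := hdiv (-1, 0)
    have h1' : R * p.1 = d2 p x * v1 := by simpa [d2] using h1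
    have h2' : R * p.2 = d2 p x * v2 := by simpa [d2] using h2
    have hv (y : 𝓞 F × 𝓞 F) : R * d2 p y = d2 p x * d2 (v1, v2) y := by
      have e1 : d2 p y = p.1 * y.2 - p.2 * y.1 := rfl
      have e2 : d2 (v1, v2) y = v1 * y.2 - v2 * y.1 := rfl
      rw [e1, e2]
      linear_combination y.2 * h1' - y.1 * h2'
    have hvw : d2 (v1, v2) w = 0 := by
      have := hv w
      rw [hpw, mul_zero] at this
      exact (mul_eq_zero.mp this.symm).resolve_left hx
    have hv0 : d2 (v1, v2) y₀ ≠ 0 := fun h => by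
      have := hv y₀
      rw [h, mul_zero] at this
      exact (mul_ne_zero hR.1 hp0) this
    have hle := hmin _ hvw hv0
    have := congrArg nu (hv y₀)
    rw [nu_mul, nu_mul] at this
    by_contra hlt
    push Not at hlt
    have h3 := Nat.mul_lt_mul_of_lt_of_le hlt hle (nu_pos hv0)
    omega
  · have e : d2 p y * d2 w y₀ = d2 w y * d2 p y₀ := by
      simp only [d2] at hpw ⊢
      linear_combination (y.1 * y₀.2 - y.2 * y₀.1) * hpw
    have e' := congrArg nu e
    rw [nu_mul, nu_mul] at e'
    have hle := hmin w (d2_self w) hy₀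
    by_contra hlt
    push Not at hlt
    have h3 := Nat.mul_lt_mul_of_lt_of_le hlt hle (nu_pos hy₀)
    omega

/-- The reduction step: a vector in `InS R` can be replaced by a neighbouring one that is closer to
the line through `v`. -/
theorem exists_closer (hR : Approx R) {p v : 𝓞 F × 𝓞 F} (hp : InS R p) (hv : d2 p v ≠ 0) :
    ∃ p', InS R p' ∧ nu (d2 p p') ≤ nu R * nu R ∧ nu (d2 p' v) < nu (d2 p v) := by
  obtain ⟨x, hx, hxR⟩ := hp
  obtain ⟨r, s, hr, h⟩ := hR.2 (d2 x v) (d2 p v) hv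
  set w : 𝓞 F × 𝓞 F := (r * x.1 - s * p.1, r * x.2 - s * p.2) with hw
  have e1 : d2 w v = r * d2 x v - s * d2 p v := by simp only [d2, hw]; ring
  have e2 : d2 p w = r * d2 p x := by simp only [d2, hw]; ring
  have hr0 : r ≠ 0 := fun h0 => hR.1 (by rw [h0] at hr; exact zero_dvd_iff.mp hr)
  have hw0 : w ≠ 0 := fun h0 => by
    have : d2 p w ≠ 0 := by rw [e2]; exact mul_ne_zero hr0 hx
    rw [h0] at this
    simp [d2] at this
  obtain ⟨p', hp', hle⟩ := exists_inS hR hw0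
  refine ⟨p', hp', ?_, ?_⟩
  · rw [nu_d2_comm]
    refine (hle p).trans ?_
    rw [nu_d2_comm, e2, nu_mul]
    exact Nat.mul_le_mul (nu_le_of_dvd hr hR.1) hxR
  · refine (hle v).trans_lt ?_
    rwa [e1]

theorem dvd_factorial {κ : 𝓞 F} (hκ : κ ≠ 0) {N : ℕ} (h : nu κ ≤ N) :
    κ ∣ (N.factorial : 𝓞 F) :=
  (dvd_nu κ).trans (Nat.cast_dvd_cast (Nat.dvd_factorial (nu_pos hκ) h))

theorem factorial_sq_ne_zero (N : ℕ) : (N.factorial : 𝓞 F) ^ 2 ≠ 0 :=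
  pow_ne_zero 2 (Nat.cast_ne_zero.mpr (Nat.factorial_ne_zero N))

/-- Reduction modulo `(N!) ^ 2`. -/
noncomputable abbrev red (N : ℕ) (x : 𝓞 F) :
    𝓞 F ⧸ Ideal.span {(N.factorial : 𝓞 F) ^ 2} := Ideal.Quotient.mk _ x

theorem dvd_of_red_eq {N : ℕ} {x y : 𝓞 F} (h : red N x = red N y) :
    (N.factorial : 𝓞 F) ^ 2 ∣ x - y := by
  rwa [← Ideal.mem_span_singleton, ← Ideal.Quotient.eq]

/-- `InS R` is contained in finitely many orbits of `SL₂(𝓞 F)`. -/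
theorem exists_orbit_reps (R : 𝓞 F) : ∃ P : Set (𝓞 F × 𝓞 F), P.Finite ∧ (∀ p ∈ P, InS R p) ∧
    ∀ p, InS R p → ∃ q ∈ P, ∃ γ, p = act γ q := by
  set N := nu R
  have := finite_quot (factorial_sq_ne_zero (F := F) N)
  obtain ⟨Y, hY, hYX, hsec⟩ := exists_finite_section
    (fun a : (𝓞 F × 𝓞 F) × (𝓞 F × 𝓞 F) => (red N a.1.1, red N a.1.2, red N a.2.1, red N a.2.2))
    {a | d2 a.1 a.2 ≠ 0 ∧ nu (d2 a.1 a.2) ≤ N}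
  refine ⟨Prod.fst '' Y, hY.image _, ?_, ?_⟩
  · rintro _ ⟨a, ha, rfl⟩
    exact ⟨a.2, hYX ha⟩
  · rintro p ⟨x, hx, hxN⟩
    obtain ⟨a, ha, h⟩ := hsec (p, x) ⟨hx, hxN⟩
    simp only [Prod.mk.injEq] at h
    obtain ⟨h1, h2, h3, h4⟩ := h
    obtain ⟨σ, ε, hσ, -⟩ := exists_act_eq_of_congr (N.factorial : 𝓞 F) a.1 a.2 p x (hYX ha).1
      (dvd_factorial (hYX ha).1 (hYX ha).2) (dvd_factorial hx hxN)
      (dvd_of_red_eq h1.symm) (dvd_of_red_eq h2.symm) (dvd_of_red_eq h3.symm)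
      (dvd_of_red_eq h4.symm)
    exact ⟨a.1, ⟨a, ha, rfl⟩, σ, hσ.symm⟩

/-- The `γ` for which `γ p'` is close to `p` lie in finitely many double cosets of the stabilizers
of the lines through `p` and `p'`. -/
theorem exists_coset_reps (N : ℕ) {p p' : 𝓞 F × 𝓞 F} (hp : p ≠ 0) :
    ∃ Y : Set (SpecialLinearGroup (Fin 2) (𝓞 F)), Y.Finite ∧
      ∀ γ, nu (d2 p (act γ p')) ≤ N → ∃ l, ∃ y ∈ Y, ∃ l', d2 p (act l p) = 0 ∧
        d2 p' (act l' p') = 0 ∧ γ = l⁻¹ * y * l' := by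
  have := finite_quot (factorial_sq_ne_zero (F := F) N)
  obtain ⟨Y, hY, hYX, hsec⟩ := exists_finite_section
    (fun γ : SpecialLinearGroup (Fin 2) (𝓞 F) =>
      (d2 p (act γ p') = 0, red N (act γ p').1, red N (act γ p').2))
    {γ | nu (d2 p (act γ p')) ≤ N}
  refine ⟨Y, hY, fun γ hγ => ?_⟩
  obtain ⟨y, hy, h⟩ := hsec γ hγ
  simp only [Prod.mk.injEq, eq_iff_iff] at h
  obtain ⟨h0, h1, h2⟩ := h
  have hinv (v : 𝓞 F × 𝓞 F) : act y (act y⁻¹ v) = v := by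
    rw [← act_mul, mul_inv_cancel, act_one]
  by_cases hz : d2 p (act γ p') = 0
  · refine ⟨1, y, hy, y⁻¹ * γ, by rw [act_one, d2_self], ?_, by group⟩
    have hz' := h0.mpr hz
    rw [← d2_act y, act_mul, hinv]
    -- both vectors are proportional to `p`
    simp only [d2] at hz hz' ⊢
    by_cases hp1 : p.1 = 0
    · have hp2 : p.2 ≠ 0 := fun h => hp (Prod.ext hp1 h)
      apply mul_left_cancel₀ hp2
      linear_combination (act γ p').2 * (- hz') + (act y p').2 * hz
    · apply mul_left_cancel₀ hp1
      linear_combination (act y p').1 * hz - (act γ p').1 * hz'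
  · obtain ⟨σ, ε, hσ, hσ'⟩ := exists_act_eq_of_congr (N.factorial : 𝓞 F) p (act γ p') p (act y p')
      hz (dvd_factorial hz hγ) (dvd_factorial (fun h => hz (h0.mp h)) (hYX hy))
      (by simp) (by simp) (dvd_of_red_eq h1) (dvd_of_red_eq h2)
    refine ⟨σ, y, hy, y⁻¹ * σ * γ, by rw [hσ, d2_self], ?_, by group⟩
    rw [← d2_act y, mul_assoc, act_mul, act_mul, hinv, hσ', d2_smul_right, d2_self, mul_zero]

variable (F) in
/-- Generators: those of finitely many stabilizers of lines, and representatives of finitely many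
double cosets with respect to them. -/
theorem sl2_fg : Group.FG (SpecialLinearGroup (Fin 2) (𝓞 F)) := by
  obtain ⟨R, hR⟩ := exists_approx F
  obtain ⟨P, hPfin, hPS, hP⟩ := exists_orbit_reps R
  have hP0 : ∀ p ∈ P, p ≠ 0 := fun p hp => (hPS p hp).ne_zero
  choose! L hLfg hL using fun (p : 𝓞 F × 𝓞 F) (hp : p ≠ 0) => stab_fg hp
  choose! Y hYfin hY using fun (p p' : 𝓞 F × 𝓞 F) (hp : p ≠ 0) =>
    exists_coset_reps (nu R * nu R) (p' := p') hp
  choose! S hS using hLfg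
  have hSfin : (⋃ p ∈ P, (S p : Set _) ∪ ⋃ p' ∈ P, Y p p').Finite :=
    hPfin.biUnion fun p hp => (S p).finite_toSet.union
      (hPfin.biUnion fun p' _ => hYfin p p' (hP0 p hp))
  refine Group.fg_iff.mpr ⟨_, ?_, hSfin⟩
  set H := Subgroup.closure (⋃ p ∈ P, (S p : Set _) ∪ ⋃ p' ∈ P, Y p p') with hH
  have hLH : ∀ p ∈ P, ∀ γ, d2 p (act γ p) = 0 → γ ∈ H := fun p hp γ hγ => by
    have := hL p (hP0 p hp) γ hγ
    rw [← hS p (hP0 p hp)] at this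
    refine Subgroup.closure_mono ?_ this
    intro s hs
    exact Set.mem_biUnion hp (Or.inl hs)
  have hYH : ∀ p ∈ P, ∀ p' ∈ P, ∀ γ, nu (d2 p (act γ p')) ≤ nu R * nu R → γ ∈ H := by
    intro p hp p' hp' γ hγ
    obtain ⟨l, y, hy, l', hl, hl', rfl⟩ := hY p p' (hP0 p hp) γ hγ
    refine H.mul_mem (H.mul_mem (H.inv_mem (hLH p hp l hl)) ?_) (hLH p' hp' l' hl')
    exact Subgroup.subset_closure (Set.mem_biUnion hp (Or.inr (Set.mem_biUnion hp' hy)))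
  have main : ∀ n : ℕ, ∀ p ∈ P, ∀ p' ∈ P, ∀ γ, nu (d2 p (act γ p')) = n → γ ∈ H := by
    intro n
    induction n using Nat.strong_induction_on with
    | _ n ih =>
      intro p hp p' hp' γ hγ
      by_cases hn : nu (d2 p (act γ p')) ≤ nu R * nu R
      · exact hYH p hp p' hp' γ hn
      have h0 : d2 p (act γ p') ≠ 0 := fun h => hn (by rw [nu_eq_zero.mpr h]; exact Nat.zero_le _)
      obtain ⟨v, hv, hpv, hlt⟩ := exists_closer hR (hPS p hp) h0
      obtain ⟨q, hq, δ, rfl⟩ := hP v hv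
      have hδ : δ ∈ H := hYH p hp q hq δ hpv
      have e : d2 (act δ q) (act γ p') = d2 q (act (δ⁻¹ * γ) p') := by
        rw [← d2_act δ q, ← act_mul, mul_inv_cancel_left]
      rw [e, hγ] at hlt
      have := H.mul_mem hδ (ih _ hlt q hq p' hp' _ rfl)
      rwa [mul_inv_cancel_left] at this
  obtain ⟨p, hp, -⟩ := exists_inS hR (w := (1, 0)) (by simp)
  obtain ⟨q, hq, -⟩ := hP p hp
  exact eq_top_iff.mpr fun γ _ => main _ q hq q hq γ rfl

end Gen

/-! ### Torsion of the abelianization -/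

section Torsion

variable {F : Type*} [Field F] [NumberField F]

theorem exists_unit (h : ∀ φ : F →+* ℂ, ∀ x : F, ∃ r : ℝ, φ x = (r : ℂ))
    (hdeg : 2 ≤ Module.finrank ℚ F) : ∃ u : (𝓞 F)ˣ, ∀ k : ℕ, 0 < k → u ^ k ≠ 1 := by
  have hreal : IsTotallyReal F := ⟨fun v => by
    refine InfinitePlace.isReal_iff.mpr ?_
    rw [ComplexEmbedding.isReal_iff]
    refine RingHom.ext fun x => ?_
    obtain ⟨r, hr⟩ := h v.embedding x
    rw [ComplexEmbedding.conjugate_coe_eq, hr, Complex.conj_ofReal]⟩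
  have hrank : 0 < Units.rank F := by
    have h1 := IsTotallyReal.finrank F
    have h2 : InfinitePlace.nrRealPlaces F ≤ Fintype.card (InfinitePlace F) := by
      classical
      exact Fintype.card_subtype_le _
    rw [Units.rank]
    omega
  refine ⟨Units.fundSystem F ⟨0, hrank⟩, fun k hk h1 => ?_⟩
  -- otherwise `1` has two expressions in terms of the fundamental system
  obtain ⟨e, -, he⟩ := Units.exist_unique_eq_mul_prod F 1
  have h2 := he (1, 0) (by simp)
  have h3 := he (1, Pi.single ⟨0, hrank⟩ (k : ℤ)) (by
    beta_reduce
    rw [Finset.prod_eq_single (⟨0, hrank⟩ : Fin (Units.rank F))]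
    · simp [h1]
    · intro i _ hi
      simp [Pi.single_eq_of_ne hi]
    · simp)
  have h4 := congrFun (congrArg Prod.snd (h3.trans h2.symm)) ⟨0, hrank⟩
  simp at h4
  omega

/-- The upper unipotent matrix with entry `b`. -/
def uni (b : 𝓞 F) : SpecialLinearGroup (Fin 2) (𝓞 F) := mk2 1 b 0 1 (by ring)

/-- The diagonal matrix with entries `u` and `u⁻¹`. -/
def dia (u : (𝓞 F)ˣ) : SpecialLinearGroup (Fin 2) (𝓞 F) :=
  mk2 (u : 𝓞 F) 0 0 ((u⁻¹ : (𝓞 F)ˣ) : 𝓞 F) (by simp)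

theorem uni_add (a b : 𝓞 F) : uni (a + b) = uni a * uni b := by
  apply ext2 <;> simp [uni, mul_apply2]
  ring

theorem uni_zero : uni (0 : 𝓞 F) = 1 := by
  apply ext2 <;> simp [uni]

theorem uni_nsmul (b : 𝓞 F) (n : ℕ) : uni ((n : 𝓞 F) * b) = uni b ^ n := by
  induction n with
  | zero => simp [uni_zero]
  | succ n ih => rw [pow_succ, ← ih, ← uni_add]; congr 1; push_cast; ring

theorem dia_mul (u v : (𝓞 F)ˣ) : dia (u * v) = dia u * dia v := by
  apply ext2 <;> simp [dia, mul_apply2, mul_comm]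

theorem dia_pow (u : (𝓞 F)ˣ) (n : ℕ) : dia (u ^ n) = dia u ^ n := by
  induction n with
  | zero => apply ext2 <;> simp [dia]
  | succ n ih => rw [pow_succ, pow_succ, dia_mul, ih]

theorem dia_conj (u : (𝓞 F)ˣ) (b : 𝓞 F) :
    dia u * uni b * (dia u)⁻¹ = uni (((u ^ 2 : (𝓞 F)ˣ) : 𝓞 F) * b) := by
  rw [mul_inv_eq_iff_eq_mul]
  apply ext2 <;> simp only [dia, uni, mul_apply2, mk2_00, mk2_01, mk2_10, mk2_11] <;>
    push_cast
  · ring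
  · linear_combination (-(u : 𝓞 F) * b) * u.mul_inv
  · ring
  · ring

variable (Γ : Subgroup (SpecialLinearGroup (Fin 2) (𝓞 F)))

/-- The elements of `Γ` whose class in the abelianization of `Γ` has finite order. -/
def torsionPart : Subgroup (SpecialLinearGroup (Fin 2) (𝓞 F)) :=
  ((CommGroup.torsion (Abelianization Γ)).comap Abelianization.of).map Γ.subtype

theorem mem_torsionPart {x : SpecialLinearGroup (Fin 2) (𝓞 F)} (h : x ∈ Γ) :
    x ∈ torsionPart Γ ↔ IsOfFinOrder (Abelianization.of (⟨x, h⟩ : Γ)) := by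
  constructor
  · rintro ⟨y, hy, rfl⟩
    exact (CommGroup.mem_torsion _).mp hy
  · intro hx
    exact ⟨⟨x, h⟩, (CommGroup.mem_torsion _).mpr hx, rfl⟩

/-- Conjugates of unipotent elements of the right level are torsion in the abelianization of `Γ`:
conjugation by a suitable diagonalizable element of `Γ` multiplies the entry by a unit
`u ^ (2 * m) ≠ 1`. -/
theorem conj_uni_mem [hΓ : Γ.FiniteIndex] (u : (𝓞 F)ˣ) (hu : ∀ k : ℕ, 0 < k → u ^ k ≠ 1)
    {q : ℕ} (hq : Γ.normalCore.index ∣ q) (γ : SpecialLinearGroup (Fin 2) (𝓞 F)) (z : 𝓞 F) :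
    γ * uni ((q : 𝓞 F) * z) * γ⁻¹ ∈ torsionPart Γ := by
  set m := Γ.normalCore.index with hm
  have hm0 : 0 < m := Nat.pos_of_ne_zero Subgroup.FiniteIndex.index_ne_zero
  have hcore (b : 𝓞 F) : γ * uni ((q : 𝓞 F) * b) * γ⁻¹ ∈ Γ := by
    obtain ⟨n, rfl⟩ := hq
    refine Γ.normalCore_le (Subgroup.Normal.conj_mem inferInstance _ ?_ γ)
    rw [Nat.cast_mul, mul_assoc, uni_nsmul]
    exact Subgroup.pow_index_mem _ _
  have hdia : γ * dia (u ^ m) * γ⁻¹ ∈ Γ := by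
    refine Γ.normalCore_le (Subgroup.Normal.conj_mem inferInstance _ ?_ γ)
    rw [dia_pow]
    exact Subgroup.pow_index_mem _ _
  let e : 𝓞 F → Γ := fun b => ⟨_, hcore b⟩
  let d : Γ := ⟨_, hdia⟩
  have e_add (a b : 𝓞 F) : e (a + b) = e a * e b := by
    apply Subtype.ext
    simp only [e, Subgroup.coe_mul, mul_add, uni_add]
    group
  have e_mul (n : ℕ) (b : 𝓞 F) : e ((n : 𝓞 F) * b) = e b ^ n := by
    induction n with
    | zero => apply Subtype.ext; simp [e, uni_zero]
    | succ n ih => rw [pow_succ, ← ih, ← e_add]; congr 1; push_cast; ring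
  have e_conj (b : 𝓞 F) : d * e b * d⁻¹ = e ((((u ^ m) ^ 2 : (𝓞 F)ˣ) : 𝓞 F) * b) := by
    apply Subtype.ext
    simp only [e, d, Subgroup.coe_mul, Subgroup.coe_inv]
    rw [mul_left_comm, ← dia_conj]
    group
  set w : 𝓞 F := (((u ^ m) ^ 2 : (𝓞 F)ˣ) : 𝓞 F) - 1 with hw
  have hw0 : w ≠ 0 := by
    intro h
    rw [hw, sub_eq_zero, ← Units.val_one, Units.val_inj, ← pow_mul] at h
    exact hu _ (by positivity) h
  have e_w (b : 𝓞 F) : Abelianization.of (e (w * b)) = 1 := by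
    have h1 : e ((((u ^ m) ^ 2 : (𝓞 F)ˣ) : 𝓞 F) * b) = e (w * b) * e b := by
      rw [← e_add]; congr 1; rw [hw]; ring
    rw [← e_conj] at h1
    have h2 := congrArg Abelianization.of h1
    simp only [map_mul, map_inv] at h2
    rw [mul_right_comm, mul_inv_cancel, one_mul] at h2
    exact (mul_eq_right.mp h2.symm)
  rw [mem_torsionPart Γ (hcore z), isOfFinOrder_iff_pow_eq_one]
  refine ⟨nu w, nu_pos hw0, ?_⟩
  obtain ⟨c, hc⟩ := dvd_nu w
  change Abelianization.of (e z) ^ nu w = 1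
  rw [← map_pow, ← e_mul, hc, mul_assoc]
  exact e_w _

theorem lower_eq_conj (b : 𝓞 F) :
    mk2 1 0 b 1 (by ring) = mk2 0 (-1) 1 0 (by ring) * uni (-b) * (mk2 0 (-1) 1 0 (by ring))⁻¹ := by
  rw [eq_mul_inv_iff_mul_eq]
  apply ext2 <;> simp [uni, mul_apply2]

/-- Every element of `Gs q` has a power in the normal closure of the elementary matrices of `Gs q`,
hence in every subgroup containing all `SL₂`-conjugates of the matrices `uni (q * z)`. -/
theorem exists_pow_mem {q : ℕ} (hq : Lvl F q) (u : (𝓞 F)ˣ) (hu : ∀ k : ℕ, 0 < k → u ^ k ≠ 1)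
    (T : Subgroup (SpecialLinearGroup (Fin 2) (𝓞 F)))
    (hT : ∀ γ z, γ * uni ((q : 𝓞 F) * z) * γ⁻¹ ∈ T) (x : Gs (q : 𝓞 F)) :
    ∃ k : ℕ, 0 < k ∧ x.1 ^ k ∈ T := by
  set E : Set (Gs (q : 𝓞 F)) :=
    {x | x.1.1 0 0 = 1 ∧ (x.1.1 1 0 = 0 ∨ x.1.1 0 1 = 0)} with hE
  set N := Subgroup.normalClosure E with hN
  have hNT : N ≤ T.comap (Gs (q : 𝓞 F)).subtype := by
    refine (Subgroup.closure_le _).mpr ?_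
    intro y hy
    obtain ⟨a, ⟨ha0, ha⟩, hay⟩ := Group.mem_conjugatesOfSet_iff.mp hy
    obtain ⟨c, rfl⟩ := isConj_iff.mp hay
    have hdet := det_eq a.1
    obtain ⟨⟨z, hz⟩, ⟨z', hz'⟩, -, -⟩ := mem_Gs.mp a.2
    change c.1 * a.1 * c.1⁻¹ ∈ T
    rcases ha with ha | ha
    · have : a.1 = uni ((q : 𝓞 F) * z) := by
        rw [ha0, ha] at hdet
        apply ext2 <;> simp only [uni, mk2_00, mk2_01, mk2_10, mk2_11]
        exacts [ha0, hz, ha, by linear_combination hdet]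
      rw [this]
      exact hT _ _
    · have : a.1 = mk2 1 0 ((q : 𝓞 F) * z') 1 (by ring) := by
        rw [ha0, ha] at hdet
        apply ext2 <;> simp only [mk2_00, mk2_01, mk2_10, mk2_11]
        exacts [ha0, ha, hz', by linear_combination hdet]
      rw [this, lower_eq_conj, ← mul_neg]
      have := hT (c.1 * mk2 0 (-1) 1 0 (by ring)) (- z')
      rw [_root_.mul_inv_rev] at this
      simpa only [mul_assoc] using this
  have hkills : Kills (QuotientGroup.mk' N) :=
    ⟨fun x h1 h2 => (QuotientGroup.eq_one_iff x).mpr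
        (Subgroup.subset_normalClosure ⟨h1, Or.inl h2⟩),
      fun x h1 h2 => (QuotientGroup.eq_one_iff x).mpr
        (Subgroup.subset_normalClosure ⟨h1, Or.inr h2⟩)⟩
  let _ : CommGroup (Gs (q : 𝓞 F) ⧸ N) :=
    { (inferInstance : Group (Gs (q : 𝓞 F) ⧸ N)) with
      mul_comm := by
        intro a b
        obtain ⟨a, rfl⟩ := QuotientGroup.mk'_surjective N a
        obtain ⟨b, rfl⟩ := QuotientGroup.mk'_surjective N b
        exact rho_comm hq u hu hkills a b }
  let ρ : Gs (q : 𝓞 F) →* (Gs (q : 𝓞 F) ⧸ N) ⧸ CommGroup.torsion (Gs (q : 𝓞 F) ⧸ N) :=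
    (QuotientGroup.mk' _).comp (QuotientGroup.mk' N)
  have hρ : Kills ρ :=
    ⟨fun x h1 h2 => by simp only [ρ, MonoidHom.comp_apply, hkills.upper x h1 h2, map_one],
      fun x h1 h2 => by simp only [ρ, MonoidHom.comp_apply, hkills.lower x h1 h2, map_one]⟩
  have h1 := rho_eq_one hq u hu
    (fun c k hk hc => (pow_eq_one_iff_left hk.ne').mp hc) hρ x
  have h2 : QuotientGroup.mk' N x ∈ CommGroup.torsion (Gs (q : 𝓞 F) ⧸ N) :=
    (QuotientGroup.eq_one_iff _).mp h1
  obtain ⟨k, hk, h3⟩ := isOfFinOrder_iff_pow_eq_one.mp ((CommGroup.mem_torsion _).mp h2)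
  refine ⟨k, hk, ?_⟩
  have h4 : x ^ k ∈ N := by
    rw [← QuotientGroup.eq_one_iff]
    exact h3
  exact hNT h4

theorem exists_pow_mem_Gs {q : ℕ} (hq : 0 < q) (x : SpecialLinearGroup (Fin 2) (𝓞 F)) :
    ∃ k : ℕ, 0 < k ∧ x ^ k ∈ Gs (q : 𝓞 F) := by
  have hq0 : (q : 𝓞 F) ^ 2 ≠ 0 := pow_ne_zero 2 (Nat.cast_ne_zero.mpr hq.ne')
  have := finite_quot hq0
  set I := Ideal.span {(q : 𝓞 F) ^ 2}
  let f := SpecialLinearGroup.map (n := Fin 2) (Ideal.Quotient.mk I)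
  obtain ⟨k, hk, h⟩ := isOfFinOrder_iff_pow_eq_one.mp (isOfFinOrder_of_finite (f x))
  refine ⟨k, hk, ?_⟩
  rw [← map_pow] at h
  set y := x ^ k
  have h' (i j : Fin 2) : (q : 𝓞 F) ^ 2 ∣ y.1 i j - (1 : Matrix (Fin 2) (Fin 2) (𝓞 F)) i j := by
    rw [← Ideal.mem_span_singleton, ← Ideal.Quotient.eq]
    have h1 : Ideal.Quotient.mk I (y.1 i j) =
        (1 : Matrix (Fin 2) (Fin 2) (𝓞 F ⧸ I)) i j := congrFun (congrFun (congrArg Subtype.val h) i) j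
    rw [h1, Matrix.one_apply, Matrix.one_apply]
    split_ifs <;> simp
  have hdvd : (q : 𝓞 F) ∣ (q : 𝓞 F) ^ 2 := dvd_pow_self _ two_ne_zero
  exact mem_Gs_of (hdvd.trans (by simpa using h' 0 1)) (hdvd.trans (by simpa using h' 1 0))
    (by simpa using h' 0 0)

theorem isMulTorsion_abelianization [hΓ : Γ.FiniteIndex] (u : (𝓞 F)ˣ)
    (hu : ∀ k : ℕ, 0 < k → u ^ k ≠ 1) : IsMulTorsion (Abelianization Γ) := by
  intro a
  obtain ⟨x, rfl⟩ := QuotientGroup.mk'_surjective _ a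
  set m := Γ.normalCore.index with hm
  have hm0 : 0 < m := Nat.pos_of_ne_zero Subgroup.FiniteIndex.index_ne_zero
  set q := 4 * ((Module.finrank ℚ F).factorial + 1).factorial * m with hq
  have hlvl : Lvl F q := ⟨by positivity, ⟨4 * m, by rw [hq]; ring⟩, ⟨_, by rw [hq, mul_assoc]⟩⟩
  obtain ⟨j, hj, hxj⟩ := exists_pow_mem_Gs hlvl.pos x.1
  obtain ⟨k, hk, hxk⟩ := exists_pow_mem hlvl u hu (torsionPart Γ)
    (conj_uni_mem Γ u hu ⟨_, mul_comm _ _⟩) ⟨_, hxj⟩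
  have hmem : (x.1 ^ j) ^ k ∈ Γ := Γ.pow_mem (Γ.pow_mem x.2 j) k
  have h := (mem_torsionPart Γ hmem).mp hxk
  have e : (⟨(x.1 ^ j) ^ k, hmem⟩ : Γ) = (x ^ j) ^ k := rfl
  rw [e, map_pow, map_pow, ← pow_mul] at h
  exact h.of_pow (by positivity)

end Torsion

end Hilb

/-- **Theorem 2.2.2 (group-cohomological form).** If `F` is a totally real number field
of degree at least `2` and `Γ` is a finite-index subgroup of `SL₂(𝓞_F)`, then the
abelianization of `Γ` is finite; in particular every group homomorphism from `Γ` to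
`(ℚ, +)` is trivial, i.e. `H¹(Γ, ℚ)` with trivial action vanishes. -/
theorem stmt_0 (F : Type*) [Field F] [NumberField F]
    (h_totally_real : ∀ φ : F →+* ℂ, ∀ x : F, ∃ r : ℝ, φ x = (r : ℂ))
    (h_deg : 2 ≤ Module.finrank ℚ F)
    (Γ : Subgroup (Matrix.SpecialLinearGroup (Fin 2) (𝓞 F)))
    (hΓ : Γ.FiniteIndex) :
    Finite (Abelianization Γ) ∧ ∀ f : Γ →* Multiplicative ℚ, f = 1 := by
  obtain ⟨u, hu⟩ := Hilb.exists_unit h_totally_real h_deg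
  have htors := Hilb.isMulTorsion_abelianization Γ u hu
  have : Group.FG (SpecialLinearGroup (Fin 2) (𝓞 F)) := Hilb.sl2_fg F
  have : Group.FG Γ := Subgroup.fg_of_index_ne_zero Γ
  have : Group.FG (Abelianization Γ) :=
    Group.fg_of_surjective (f := Abelianization.of) (QuotientGroup.mk'_surjective _)
  refine ⟨CommGroup.finite_of_fg_isMulTorsion _ htors, fun f => MonoidHom.ext fun x => ?_⟩
  obtain ⟨k, hk, h⟩ := isOfFinOrder_iff_pow_eq_one.mp (htors (Abelianization.of x))
  have h1 := congrArg (Abelianization.lift f) h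
  rw [map_pow, Abelianization.lift_apply_of, map_one] at h1
  exact (pow_eq_one_iff_left hk.ne').mp h1
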